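/- Let (X_n) be a sequence of compact length spaces, each homeomorphic to the 2-sphere, converging in the Gromov-Hausdorff sense to a compact metric space X. Then X is a cactoid. -/

import Mathlib

open Metric Set Filter GromovHausdorff

/-- A Jordan curve: a subset homeomorphic to the circle. -/
def IsJordanCurve {X : Type} [TopologicalSpace X] (J : Set X) : Prop :=
  Nonempty (AddCircle (1 : ℝ) ≃ₜ J)

/-- A set is cyclicly connected if every pair of its points lies on a Jordan curve in it. -/
def CyclicallyConnected {X : Type} [TopologicalSpace X] (C : Set X) : Prop :=
  ∀ x ∈ C, ∀ y ∈ C, ∃ J : Set X, J ⊆ C ∧ IsJordanCurve J ∧ x ∈ J ∧ y ∈ J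

/-- A maximal cyclic subset: non-degenerate, cyclicly connected, and not a proper subset
of any cyclicly connected subset. -/
def MaximalCyclic {X : Type} [TopologicalSpace X] (T : Set X) : Prop :=
  ¬ T.Subsingleton ∧ CyclicallyConnected T ∧
    ∀ C : Set X, CyclicallyConnected C → T ⊆ C → C = T
/-- Length of a path, as the total variation of the parametrization. -/
noncomputable def pathLength {X : Type} [MetricSpace X] {x y : X} (γ : Path x y) : ENNReal :=
  eVariationOn γ Set.univ

/-- A length space: the distance between two points is the infimum of lengths of
paths joining them. -/
def IsLengthSpace (X : Type) [MetricSpace X] : Prop :=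
  ∀ x y : X, edist x y = ⨅ γ : Path x y, pathLength γ

/-- Homeomorphic to the 2-sphere. -/
def IsTopological2Sphere (T : Type) [TopologicalSpace T] : Prop :=
  Nonempty (T ≃ₜ Metric.sphere (0 : EuclideanSpace ℝ (Fin 3)) 1)

/-!
A compact length space homeomorphic to the sphere is geodesic and has the Janiszewski property: if
neither of two closed sets with connected intersection separates two points, then their union does
not separate them either. Both properties pass to Gromov–Hausdorff limits, since an approximate
isometry carries connected and separating sets to sets that become so after a small thickening.

In a limit `X`, consider the points which no single point separates from `a` or from `b`, where `a`
and `b` are distinct points of a cyclicly connected set. They form a closed set containing that set;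
any arc joining two of them stays in it, so it is again geodesic and Janiszewski, and it has no cut
points. A compact space with these three properties is a sphere: the Jordan curve theorem and the
accessibility of boundary points follow from the Janiszewski property, so Jordan cell decompositions
of two such spaces can be subdivided in parallel into ever smaller cells, and the points lying in
corresponding nested closed cells are paired by a homeomorphism.
-/

namespace Cactoid

/-! ### Separation and continuous logarithms -/

section Connectedness

variable {E F : Type*} [TopologicalSpace E] [TopologicalSpace F] {S T D K : Set E} {x y z : E}

/-- Two points are linked in `S` if some preconnected subset of `S` contains both. A set `K`
separates `x` from `y` when they are not linked in `Kᶜ`. -/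
def LinkedIn (S : Set E) (x y : E) : Prop :=
  ∃ C ⊆ S, IsPreconnected C ∧ x ∈ C ∧ y ∈ C

namespace LinkedIn

lemma refl (hx : x ∈ S) : LinkedIn S x x :=
  ⟨{x}, singleton_subset_iff.mpr hx, isPreconnected_singleton, rfl, rfl⟩

lemma symm : LinkedIn S x y → LinkedIn S y x :=
  fun ⟨C, hCS, hC, hx, hy⟩ => ⟨C, hCS, hC, hy, hx⟩

lemma trans : LinkedIn S x y → LinkedIn S y z → LinkedIn S x z :=
  fun ⟨C, hCS, hC, hxC, hyC⟩ ⟨D, hDS, hD, hyD, hzD⟩ =>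
    ⟨C ∪ D, union_subset hCS hDS, hC.union y hyC hyD hD, Or.inl hxC, Or.inr hzD⟩

lemma mono (hST : S ⊆ T) : LinkedIn S x y → LinkedIn T x y :=
  fun ⟨C, hCS, hC⟩ => ⟨C, hCS.trans hST, hC⟩

lemma left_mem : LinkedIn S x y → x ∈ S :=
  fun ⟨_, hCS, _, hx, _⟩ => hCS hx

lemma right_mem (h : LinkedIn S x y) : y ∈ S := h.symm.left_mem

lemma of_isPreconnected (h : IsPreconnected S) (hx : x ∈ S) (hy : y ∈ S) : LinkedIn S x y :=
  ⟨S, subset_rfl, h, hx, hy⟩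

lemma image {f : E → F} (hf : ContinuousOn f S) :
    LinkedIn S x y → LinkedIn (f '' S) (f x) (f y) :=
  fun ⟨C, hCS, hC, hx, hy⟩ => ⟨f '' C, image_mono hCS, hC.image f (hf.mono hCS),
    mem_image_of_mem f hx, mem_image_of_mem f hy⟩

end LinkedIn

lemma linkedIn_iff_mem_connectedComponentIn :
    LinkedIn S x y ↔ y ∈ connectedComponentIn S x := by
  constructor
  · rintro ⟨C, hCS, hC, hx, hy⟩
    exact hC.subset_connectedComponentIn hx hCS hy
  · intro hy
    have hx : x ∈ S := connectedComponentIn_nonempty_iff.mp ⟨y, hy⟩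
    exact ⟨_, connectedComponentIn_subset S x, isPreconnected_connectedComponentIn,
      mem_connectedComponentIn hx, hy⟩

lemma isPreconnected_of_linkedIn (h : ∀ x ∈ S, ∀ y ∈ S, LinkedIn S x y) : IsPreconnected S :=
  isPreconnected_of_forall_pair fun x hx y hy =>
    let ⟨C, hCS, hC, hxC, hyC⟩ := h x hx y hy
    ⟨C, hCS, hxC, hyC, hC⟩

lemma subset_of_disjoint_frontier (hS : IsPreconnected S) (hd : Disjoint S (frontier D))
    (hSD : (S ∩ D).Nonempty) : S ⊆ D := by
  have hcover : S ⊆ interior D ∪ (closure D)ᶜ := by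
    intro z hz
    by_cases hzD : z ∈ closure D
    · exact Or.inl (by_contra fun hzi => disjoint_left.mp hd hz ⟨hzD, hzi⟩)
    · exact Or.inr hzD
  obtain ⟨x, hxS, hxD⟩ := hSD
  refine (hS.subset_left_of_subset_union isOpen_interior isClosed_closure.isOpen_compl
    (disjoint_compl_right.mono_left (interior_subset.trans subset_closure)) hcover
    ⟨x, hxS, (hcover hxS).resolve_right fun h => h (subset_closure hxD)⟩).trans interior_subset

lemma LinkedIn.mem_of_disjoint_frontier (h : LinkedIn S x y) (hd : Disjoint S (frontier D))
    (hx : x ∈ D) : y ∈ D := by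
  obtain ⟨C, hCS, hC, hxC, hyC⟩ := h
  exact subset_of_disjoint_frontier hC (hd.mono_left hCS) ⟨x, hxC, hx⟩ hyC

lemma isClosed_connectedComponentIn (hS : IsClosed S) (x : E) :
    IsClosed (connectedComponentIn S x) := by
  by_cases hx : x ∈ S
  · exact isClosed_of_closure_subset
      (isPreconnected_connectedComponentIn.closure.subset_connectedComponentIn
        (subset_closure (mem_connectedComponentIn hx))
        (closure_minimal (connectedComponentIn_subset S x) hS))
  · rw [connectedComponentIn_eq_empty hx]
    exact isClosed_empty

lemma frontier_connectedComponentIn_compl_subset [LocallyConnectedSpace E] (hK : IsClosed K)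
    (x : E) : frontier (connectedComponentIn Kᶜ x) ⊆ K := by
  intro z hz
  by_contra hzK
  have hopen : ∀ w, IsOpen (connectedComponentIn Kᶜ w) :=
    fun _ => hK.isOpen_compl.connectedComponentIn
  obtain ⟨w, hwz, hwx⟩ := mem_closure_iff.mp hz.1 _ (hopen z) (mem_connectedComponentIn hzK)
  refine hz.2 ?_
  rw [(hopen x).interior_eq, connectedComponentIn_eq hwx, ← connectedComponentIn_eq hwz]
  exact mem_connectedComponentIn hzK

end Connectedness

section ContinuousLogarithm

variable {α : Type*} [TopologicalSpace α] {f g : α → ℂ} {s t : Set α}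

/-- `f` has a continuous logarithm on `s`. -/
def HasLogOn (f : α → ℂ) (s : Set α) : Prop :=
  ∃ L : α → ℂ, ContinuousOn L s ∧ EqOn (Complex.exp ∘ L) f s

lemma sub_eq_sub_of_exp_eq (hs : IsPreconnected s) (hf : ContinuousOn f s)
    (hg : ContinuousOn g s) (h : ∀ z ∈ s, Complex.exp (f z) = Complex.exp (g z)) {x y : α}
    (hx : x ∈ s) (hy : y ∈ s) : f x - g x = f y - g y := by
  have hone : ∀ z ∈ s, Complex.exp (f z - g z) = 1 := fun z hz => by
    rw [Complex.exp_sub, h z hz, div_self (Complex.exp_ne_zero _)]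
  exact Complex.isCoveringMap_exp.constOn_of_comp hs (hf.sub hg)
    (fun a ha b hb => Subtype.ext ((hone a ha).trans (hone b hb).symm)) hx hy

namespace HasLogOn

lemma congr (hf : HasLogOn f s) (h : EqOn f g s) : HasLogOn g s :=
  let ⟨L, hL, hLf⟩ := hf
  ⟨L, hL, hLf.trans h⟩

lemma continuousOn (hf : HasLogOn f s) : ContinuousOn f s :=
  let ⟨_, hL, hLf⟩ := hf
  (Complex.continuous_exp.comp_continuousOn hL).congr hLf.symm

lemma const {c : ℂ} (hc : c ≠ 0) (s : Set α) : HasLogOn (fun _ => c) s :=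
  ⟨fun _ => Complex.log c, continuousOn_const, fun _ _ => Complex.exp_log hc⟩

lemma mul (hf : HasLogOn f s) (hg : HasLogOn g s) : HasLogOn (fun z => f z * g z) s := by
  obtain ⟨L, hL, hLf⟩ := hf
  obtain ⟨M, hM, hMg⟩ := hg
  refine ⟨fun z => L z + M z, hL.add hM, fun z hz => ?_⟩
  rw [Function.comp_apply, Complex.exp_add]
  exact congrArg₂ (· * ·) (hLf hz) (hMg hz)

lemma of_mapsTo_slitPlane (hf : ContinuousOn f s) (h : MapsTo f s Complex.slitPlane) :
    HasLogOn f s :=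
  ⟨fun z => Complex.log (f z), hf.clog h,
    fun _ hz => Complex.exp_log (Complex.slitPlane_ne_zero (h hz))⟩

lemma of_norm_sub_lt (hf : HasLogOn f s) (hg : ContinuousOn g s)
    (h : ∀ z ∈ s, ‖g z - f z‖ < ‖f z‖) : HasLogOn g s := by
  have hne : ∀ z ∈ s, f z ≠ 0 := fun z hz => norm_pos_iff.mp ((norm_nonneg _).trans_lt (h z hz))
  have hquot : HasLogOn (fun z => g z / f z) s := by
    refine of_mapsTo_slitPlane (hg.div hf.continuousOn hne) fun z hz => ?_
    have heq : g z / f z = 1 + (g z - f z) / f z := by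
      field_simp [hne z hz]
      ring
    rw [heq]
    refine Complex.mem_slitPlane_of_norm_lt_one ?_
    rw [norm_div, div_lt_one (norm_pos_iff.mpr (hne z hz))]
    exact h z hz
  exact (hf.mul hquot).congr fun z hz => mul_div_cancel₀ _ (hne z hz)

lemma union (hs : IsClosed s) (ht : IsClosed t) (hst : IsPreconnected (s ∩ t))
    (hfs : HasLogOn f s) (hft : HasLogOn f t) : HasLogOn f (s ∪ t) := by
  classical
  obtain ⟨L, hL, hLf⟩ := hfs
  obtain ⟨M, hM, hMf⟩ := hft
  obtain ⟨c, hc, hLM⟩ : ∃ c : ℂ, Complex.exp c = 1 ∧ ∀ z ∈ s ∩ t, L z = M z + c := by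
    rcases (s ∩ t).eq_empty_or_nonempty with hempty | ⟨x, hx⟩
    · exact ⟨0, Complex.exp_zero, by simp [hempty]⟩
    have hexp : ∀ z ∈ s ∩ t, Complex.exp (L z) = Complex.exp (M z) :=
      fun z hz => (hLf hz.1).trans (hMf hz.2).symm
    refine ⟨L x - M x, ?_, fun z hz => ?_⟩
    · rw [Complex.exp_sub, hexp x hx, div_self (Complex.exp_ne_zero _)]
    · rw [sub_eq_sub_of_exp_eq hst (hL.mono inter_subset_left) (hM.mono inter_subset_right) hexp
        hx hz]
      ring
  have hs' : EqOn (s.piecewise L fun z => M z + c) L s := piecewise_eqOn s _ _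
  have ht' : EqOn (s.piecewise L fun z => M z + c) (fun z => M z + c) t := fun z hz => by
    by_cases hzs : z ∈ s
    · rw [piecewise_eq_of_mem _ _ _ hzs, hLM z ⟨hzs, hz⟩]
    · rw [piecewise_eq_of_notMem _ _ _ hzs]
  refine ⟨s.piecewise L fun z => M z + c, (hL.congr hs').union_of_isClosed
    ((hM.add continuousOn_const).congr ht') hs ht, ?_⟩
  rintro z (hz | hz)
  · exact (congrArg Complex.exp (hs' hz)).trans (hLf hz)
  · rw [Function.comp_apply, ht' hz, Complex.exp_add, hc, mul_one]
    exact hMf hz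

end HasLogOn

lemma exists_eq_zero_of_eq_id_of_large {h : ℂ → ℂ} (hc : Continuous h) {R : ℝ}
    (hR : ∀ z, R < ‖z‖ → h z = z) : ∃ z, h z = 0 := by
  by_contra! h0
  have : ContractibleSpace (univ : Set ℂ) := (Homeomorph.Set.univ ℂ).contractibleSpace
  have hsc : IsSimplyConnected (univ : Set ℂ) := by
    unfold IsSimplyConnected
    infer_instance
  obtain ⟨L, hL, hLh⟩ := Complex.exists_continuousOn_eqOn_exp_comp hsc isOpen_univ
    hc.continuousOn (by rintro ⟨z, -, hz⟩; exact h0 z hz)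
  set r := |R| + 1
  have hr : 0 < r := by positivity
  -- `circ` parametrizes logarithmically the circle of radius `r`, on which `h` is the identity.
  let circ : ℝ → ℂ := fun θ => Real.log r + θ * Complex.I
  have hcirc : ∀ θ, Complex.exp (L (Complex.exp (circ θ))) = Complex.exp (circ θ) := by
    intro θ
    refine (hLh (mem_univ (Complex.exp (circ θ)))).trans (hR _ ?_)
    rw [Complex.norm_exp]
    simpa [circ, Real.exp_log hr] using (le_abs_self R).trans_lt (lt_add_one |R|)
  have hcont : Continuous fun θ => L (Complex.exp (circ θ)) := by
    have : Continuous L := continuousOn_univ.mp hL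
    fun_prop
  have hconst := sub_eq_sub_of_exp_eq isPreconnected_univ hcont.continuousOn (g := circ)
    (by fun_prop) (fun θ _ => hcirc θ) (mem_univ 0) (mem_univ (2 * Real.pi))
  have hperiod : Complex.exp (circ 0) = Complex.exp (circ (2 * Real.pi)) := by
    simp [circ, Complex.exp_add]
  rw [hperiod] at hconst
  have : circ 0 = circ (2 * Real.pi) := sub_right_injective hconst
  simp [circ, Real.pi_ne_zero] at this

end ContinuousLogarithm

section Plane

variable {k l : Set ℂ} {w w' : ℂ}

lemma HasLogOn.sub_const_of_lt_norm {R : ℝ} (hk : k ⊆ closedBall 0 R) (hw : R < ‖w‖)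
    (hw0 : w ≠ 0) : HasLogOn (fun z => z - w) k := by
  refine (HasLogOn.const (neg_ne_zero.mpr hw0) k).of_norm_sub_lt (by fun_prop) fun z hz => ?_
  simpa using (mem_closedBall_zero_iff.mp (hk hz)).trans_lt hw

lemma HasLogOn.sub_const_of_linkedIn (hk : IsClosed k) (hw : LinkedIn kᶜ w w')
    (h : HasLogOn (fun z => z - w) k) : HasLogOn (fun z => z - w') k := by
  obtain ⟨C, hCk, hC, hwC, hw'C⟩ := hw
  let P : ℂ → ℂ → Prop := fun x y => HasLogOn (fun z => z - x) k → HasLogOn (fun z => z - y) k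
  suffices P w w' from this h
  refine hC.induction₂' P (fun x hx => mem_nhdsWithin_of_mem_nhds ?_)
    (fun x y z _ _ _ hxy hyz hx => hyz (hxy hx)) hwC hw'C
  obtain ⟨r, hr, hrk⟩ := Metric.isOpen_iff.mp hk.isOpen_compl x (hCk hx)
  have hfar : ∀ z ∈ k, r ≤ dist z x := fun z hz => not_lt.mp fun hlt => hrk hlt hz
  filter_upwards [ball_mem_nhds x (half_pos hr)] with y hy
  rw [mem_ball] at hy
  constructor <;> refine fun hlog => hlog.of_norm_sub_lt (by fun_prop) fun z hz => ?_ <;>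
    rw [sub_sub_sub_cancel_left, ← dist_eq_norm, ← dist_eq_norm]
  · linarith [hfar z hz, dist_comm x y]
  · linarith [hfar z hz, dist_triangle z y x]

lemma not_hasLogOn_sub_of_isBounded (hk : IsClosed k) (hw : w ∉ k)
    (hb : Bornology.IsBounded (connectedComponentIn kᶜ w)) :
    ¬ HasLogOn (fun z => z - w) k := by
  classical
  rintro ⟨L, hL, hLk⟩
  set U := connectedComponentIn kᶜ w
  have hfr : frontier U ⊆ k := frontier_connectedComponentIn_compl_subset hk w
  obtain ⟨G, hG⟩ := ContinuousMap.exists_restrict_eq hk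
    ⟨k.domRestrict L, continuousOn_iff_continuous_domRestrict.mp hL⟩
  have hGk : ∀ z ∈ k, G z = L z := fun z hz => DFunLike.congr_fun hG ⟨z, hz⟩
  -- A logarithm would let us replace `z - w` on `U` by a nowhere vanishing function.
  let h : ℂ → ℂ := fun z => if z ∈ U then Complex.exp (G z) else z - w
  have hcont : Continuous h := by
    refine Continuous.if (fun z hz => ?_) (by fun_prop) (by fun_prop)
    rw [hGk z (hfr hz)]
    exact hLk (hfr hz)
  obtain ⟨R, hR⟩ := hb.subset_closedBall w
  obtain ⟨z, hz⟩ := exists_eq_zero_of_eq_id_of_large (h := fun z => h (z + w)) (by fun_prop)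
    (R := R) fun z hz => by
      have hzU : z + w ∉ U := fun hzU => hz.not_ge (by simpa using hR hzU)
      simp [h, hzU]
  by_cases hzU : z + w ∈ U
  · exact Complex.exp_ne_zero _ (by simpa only [h, if_pos hzU] using hz)
  · have hz0 : z = 0 := by simpa only [h, if_neg hzU, add_sub_cancel_right] using hz
    exact hzU (by simpa [hz0] using mem_connectedComponentIn (F := kᶜ) hw)

lemma hasLogOn_sub_iff_not_isBounded (hk : IsCompact k) (hw : w ∉ k) :
    HasLogOn (fun z => z - w) k ↔ ¬ Bornology.IsBounded (connectedComponentIn kᶜ w) := by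
  refine ⟨fun h hb => not_hasLogOn_sub_of_isBounded hk.isClosed hw hb h, fun h => ?_⟩
  obtain ⟨R, hR, hkR⟩ := hk.isBounded.subset_closedBall_lt 0 0
  obtain ⟨w', hw', hlarge⟩ : ∃ w' ∈ connectedComponentIn kᶜ w, R < ‖w'‖ := by
    by_contra! hsmall
    exact h (isBounded_closedBall.subset fun z hz => mem_closedBall_zero_iff.mpr (hsmall z hz))
  exact (HasLogOn.sub_const_of_lt_norm hkR hlarge (norm_pos_iff.mp (hR.trans hlarge)))
    |>.sub_const_of_linkedIn hk.isClosed (linkedIn_iff_mem_connectedComponentIn.mpr hw').symm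

lemma not_isBounded_connectedComponentIn_compl_union (hk : IsCompact k) (hl : IsCompact l)
    (hkl : IsPreconnected (k ∩ l)) (hwk : w ∉ k) (hwl : w ∉ l)
    (hbk : ¬ Bornology.IsBounded (connectedComponentIn kᶜ w))
    (hbl : ¬ Bornology.IsBounded (connectedComponentIn lᶜ w)) :
    ¬ Bornology.IsBounded (connectedComponentIn (k ∪ l)ᶜ w) := by
  rw [← hasLogOn_sub_iff_not_isBounded hk hwk] at hbk
  rw [← hasLogOn_sub_iff_not_isBounded hl hwl] at hbl
  rw [← hasLogOn_sub_iff_not_isBounded (hk.union hl) (by simp [hwk, hwl])]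
  exact hbk.union hk.isClosed hl.isClosed hkl hbl

end Plane

section Janiszewski

/-- The Janiszewski property: if neither of two closed sets with connected (or empty)
intersection separates two points, then their union does not separate them either. -/
def IsJaniszewskiSpace (E : Type*) [TopologicalSpace E] : Prop :=
  ∀ ⦃K L : Set E⦄, IsClosed K → IsClosed L → IsPreconnected (K ∩ L) →
    ∀ ⦃u v⦄, LinkedIn Kᶜ u v → LinkedIn Lᶜ u v → LinkedIn (K ∪ L)ᶜ u v

lemma IsJaniszewskiSpace.of_homeomorph {E F : Type*} [TopologicalSpace E] [TopologicalSpace F]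
    (e : E ≃ₜ F) (h : IsJaniszewskiSpace F) : IsJaniszewskiSpace E := by
  intro K L hK hL hKL u v hKuv hLuv
  have hlinked : ∀ S : Set E, LinkedIn S u v ↔ LinkedIn (e '' S) (e u) (e v) := fun S =>
    ⟨fun h => h.image e.continuous.continuousOn, fun h => by
      simpa [image_image] using h.image e.symm.continuous.continuousOn⟩
  rw [hlinked, e.image_compl] at hKuv hLuv
  rw [hlinked, e.image_compl, image_union]
  refine h (e.isClosed_image.mpr hK) (e.isClosed_image.mpr hL) ?_ hKuv hLuv
  rw [← image_inter e.injective]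
  exact hKL.image e e.continuous.continuousOn

section Compactification

variable {P S : Type*} [PseudoMetricSpace P] [TopologicalSpace S] {φ : P → S} {v : S}

lemma not_isBounded_of_linkedIn_infinity [ProperSpace P] [LocallyConnectedSpace P] [T2Space S]
    (hφ : Topology.IsOpenEmbedding φ) (hr : v ∉ range φ) {K : Set S} (hK : IsClosed K) {w : P}
    (h : LinkedIn Kᶜ (φ w) v) :
    ¬ Bornology.IsBounded (connectedComponentIn (φ ⁻¹' K)ᶜ w) := by
  intro hb
  set U := connectedComponentIn (φ ⁻¹' K)ᶜ w
  have hfr : frontier U ⊆ φ ⁻¹' K :=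
    frontier_connectedComponentIn_compl_subset (hK.preimage hφ.continuous) w
  have hclosure : IsClosed (φ '' closure U) :=
    (hb.isCompact_closure.image hφ.continuous).isClosed
  have hUopen : IsOpen (φ '' U) :=
    hφ.isOpenMap U (hK.preimage hφ.continuous).isOpen_compl.connectedComponentIn
  have hdisj : Disjoint Kᶜ (frontier (φ '' U)) := by
    refine disjoint_left.mpr fun y hyK hy => ?_
    obtain ⟨z, hz, rfl⟩ := closure_minimal (image_mono subset_closure) hclosure hy.1
    refine hyK (hfr ⟨hz, fun hzU => hy.2 ?_⟩)
    rw [hUopen.interior_eq]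
    exact mem_image_of_mem φ (interior_subset hzU)
  obtain ⟨z, -, hz⟩ := h.mem_of_disjoint_frontier hdisj
    (mem_image_of_mem φ (mem_connectedComponentIn h.left_mem))
  exact hr ⟨z, hz⟩

lemma linkedIn_infinity_of_not_isBounded [CompactSpace S] (hφ : Topology.IsEmbedding φ)
    (hr : range φ = {v}ᶜ) {K : Set S} (hv : v ∉ K) {w : P} (hw : φ w ∉ K)
    (hb : ¬ Bornology.IsBounded (connectedComponentIn (φ ⁻¹' K)ᶜ w)) :
    LinkedIn Kᶜ (φ w) v := by
  set U := connectedComponentIn (φ ⁻¹' K)ᶜ w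
  have hvU : v ∈ closure (φ '' U) := by
    by_contra hvU
    have hsub : closure (φ '' U) ⊆ range φ := by
      rw [hr]
      exact fun x hx hxv => hvU (hxv ▸ hx)
    have hcompact := (hφ.isInducing.isCompact_preimage_iff hsub).mpr isClosed_closure.isCompact
    exact hb (hcompact.isBounded.subset fun z hz => subset_closure (mem_image_of_mem φ hz))
  refine ⟨insert v (φ '' U), insert_subset hv ?_, ?_,
    Or.inr (mem_image_of_mem φ (mem_connectedComponentIn hw)), Or.inl rfl⟩
  · rintro _ ⟨z, hz, rfl⟩
    exact connectedComponentIn_subset _ w hz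
  · exact (isPreconnected_connectedComponentIn.image φ hφ.continuous.continuousOn).subset_closure
      (subset_insert _ _) (insert_subset hvU subset_closure)

lemma linkedIn_infinity_iff_not_isBounded [ProperSpace P] [LocallyConnectedSpace P]
    [CompactSpace S] [T2Space S] (hφ : Topology.IsOpenEmbedding φ) (hr : range φ = {v}ᶜ)
    {K : Set S} (hK : IsClosed K) (hv : v ∉ K) {w : P} (hw : φ w ∉ K) :
    LinkedIn Kᶜ (φ w) v ↔ ¬ Bornology.IsBounded (connectedComponentIn (φ ⁻¹' K)ᶜ w) :=
  ⟨not_isBounded_of_linkedIn_infinity hφ (by simp [hr]) hK,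
    linkedIn_infinity_of_not_isBounded hφ.isEmbedding hr hv hw⟩

end Compactification

lemma isJaniszewskiSpace_of_isOpenEmbedding_plane {S : Type*} [TopologicalSpace S]
    [CompactSpace S] [T2Space S]
    (h : ∀ v : S, ∃ φ : ℂ → S, Topology.IsOpenEmbedding φ ∧ range φ = {v}ᶜ) :
    IsJaniszewskiSpace S := by
  intro K L hK hL hKL u v hKuv hLuv
  rcases eq_or_ne u v with rfl | huv
  · exact LinkedIn.refl fun hu => hu.elim hKuv.left_mem hLuv.left_mem
  obtain ⟨φ, hφ, hr⟩ := h v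
  obtain ⟨w, rfl⟩ : u ∈ range φ := by rwa [hr]
  have hvK : v ∉ K := hKuv.right_mem
  have hvL : v ∉ L := hLuv.right_mem
  have hrange : ∀ {M : Set S}, v ∉ M → M ⊆ range φ := fun hM x hx => by
    rw [hr]
    exact fun hxv => hM (hxv ▸ hx)
  have hcompact : ∀ {M : Set S}, IsClosed M → v ∉ M → IsCompact (φ ⁻¹' M) := fun hM hvM =>
    (hφ.isInducing.isCompact_preimage_iff (hrange hvM)).mpr hM.isCompact
  have hinter : IsPreconnected (φ ⁻¹' K ∩ φ ⁻¹' L) := by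
    rwa [← preimage_inter, ← hφ.isInducing.isPreconnected_image,
      image_preimage_eq_of_subset (hrange fun hv => hvK hv.1)]
  rw [linkedIn_infinity_iff_not_isBounded hφ hr (hK.union hL) (by simp [hvK, hvL])
    fun hw => hw.elim hKuv.left_mem hLuv.left_mem]
  exact not_isBounded_connectedComponentIn_compl_union (hcompact hK hvK) (hcompact hL hvL) hinter
    hKuv.left_mem hLuv.left_mem
    ((linkedIn_infinity_iff_not_isBounded hφ hr hK hvK hKuv.left_mem).mp hKuv)
    ((linkedIn_infinity_iff_not_isBounded hφ hr hL hvL hLuv.left_mem).mp hLuv)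

end Janiszewski

/-! ### Geodesic spaces -/

section Geodesic

/-- `f` restricts on `[0, 1]` to a constant speed shortest path from `x` to `y`. -/
def IsGeodesic {E : Type*} [PseudoMetricSpace E] (f : ℝ → E) (x y : E) : Prop :=
  f 0 = x ∧ f 1 = y ∧
    ∀ s ∈ Icc (0 : ℝ) 1, ∀ t ∈ Icc (0 : ℝ) 1, dist (f s) (f t) = |s - t| * dist x y

/-- A space in which any two points are joined by a shortest path. -/
def IsGeodesicSpace (E : Type*) [PseudoMetricSpace E] : Prop :=
  ∀ x y : E, ∃ f : ℝ → E, IsGeodesic f x y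

section

variable {E : Type*} [PseudoMetricSpace E] {x y : E} {f : ℝ → E}

lemma IsGeodesic.continuousOn (h : IsGeodesic f x y) : ContinuousOn f (Icc 0 1) :=
  LipschitzOnWith.continuousOn (K := ⟨dist x y, dist_nonneg⟩) <|
    LipschitzOnWith.of_dist_le_mul fun s hs t ht => by
      rw [h.2.2 s hs t ht, Real.dist_eq, mul_comm]
      rfl

lemma IsGeodesic.dist_left_le (h : IsGeodesic f x y) {t : ℝ} (ht : t ∈ Icc (0 : ℝ) 1) :
    dist x (f t) ≤ dist x y := by
  rw [← h.1, h.2.2 0 (by simp) t ht, zero_sub, abs_neg, abs_of_nonneg ht.1, h.1]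
  exact mul_le_of_le_one_left dist_nonneg ht.2

lemma isGeodesic_of_dist_le (h0 : f 0 = x) (h1 : f 1 = y)
    (hle : ∀ s ∈ Icc (0 : ℝ) 1, ∀ t ∈ Icc (0 : ℝ) 1, dist (f s) (f t) ≤ |s - t| * dist x y) :
    IsGeodesic f x y := by
  have hge : ∀ s ∈ Icc (0 : ℝ) 1, ∀ t ∈ Icc (0 : ℝ) 1, s ≤ t →
      |s - t| * dist x y ≤ dist (f s) (f t) := by
    intro s hs t ht hst
    have h0s := hle 0 (by simp) s hs
    have ht1 := hle t ht 1 (by simp)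
    have htri := dist_triangle4 (f 0) (f s) (f t) (f 1)
    rw [abs_of_nonpos (by linarith [hs.1])] at h0s
    rw [abs_of_nonpos (by linarith [ht.2])] at ht1
    rw [abs_of_nonpos (by linarith)]
    rw [h0, h1] at htri
    rw [h0] at h0s
    rw [h1] at ht1
    linarith
  refine ⟨h0, h1, fun s hs t ht => (hle s hs t ht).antisymm ?_⟩
  rcases le_total s t with hst | hts
  · exact hge s hs t ht hst
  · rw [dist_comm (f s), abs_sub_comm]
    exact hge t ht s hs hts

end

lemma exists_isGeodesic_of_forall_approx {E : Type*} [MetricSpace E] [CompactSpace E] {x y : E}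
    (h : ∀ ε > 0, ∃ f : ℝ → E, dist (f 0) x ≤ ε ∧ dist (f 1) y ≤ ε ∧
      ∀ s ∈ Icc (0 : ℝ) 1, ∀ t ∈ Icc (0 : ℝ) 1, dist (f s) (f t) ≤ |s - t| * dist x y + ε) :
    ∃ f : ℝ → E, IsGeodesic f x y := by
  choose f h0 h1 hf using fun n : ℕ => h (1 / ((n : ℝ) + 1)) Nat.one_div_pos_of_nat
  have hlim : Tendsto (fun n : ℕ => 1 / ((n : ℝ) + 1)) (hyperfilter ℕ) (nhds 0) :=
    tendsto_one_div_add_atTop_nhds_zero_nat.mono_left Nat.hyperfilter_le_atTop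
  obtain ⟨g, -, hg⟩ := isCompact_univ.ultrafilter_le_nhds ((hyperfilter ℕ).map f) (by simp)
  have hg : ∀ t, Tendsto (fun n => f n t) (hyperfilter ℕ) (nhds (g t)) := tendsto_pi_nhds.mp hg
  refine ⟨g, isGeodesic_of_dist_le ?_ ?_ fun s hs t ht => ?_⟩
  · exact dist_le_zero.mp (le_of_tendsto_of_tendsto' ((hg 0).dist tendsto_const_nhds) hlim h0)
  · exact dist_le_zero.mp (le_of_tendsto_of_tendsto' ((hg 1).dist tendsto_const_nhds) hlim h1)
  · have := le_of_tendsto_of_tendsto' ((hg s).dist (hg t)) (hlim.const_add (|s - t| * dist x y))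
      fun n => hf n s hs t ht
    rwa [add_zero] at this

namespace IsGeodesicSpace

section

variable {E : Type*} [PseudoMetricSpace E] {x y : E} {r : ℝ}

lemma linkedIn_closedBall (hE : IsGeodesicSpace E) (h : dist x y ≤ r) :
    LinkedIn (closedBall x r) x y := by
  obtain ⟨f, hf⟩ := hE x y
  refine ⟨f '' Icc 0 1, ?_, isPreconnected_Icc.image f hf.continuousOn, ⟨0, by simp, hf.1⟩,
    ⟨1, by simp, hf.2.1⟩⟩
  rintro _ ⟨t, ht, rfl⟩
  rw [mem_closedBall, dist_comm]
  exact (hf.dist_left_le ht).trans h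

lemma isPreconnected_closedBall (hE : IsGeodesicSpace E) (x : E) (r : ℝ) :
    IsPreconnected (closedBall x r) :=
  isPreconnected_of_linkedIn fun _ hy _ hz =>
    (hE.linkedIn_closedBall (mem_closedBall'.mp hy)).symm.trans
      (hE.linkedIn_closedBall (mem_closedBall'.mp hz))

lemma isPreconnected_ball (hE : IsGeodesicSpace E) (x : E) (r : ℝ) :
    IsPreconnected (ball x r) := by
  have hcenter : ∀ y ∈ ball x r, LinkedIn (ball x r) x y := fun y hy =>
    (hE.linkedIn_closedBall le_rfl).mono (closedBall_subset_ball (mem_ball'.mp hy))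
  exact isPreconnected_of_linkedIn fun y hy z hz => (hcenter y hy).symm.trans (hcenter z hz)

lemma preconnectedSpace (hE : IsGeodesicSpace E) : PreconnectedSpace E :=
  ⟨isPreconnected_of_linkedIn fun _ _ _ _ =>
    (hE.linkedIn_closedBall le_rfl).mono (subset_univ _)⟩

lemma locallyConnectedSpace (hE : IsGeodesicSpace E) : LocallyConnectedSpace E :=
  locallyConnectedSpace_of_connected_bases (fun x (r : ℝ) => ball x r) (fun _ r => 0 < r)
    (fun _ => nhds_basis_ball) fun x r _ => hE.isPreconnected_ball x r

end

section Compact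

variable {E : Type*} [PseudoMetricSpace E] [CompactSpace E] {U K : Set E}

lemma exists_isCompact_of_linkedIn (hE : IsGeodesicSpace E) (hU : IsOpen U) {x y : E}
    (h : LinkedIn U x y) : ∃ C ⊆ U, IsCompact C ∧ IsPreconnected C ∧ x ∈ C ∧ y ∈ C := by
  obtain ⟨D, hDU, hD, hx, hy⟩ := h
  refine hD.induction₂ (P := fun x y => ∃ C ⊆ U, IsCompact C ∧ IsPreconnected C ∧ x ∈ C ∧ y ∈ C)
    (fun z hz => ?_) ?_ ?_ hx hy
  · obtain ⟨r, hr, hrU⟩ := nhds_basis_closedBall.mem_iff.mp (hU.mem_nhds (hDU hz))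
    filter_upwards [mem_nhdsWithin_of_mem_nhds (closedBall_mem_nhds z hr)] with w hw
    exact ⟨closedBall z r, hrU, isClosed_closedBall.isCompact, hE.isPreconnected_closedBall z r,
      mem_closedBall_self hr.le, hw⟩
  · rintro a b c - - - ⟨C, hCU, hC, hCp, ha, hb⟩ ⟨C', hCU', hC', hCp', hb', hc⟩
    exact ⟨C ∪ C', union_subset hCU hCU', hC.union hC', hCp.union b hb hb' hCp', Or.inl ha,
      Or.inr hc⟩
  · rintro a b - - ⟨C, hCU, hC, hCp, ha, hb⟩
    exact ⟨C, hCU, hC, hCp, hb, ha⟩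

lemma exists_isCompact_isPreconnected_superset (hE : IsGeodesicSpace E) (hU : IsOpen U)
    (hUc : IsPreconnected U) (hK : IsCompact K) (hKU : K ⊆ U) :
    ∃ C ⊆ U, IsCompact C ∧ IsPreconnected C ∧ K ⊆ C := by
  rcases K.eq_empty_or_nonempty with rfl | ⟨x₀, hx₀⟩
  · exact ⟨∅, empty_subset _, isCompact_empty, isPreconnected_empty, subset_rfl⟩
  suffices ∃ C ⊆ U, IsCompact C ∧ IsPreconnected C ∧ x₀ ∈ C ∧ K ⊆ C by
    obtain ⟨C, hCU, hC, hCp, -, hKC⟩ := this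
    exact ⟨C, hCU, hC, hCp, hKC⟩
  refine hK.induction_on (p := fun s => ∃ C ⊆ U, IsCompact C ∧ IsPreconnected C ∧ x₀ ∈ C ∧ s ⊆ C)
    ?_ ?_ ?_ fun x hx => ?_
  · exact ⟨{x₀}, singleton_subset_iff.mpr (hKU hx₀), isCompact_singleton, isPreconnected_singleton,
      rfl, empty_subset _⟩
  · rintro s t hst ⟨C, hCU, hC, hCp, hxC, htC⟩
    exact ⟨C, hCU, hC, hCp, hxC, hst.trans htC⟩
  · rintro s t ⟨C, hCU, hC, hCp, hxC, hsC⟩ ⟨C', hCU', hC', hCp', hxC', htC'⟩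
    exact ⟨C ∪ C', union_subset hCU hCU', hC.union hC', hCp.union x₀ hxC hxC' hCp', Or.inl hxC,
      union_subset_union hsC htC'⟩
  · obtain ⟨ε, hε, hεU⟩ := nhds_basis_closedBall.mem_iff.mp (hU.mem_nhds (hKU hx))
    obtain ⟨C, hCU, hC, hCp, hx₀C, hxC⟩ :=
      hE.exists_isCompact_of_linkedIn hU (LinkedIn.of_isPreconnected hUc (hKU hx₀) (hKU hx))
    exact ⟨closedBall x ε, mem_nhdsWithin_of_mem_nhds (closedBall_mem_nhds x hε),
      C ∪ closedBall x ε, union_subset hCU hεU, hC.union isClosed_closedBall.isCompact,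
      hCp.union x hxC (mem_closedBall_self hε.le) (hE.isPreconnected_closedBall x ε),
      Or.inl hx₀C, subset_union_right⟩

end Compact

end IsGeodesicSpace

end Geodesic

section AngularMetric

open InnerProductGeometry

variable {V : Type*} [NormedAddCommGroup V] [InnerProductSpace ℝ V]

lemma exists_norm_eq_one_inner_eq_zero (hV : 1 < Module.finrank ℝ V) (x : V) :
    ∃ u : V, ‖u‖ = 1 ∧ inner ℝ x u = 0 := by
  have := Module.finite_of_finrank_pos (zero_lt_one.trans hV)
  have hne : (Submodule.span ℝ {x})ᗮ ≠ ⊥ := by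
    rw [ne_eq, Submodule.orthogonal_eq_bot_iff]
    intro htop
    have hle := finrank_span_le_card (R := ℝ) ({x} : Set V)
    rw [htop, finrank_top, Set.toFinset_singleton, Finset.card_singleton] at hle
    exact hle.not_gt hV
  obtain ⟨v, hv, hv0⟩ := (Submodule.ne_bot_iff _).mp hne
  refine ⟨NormedSpace.normalize v, NormedSpace.norm_normalize_eq_one_iff.mpr hv0, ?_⟩
  rw [NormedSpace.normalize, real_inner_smul_right,
    Submodule.mem_orthogonal_singleton_iff_inner_right.mp hv, mul_zero]

lemma exists_eq_cos_smul_add_sin_smul (hV : 1 < Module.finrank ℝ V) {x y : V} (hx : ‖x‖ = 1)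
    (hy : ‖y‖ = 1) : ∃ u : V, ‖u‖ = 1 ∧ inner ℝ x u = 0 ∧
      y = Real.cos (angle x y) • x + Real.sin (angle x y) • u := by
  have hinner := inner_eq_cos_angle_of_norm_eq_one hx hy
  set w := y - Real.cos (angle x y) • x with hw
  have hxw : inner ℝ x w = 0 := by
    rw [hw, inner_sub_right, real_inner_smul_right, real_inner_self_eq_norm_sq, hx, hinner]
    ring
  have hnorm : ‖w‖ = Real.sin (angle x y) := by
    rw [← sq_eq_sq₀ (norm_nonneg _) (sin_angle_nonneg _ _), Real.sin_sq, hw, norm_sub_sq_real,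
      real_inner_smul_right, real_inner_comm, hinner, norm_smul, hx, hy, mul_one, Real.norm_eq_abs,
      sq_abs]
    ring
  suffices ∃ u : V, ‖u‖ = 1 ∧ inner ℝ x u = 0 ∧ w = ‖w‖ • u by
    obtain ⟨u, hu, hxu, hwu⟩ := this
    exact ⟨u, hu, hxu, by rw [← hnorm, ← hwu, hw, add_sub_cancel]⟩
  by_cases h0 : w = 0
  · obtain ⟨u, hu, hxu⟩ := exists_norm_eq_one_inner_eq_zero hV x
    exact ⟨u, hu, hxu, by rw [h0, norm_zero, zero_smul]⟩
  · refine ⟨NormedSpace.normalize w, NormedSpace.norm_normalize_eq_one_iff.mpr h0, ?_,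
      (NormedSpace.norm_smul_normalize w).symm⟩
    rw [NormedSpace.normalize, real_inner_smul_right, hxw, mul_zero]

lemma inner_cos_smul_add_sin_smul {x u : V} (hx : ‖x‖ = 1) (hu : ‖u‖ = 1)
    (hxu : inner ℝ x u = 0) (α β : ℝ) :
    inner ℝ (Real.cos α • x + Real.sin α • u) (Real.cos β • x + Real.sin β • u) =
      Real.cos (α - β) := by
  simp only [inner_add_left, inner_add_right, real_inner_smul_left, real_inner_smul_right,
    real_inner_comm x u, hxu, real_inner_self_eq_norm_sq, hx, hu, Real.cos_sub]
  ring

/-- The unit sphere of an inner product space, with the angle between two vectors as distance: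
a geodesic metric inducing the usual topology. -/
@[ext]
structure AngularSphere (V : Type*) [NormedAddCommGroup V] where
  val : V
  norm_val : ‖val‖ = 1

namespace AngularSphere

noncomputable instance : MetricSpace (AngularSphere V) where
  dist x y := angle x.val y.val
  dist_self x := angle_self (norm_ne_zero_iff.mp (by simp [x.norm_val]))
  dist_comm x y := angle_comm x.val y.val
  dist_triangle x y z := angle_le_angle_add_angle x.val y.val z.val
  eq_of_dist_eq_zero {x y} h := by
    have hinner := inner_eq_cos_angle_of_norm_eq_one x.norm_val y.norm_val
    rw [h, Real.cos_zero, inner_eq_one_iff_of_norm_eq_one x.norm_val y.norm_val] at hinner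
    exact AngularSphere.ext hinner

lemma dist_eq_angle (x y : AngularSphere V) : dist x y = angle x.val y.val := rfl

lemma nonempty_homeomorph_sphere [FiniteDimensional ℝ V] :
    Nonempty (sphere (0 : V) 1 ≃ₜ AngularSphere V) := by
  let e : sphere (0 : V) 1 ≃ AngularSphere V :=
    ⟨fun x => ⟨x.1, mem_sphere_zero_iff_norm.mp x.2⟩,
      fun x => ⟨x.val, mem_sphere_zero_iff_norm.mpr x.norm_val⟩, fun _ => rfl, fun _ => rfl⟩
  have hcont : Continuous e := by
    refine continuous_iff_continuousAt.mpr fun x => tendsto_iff_dist_tendsto_zero.mpr ?_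
    have hx := ne_zero_of_mem_unit_sphere x
    have hangle : ContinuousAt (fun y : sphere (0 : V) 1 => angle y.1 x.1) x :=
      ContinuousAt.comp (f := fun y : sphere (0 : V) 1 => (y.1, x.1))
        (InnerProductGeometry.continuousAt_angle hx hx) (by fun_prop)
    rw [← angle_self hx]
    exact hangle
  exact ⟨hcont.homeoOfEquivCompactToT2⟩

lemma isGeodesicSpace (hV : 1 < Module.finrank ℝ V) : IsGeodesicSpace (AngularSphere V) := by
  intro x y
  obtain ⟨u, hu, hxu, hy⟩ := exists_eq_cos_smul_add_sin_smul hV x.norm_val y.norm_val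
  let g : ℝ → V := fun t => Real.cos (t * dist x y) • x.val + Real.sin (t * dist x y) • u
  have hinner : ∀ s t, inner ℝ (g s) (g t) = Real.cos ((s - t) * dist x y) := fun s t => by
    rw [sub_mul]
    exact inner_cos_smul_add_sin_smul x.norm_val hu hxu _ _
  have hg : ∀ t, ‖g t‖ = 1 := fun t => by
    rw [norm_eq_sqrt_real_inner, hinner, sub_self, zero_mul, Real.cos_zero, Real.sqrt_one]
  refine ⟨fun t => ⟨g t, hg t⟩, AngularSphere.ext ?_, AngularSphere.ext ?_, fun s hs t ht => ?_⟩
  · simp [g]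
  · simpa [g, dist_eq_angle] using hy.symm
  · have hst : |s - t| ≤ 1 := abs_le.mpr ⟨by linarith [hs.1, ht.2], by linarith [hs.2, ht.1]⟩
    rw [dist_eq_angle, angle, hg, hg, one_mul, div_one, hinner, ← Real.cos_abs, abs_mul,
      abs_of_nonneg (dist_nonneg (x := x) (y := y))]
    exact Real.arccos_cos (mul_nonneg (abs_nonneg _) dist_nonneg)
      ((mul_le_of_le_one_left dist_nonneg hst).trans (angle_le_pi _ _))

end AngularSphere

end AngularMetric

section Sphere

/-- The standard 2-sphere. -/
abbrev S2 : Type := sphere (0 : EuclideanSpace ℝ (Fin 3)) 1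

lemma exists_isOpenEmbedding_range_eq_compl_singleton (v : S2) :
    ∃ φ : ℂ → S2, Topology.IsOpenEmbedding φ ∧ range φ = {v}ᶜ := by
  have : Fact (Module.finrank ℝ (EuclideanSpace ℝ (Fin 3)) = 2 + 1) := ⟨by simp⟩
  let e := stereographic' 2 v
  let L : ℂ ≃ₜ EuclideanSpace ℝ (Fin 2) := Complex.orthonormalBasisOneI.repr.toHomeomorph
  have htarget : e.symm.source = univ := by simp [e]
  refine ⟨e.symm ∘ L, (e.symm.isOpenEmbedding htarget).comp L.isOpenEmbedding, ?_⟩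
  rw [L.surjective.range_comp, ← image_univ, ← htarget, e.symm.image_source_eq_target]
  simp [e]

lemma isJaniszewskiSpace_S2 : IsJaniszewskiSpace S2 :=
  isJaniszewskiSpace_of_isOpenEmbedding_plane exists_isOpenEmbedding_range_eq_compl_singleton

lemma isPreconnected_compl_singleton_S2 (v : S2) : IsPreconnected ({v}ᶜ : Set S2) := by
  obtain ⟨φ, hφ, hr⟩ := exists_isOpenEmbedding_range_eq_compl_singleton v
  rw [← hr]
  exact isPreconnected_range hφ.continuous

end Sphere

/-! ### Gromov–Hausdorff limits -/

section Approximation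

/-- `a` and `b` distort distances by at most `τ` and are inverse to each other up to `τ`. -/
structure ApproxIsometry {X Y : Type*} [PseudoMetricSpace X] [PseudoMetricSpace Y] (τ : ℝ)
    (a : X → Y) (b : Y → X) : Prop where
  abs_dist_sub_le : ∀ x x', |dist (a x) (a x') - dist x x'| ≤ τ
  abs_dist_sub_le' : ∀ y y', |dist (b y) (b y') - dist y y'| ≤ τ
  left_inv : ∀ x, dist (b (a x)) x ≤ τ
  right_inv : ∀ y, dist (a (b y)) y ≤ τ

namespace ApproxIsometry

variable {X Y : Type*} [PseudoMetricSpace X] [PseudoMetricSpace Y] {τ r σ : ℝ} {a : X → Y}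
  {b : Y → X} {C K S : Set X} {x x' : X} {y : Y}

lemma symm (h : ApproxIsometry τ a b) : ApproxIsometry τ b a :=
  ⟨h.abs_dist_sub_le', h.abs_dist_sub_le, h.right_inv, h.left_inv⟩

lemma dist_map_le (h : ApproxIsometry τ a b) (x x' : X) : dist (a x) (a x') ≤ dist x x' + τ := by
  linarith [(abs_le.mp (h.abs_dist_sub_le x x')).2]

lemma dist_le_dist_map (h : ApproxIsometry τ a b) (x x' : X) :
    dist x x' ≤ dist (a x) (a x') + τ := by
  linarith [(abs_le.mp (h.abs_dist_sub_le x x')).1]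

lemma dist_map_le_dist_right (h : ApproxIsometry τ a b) (x : X) (y : Y) :
    dist y (a x) ≤ dist (b y) x + 2 * τ := by
  linarith [dist_triangle_left y (a x) (a (b y)), h.dist_map_le (b y) x, h.right_inv y]

lemma mem_thickening_of_map_mem (h : ApproxIsometry τ a b) (hy : y ∈ thickening σ (a '' S)) :
    b y ∈ thickening (σ + 2 * τ) S := by
  obtain ⟨_, ⟨x, hx, rfl⟩, hxy⟩ := mem_thickening_iff.mp hy
  refine mem_thickening_iff.mpr ⟨x, hx, ?_⟩
  linarith [h.symm.dist_map_le_dist_right y x, dist_comm (b y) x, dist_comm (a x) y]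

lemma mem_thickening_map_of_mem (h : ApproxIsometry τ a b) (hy : b y ∈ thickening σ S) :
    y ∈ thickening (σ + 2 * τ) (a '' S) := by
  obtain ⟨x, hx, hxy⟩ := mem_thickening_iff.mp hy
  refine mem_thickening_iff.mpr ⟨a x, mem_image_of_mem a hx, ?_⟩
  linarith [h.dist_map_le_dist_right x y]

lemma disjoint_thickening_map (h : ApproxIsometry τ a b)
    (hCK : ∀ c ∈ C, ∀ k ∈ K, r + σ + τ ≤ dist c k) :
    Disjoint (thickening r (a '' C)) (thickening σ (a '' K)) := by
  refine disjoint_left.mpr fun y hyC hyK => ?_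
  obtain ⟨_, ⟨c, hc, rfl⟩, hcy⟩ := mem_thickening_iff.mp hyC
  obtain ⟨_, ⟨k, hk, rfl⟩, hky⟩ := mem_thickening_iff.mp hyK
  linarith [hCK c hc k hk, h.dist_le_dist_map c k, dist_triangle_left (a c) (a k) y]

lemma linkedIn_thickening_map (h : ApproxIsometry τ a b) (hY : IsGeodesicSpace Y) (hτ : 0 < τ)
    (hC : IsPreconnected C) (hx : x ∈ C) (hx' : x' ∈ C) :
    LinkedIn (thickening (3 * τ) (a '' C)) (a x) (a x') := by
  refine hC.induction₂ (P := fun x x' => LinkedIn (thickening (3 * τ) (a '' C)) (a x) (a x'))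
    (fun z hz => ?_) (fun _ _ _ _ _ _ => LinkedIn.trans) (fun _ _ _ _ => LinkedIn.symm) hx hx'
  filter_upwards [mem_nhdsWithin_of_mem_nhds (closedBall_mem_nhds z hτ)] with w hw
  have hzw : dist (a z) (a w) ≤ 2 * τ := by
    linarith [h.dist_map_le z w, mem_closedBall'.mp hw]
  exact (hY.linkedIn_closedBall hzw).mono
    ((closedBall_subset_ball (by linarith)).trans
      (ball_subset_thickening (mem_image_of_mem a hz) _))

lemma isPreconnected_thickening_map (h : ApproxIsometry τ a b) (hY : IsGeodesicSpace Y)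
    (hτ : 0 < τ) (hC : IsPreconnected C) (hr : 3 * τ ≤ r) :
    IsPreconnected (thickening r (a '' C)) := by
  have hcenter : ∀ y ∈ thickening r (a '' C), ∃ c ∈ C,
      LinkedIn (thickening r (a '' C)) (a c) y := by
    intro y hy
    obtain ⟨_, ⟨c, hc, rfl⟩, hcy⟩ := mem_thickening_iff.mp hy
    exact ⟨c, hc, (LinkedIn.of_isPreconnected (hY.isPreconnected_ball (a c) r)
      (mem_ball_self (dist_nonneg.trans_lt hcy)) hcy).mono
        (ball_subset_thickening (mem_image_of_mem a hc) r)⟩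
  refine isPreconnected_of_linkedIn fun y hy z hz => ?_
  obtain ⟨c, hc, hcy⟩ := hcenter y hy
  obtain ⟨d, hd, hdz⟩ := hcenter z hz
  exact hcy.symm.trans
    (((h.linkedIn_thickening_map hY hτ hC hc hd).mono (thickening_mono hr _)).trans hdz)

lemma isGeodesic_approx (h : ApproxIsometry τ a b) {g : ℝ → Y} (hg : IsGeodesic g (a x) (a x')) :
    dist (b (g 0)) x ≤ 2 * τ ∧ dist (b (g 1)) x' ≤ 2 * τ ∧ ∀ s ∈ Icc (0 : ℝ) 1,
      ∀ t ∈ Icc (0 : ℝ) 1, dist (b (g s)) (b (g t)) ≤ |s - t| * dist x x' + 2 * τ := by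
  have hτ : 0 ≤ τ := (abs_nonneg _).trans (h.abs_dist_sub_le x x)
  refine ⟨?_, ?_, fun s hs t ht => ?_⟩
  · rw [hg.1]
    linarith [h.left_inv x]
  · rw [hg.2.1]
    linarith [h.left_inv x']
  · have hst : |s - t| ≤ 1 := abs_le.mpr ⟨by linarith [hs.1, ht.2], by linarith [hs.2, ht.1]⟩
    calc dist (b (g s)) (b (g t)) ≤ |s - t| * dist (a x) (a x') + τ := by
          rw [← hg.2.2 s hs t ht]
          exact h.symm.dist_map_le _ _
      _ ≤ |s - t| * (dist x x' + τ) + τ := by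
          gcongr
          exact h.dist_map_le x x'
      _ ≤ |s - t| * dist x x' + 2 * τ := by
          linarith [mul_le_of_le_one_left hτ hst]

end ApproxIsometry

lemma closure_thickening_subset_thickening {X : Type*} [PseudoMetricSpace X] {r σ : ℝ}
    (hσ : 0 < σ) (h : r < σ) (S : Set X) : closure (thickening r S) ⊆ thickening σ S :=
  (closure_thickening_subset_cthickening r S).trans (cthickening_subset_thickening' hσ h S)

lemma exists_forall_le_dist {X : Type*} [PseudoMetricSpace X] {C K : Set X} (hC : IsCompact C)
    (hK : IsClosed K) (h : Disjoint C K) : ∃ e > 0, ∀ c ∈ C, ∀ k ∈ K, e ≤ dist c k := by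
  obtain ⟨e, he, hd⟩ := exists_pos_forall_lt_edist hC hK h
  refine ⟨e, he, fun c hc k hk => ?_⟩
  have hlt := hd c hc k hk
  rw [edist_nndist, ENNReal.coe_lt_coe] at hlt
  exact NNReal.coe_le_coe.mpr hlt.le

lemma exists_thickening_inter_subset {X : Type*} [PseudoMetricSpace X] {K L : Set X}
    (hK : IsCompact K) (hL : IsClosed L) {r : ℝ} (hr : 0 < r) :
    ∃ ε > 0, thickening ε K ∩ thickening ε L ⊆ thickening r (K ∩ L) := by
  obtain ⟨η, hη, hfar⟩ := exists_forall_le_dist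
    (hK.diff (isOpen_thickening (δ := r / 2) (E := K ∩ L))) hL <| disjoint_left.mpr fun x hx hxL =>
      hx.2 (self_subset_thickening (half_pos hr) _ ⟨hx.1, hxL⟩)
  refine ⟨min (r / 2) (η / 2), by positivity, fun x ⟨hxK, hxL⟩ => ?_⟩
  obtain ⟨k, hk, hkx⟩ := mem_thickening_iff.mp hxK
  obtain ⟨l, hl, hlx⟩ := mem_thickening_iff.mp hxL
  by_cases hkU : k ∈ thickening (r / 2) (K ∩ L)
  · obtain ⟨i, hi, hik⟩ := mem_thickening_iff.mp hkU
    refine mem_thickening_iff.mpr ⟨i, hi, ?_⟩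
    linarith [dist_triangle x k i, min_le_left (r / 2) (η / 2)]
  · linarith [hfar k ⟨hk, hkU⟩ l hl, dist_triangle_left k l x, min_le_right (r / 2) (η / 2)]

section Limit

variable {X Y : Type*} [PseudoMetricSpace X] [PseudoMetricSpace Y] {τ ε r : ℝ} {a : X → Y}
  {b : Y → X} {K₁ K₂ C₁ C₂ : Set X} {u v : X}

lemma ApproxIsometry.closure_thickening_union_inter (h : ApproxIsometry τ a b) (hτ : 0 < τ)
    (hε : τ ≤ ε) (hr : 4 * τ ≤ r)
    (hK : thickening (4 * ε) K₁ ∩ thickening (4 * ε) K₂ ⊆ thickening (r / 2) (K₁ ∩ K₂)) :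
    (closure (thickening ε (a '' K₁)) ∪ closure (thickening r (a '' (K₁ ∩ K₂)))) ∩
      (closure (thickening ε (a '' K₂)) ∪ closure (thickening r (a '' (K₁ ∩ K₂)))) =
    closure (thickening r (a '' (K₁ ∩ K₂))) := by
  rw [← inter_union_distrib_right, union_eq_right]
  have hpull : ∀ {K : Set X} {y : Y}, y ∈ closure (thickening ε (a '' K)) →
      b y ∈ thickening (4 * ε) K := fun hy =>
    thickening_mono (by linarith) _ <| h.mem_thickening_of_map_mem
      (closure_thickening_subset_thickening (σ := 2 * ε) (by linarith) (by linarith) _ hy)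
  rintro y ⟨hy₁, hy₂⟩
  exact subset_closure <| thickening_mono (by linarith) _ <|
    h.mem_thickening_map_of_mem (hK ⟨hpull hy₁, hpull hy₂⟩)

/-- The Janiszewski property of `Y` is applied to neighbourhoods of the images of `K₁` and `K₂`,
enlarged by a neighbourhood of the image of `K₁ ∩ K₂` to make their intersection connected. -/
lemma ApproxIsometry.linkedIn_compl_union (h : ApproxIsometry τ a b) (hX : IsGeodesicSpace X)
    (hY : IsGeodesicSpace Y) (hJ : IsJaniszewskiSpace Y) (hτ : 0 < τ) (hε : 5 * τ ≤ ε)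
    (hr : ε ≤ r) (hI : IsPreconnected (K₁ ∩ K₂))
    (hK : thickening (4 * ε) K₁ ∩ thickening (4 * ε) K₂ ⊆ thickening (r / 2) (K₁ ∩ K₂))
    (hC₁ : IsPreconnected C₁) (hC₁K : ∀ c ∈ C₁, ∀ k ∈ K₁, 4 * r ≤ dist c k) (hu₁ : u ∈ C₁)
    (hv₁ : v ∈ C₁)
    (hC₂ : IsPreconnected C₂) (hC₂K : ∀ c ∈ C₂, ∀ k ∈ K₂, 4 * r ≤ dist c k) (hu₂ : u ∈ C₂)
    (hv₂ : v ∈ C₂) :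
    LinkedIn (K₁ ∪ K₂)ᶜ u v := by
  let M : Set X → Set Y := fun K =>
    closure (thickening ε (a '' K)) ∪ closure (thickening r (a '' (K₁ ∩ K₂)))
  have hM : ∀ {C K : Set X}, IsPreconnected C → (∀ c ∈ C, ∀ k ∈ K, 4 * r ≤ dist c k) →
      K₁ ∩ K₂ ⊆ K → u ∈ C → v ∈ C → LinkedIn (M K)ᶜ (a u) (a v) := by
    intro C K hC hCK hIK hu hv
    have hMK : M K ⊆ thickening (2 * r) (a '' K) := union_subset
      (closure_thickening_subset_thickening (by linarith) (by linarith) _)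
      ((closure_thickening_subset_thickening (by linarith) (by linarith) _).trans
        (thickening_subset_of_subset _ (image_mono hIK)))
    refine (h.linkedIn_thickening_map hY hτ hC hu hv).mono (subset_compl_iff_disjoint_right.mpr
      ((h.disjoint_thickening_map fun c hc k hk => ?_).mono_right hMK))
    linarith [hCK c hc k hk]
  have hMinter : IsPreconnected (M K₁ ∩ M K₂) := by
    rw [h.closure_thickening_union_inter hτ (by linarith) (by linarith) hK]
    exact (h.isPreconnected_thickening_map hY hτ hI (by linarith)).closure
  obtain ⟨D, hDM, hD, huD, hvD⟩ := hJ (isClosed_closure.union isClosed_closure)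
    (isClosed_closure.union isClosed_closure) hMinter (hM hC₁ hC₁K inter_subset_left hu₁ hv₁)
    (hM hC₂ hC₂K inter_subset_right hu₂ hv₂)
  have hback : thickening (3 * τ) (b '' D) ⊆ (K₁ ∪ K₂)ᶜ := by
    intro x hx hxK
    obtain ⟨y, hy, hyx⟩ := mem_thickening_iff.mp (h.symm.mem_thickening_of_map_mem hx)
    have hmem : ∀ {K : Set X}, x ∈ K → y ∈ M K := fun hxK => Or.inl <| subset_closure <|
      mem_thickening_iff.mpr ⟨a x, mem_image_of_mem a hxK, by linarith [dist_comm y (a x)]⟩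
    exact hDM hy (hxK.imp hmem hmem)
  have hend : ∀ {w : X}, a w ∈ D → LinkedIn (K₁ ∪ K₂)ᶜ (b (a w)) w := fun hw =>
    (hX.linkedIn_closedBall (h.left_inv _)).mono <|
      (closedBall_subset_ball (by linarith)).trans
        ((ball_subset_thickening (mem_image_of_mem b hw) _).trans hback)
  exact (hend huD).symm.trans
    (((h.symm.linkedIn_thickening_map hX hτ hD huD hvD).mono hback).trans (hend hvD))

end Limit

universe u v

lemma isGeodesicSpace_of_forall_approxIsometry {X : Type u} [MetricSpace X] [CompactSpace X]
    (h : ∀ τ > 0, ∃ (Y : Type v) (_ : MetricSpace Y), IsGeodesicSpace Y ∧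
      ∃ (a : X → Y) (b : Y → X), ApproxIsometry τ a b) : IsGeodesicSpace X := by
  intro x x'
  refine exists_isGeodesic_of_forall_approx fun ε hε => ?_
  obtain ⟨Y, _, hY, a, b, hab⟩ := h (ε / 2) (half_pos hε)
  obtain ⟨g, hg⟩ := hY (a x) (a x')
  have happrox := hab.isGeodesic_approx hg
  rw [mul_div_cancel₀ _ two_ne_zero] at happrox
  exact ⟨fun t => b (g t), happrox⟩

lemma isJaniszewskiSpace_of_forall_approxIsometry {X : Type u} [MetricSpace X] [CompactSpace X]
    (hX : IsGeodesicSpace X)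
    (h : ∀ τ > 0, ∃ (Y : Type v) (_ : MetricSpace Y), IsGeodesicSpace Y ∧ IsJaniszewskiSpace Y ∧
      ∃ (a : X → Y) (b : Y → X), ApproxIsometry τ a b) : IsJaniszewskiSpace X := by
  intro K₁ K₂ hK₁ hK₂ hI u v huv₁ huv₂
  obtain ⟨C₁, hCK₁, hC₁c, hC₁, hu₁, hv₁⟩ := hX.exists_isCompact_of_linkedIn hK₁.isOpen_compl huv₁
  obtain ⟨C₂, hCK₂, hC₂c, hC₂, hu₂, hv₂⟩ := hX.exists_isCompact_of_linkedIn hK₂.isOpen_compl huv₂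
  obtain ⟨e₁, he₁, hd₁⟩ :=
    exists_forall_le_dist hC₁c hK₁ (subset_compl_iff_disjoint_right.mp hCK₁)
  obtain ⟨e₂, he₂, hd₂⟩ :=
    exists_forall_le_dist hC₂c hK₂ (subset_compl_iff_disjoint_right.mp hCK₂)
  set r := min e₁ e₂ / 4 with hr
  have hr0 : 0 < r := by positivity
  have hr₁ : 4 * r ≤ e₁ := by linarith [min_le_left e₁ e₂]
  have hr₂ : 4 * r ≤ e₂ := by linarith [min_le_right e₁ e₂]
  obtain ⟨η, hη, hK⟩ := exists_thickening_inter_subset hK₁.isCompact hK₂ (half_pos hr0)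
  have hε : 4 * min r (η / 4) ≤ η := by linarith [min_le_right r (η / 4)]
  obtain ⟨Y, _, hY, hJ, a, b, hab⟩ := h (min r (η / 4) / 5) (by positivity)
  exact hab.linkedIn_compl_union hX hY hJ (by positivity) (by linarith) (min_le_left _ _) hI
    ((inter_subset_inter (thickening_mono hε _) (thickening_mono hε _)).trans hK)
    hC₁ (fun c hc k hk => hr₁.trans (hd₁ c hc k hk)) hu₁ hv₁
    hC₂ (fun c hc k hk => hr₂.trans (hd₂ c hc k hk)) hu₂ hv₂

lemma exists_approxIsometry_of_ghDist_lt {X : Type u} {Y : Type v} [MetricSpace X]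
    [CompactSpace X] [Nonempty X] [MetricSpace Y] [CompactSpace Y] [Nonempty Y] {τ : ℝ}
    (h : ghDist X Y < τ) : ∃ (a : X → Y) (b : Y → X), ApproxIsometry (2 * τ) a b := by
  rw [← hausdorffDist_optimal] at h
  set Φ := optimalGHInjl X Y
  set Ψ := optimalGHInjr X Y
  have hΦ : Isometry Φ := isometry_optimalGHInjl X Y
  have hΨ : Isometry Ψ := isometry_optimalGHInjr X Y
  have hfin : hausdorffEDist (range Φ) (range Ψ) ≠ ⊤ :=
    hausdorffEDist_ne_top_of_nonempty_of_bounded (range_nonempty _) (range_nonempty _)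
      (isCompact_range hΦ.continuous).isBounded (isCompact_range hΨ.continuous).isBounded
  have hleft : ∀ x, ∃ y, dist (Φ x) (Ψ y) < τ := fun x => by
    obtain ⟨_, ⟨y, rfl⟩, hy⟩ := exists_dist_lt_of_hausdorffDist_lt (mem_range_self x) h hfin
    exact ⟨y, hy⟩
  have hright : ∀ y, ∃ x, dist (Φ x) (Ψ y) < τ := fun y => by
    obtain ⟨_, ⟨x, rfl⟩, hx⟩ := exists_dist_lt_of_hausdorffDist_lt' (mem_range_self y) h hfin
    exact ⟨x, hx⟩
  choose a ha using hleft
  choose b hb using hright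
  refine ⟨a, b, fun x x' => ?_, fun y y' => ?_, fun x => ?_, fun y => ?_⟩
  · rw [← hΦ.dist_eq, ← hΨ.dist_eq, ← Real.dist_eq]
    refine (dist_dist_dist_le _ _ _ _).trans ?_
    linarith [ha x, ha x', dist_comm (Φ x) (Ψ (a x)), dist_comm (Φ x') (Ψ (a x'))]
  · rw [← hΦ.dist_eq, ← hΨ.dist_eq, ← Real.dist_eq]
    refine (dist_dist_dist_le _ _ _ _).trans ?_
    linarith [hb y, hb y']
  · rw [← hΦ.dist_eq]
    linarith [dist_triangle_right (Φ (b (a x))) (Φ x) (Ψ (a x)), ha x, hb (a x)]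
  · rw [← hΨ.dist_eq]
    linarith [dist_triangle_left (Ψ (a (b y))) (Ψ y) (Φ (b y)), ha (b y), hb y]

end Approximation

/-! ### Length spaces -/

section LengthSpace

variable {Z : Type} [MetricSpace Z] {x y : Z}

lemma edist_add_edist_add_edist_le_pathLength (γ : Path x y) {a b : unitInterval} (hab : a ≤ b) :
    edist x (γ a) + edist (γ a) (γ b) + edist (γ b) y ≤ pathLength γ := by
  have hbound : ∀ {c d : unitInterval}, c ≤ d →
      edist (γ c) (γ d) ≤ eVariationOn γ (univ ∩ Icc c d) := fun hcd =>
    eVariationOn.edist_le γ (by simp [hcd]) (by simp [hcd])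
  calc edist x (γ a) + edist (γ a) (γ b) + edist (γ b) y
      = edist (γ 0) (γ a) + edist (γ a) (γ b) + edist (γ b) (γ 1) := by
        rw [γ.source, γ.target]
    _ ≤ eVariationOn γ (univ ∩ Icc 0 a) + eVariationOn γ (univ ∩ Icc a b) +
          eVariationOn γ (univ ∩ Icc b 1) :=
        add_le_add (add_le_add (hbound unitInterval.nonneg') (hbound hab))
          (hbound unitInterval.le_one')
    _ = eVariationOn γ (univ ∩ Icc 0 1) := by
        rw [eVariationOn.Icc_add_Icc γ unitInterval.nonneg' hab (mem_univ a),
          eVariationOn.Icc_add_Icc γ unitInterval.nonneg' unitInterval.le_one' (mem_univ b)]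
    _ ≤ pathLength γ := eVariationOn.mono _ (subset_univ _)

lemma exists_path_dist_add_le_of_isLengthSpace (hZ : IsLengthSpace Z) (x y : Z) {ε : ℝ}
    (hε : 0 < ε) : ∃ γ : Path x y, ∀ a b : unitInterval, a ≤ b →
      dist x (γ a) + dist (γ a) (γ b) + dist (γ b) y ≤ dist x y + ε := by
  have hlt : ⨅ γ : Path x y, pathLength γ < edist x y + ENNReal.ofReal ε := by
    rw [← hZ x y]
    exact ENNReal.lt_add_right (edist_ne_top x y) (by simpa using hε)
  obtain ⟨γ, hγ⟩ := iInf_lt_iff.mp hlt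
  refine ⟨γ, fun a b hab => ?_⟩
  have hle := (edist_add_edist_add_edist_le_pathLength γ hab).trans hγ.le
  simp only [edist_dist] at hle
  rwa [← ENNReal.ofReal_add dist_nonneg dist_nonneg,
    ← ENNReal.ofReal_add (by positivity) dist_nonneg,
    ← ENNReal.ofReal_add dist_nonneg hε.le, ENNReal.ofReal_le_ofReal_iff (by positivity)] at hle

/-- An almost shortest path, reparametrized by the distance to its starting point, is almost a
geodesic. -/
lemma isGeodesicSpace_of_isLengthSpace [CompactSpace Z] (hZ : IsLengthSpace Z) :
    IsGeodesicSpace Z := by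
  intro x y
  refine exists_isGeodesic_of_forall_approx fun ε hε => ?_
  obtain ⟨γ, hγ⟩ := exists_path_dist_add_le_of_isLengthSpace hZ x y hε
  have hexists : ∀ s ∈ Icc (0 : ℝ) 1, ∃ t : unitInterval, dist x (γ t) = s * dist x y := by
    intro s hs
    refine intermediate_value_univ 0 1 (f := fun t => dist x (γ t)) (by fun_prop) ?_
    simp only [γ.source, γ.target, dist_self]
    exact ⟨mul_nonneg hs.1 dist_nonneg, mul_le_of_le_one_left dist_nonneg hs.2⟩
  choose! t ht using hexists
  have hclose : ∀ s ∈ Icc (0 : ℝ) 1, ∀ s' ∈ Icc (0 : ℝ) 1, t s ≤ t s' →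
      dist (γ (t s)) (γ (t s')) ≤ |s - s'| * dist x y + ε := by
    intro s hs s' hs' hle
    have hmul : (s' - s) * dist x y ≤ |s - s'| * dist x y :=
      mul_le_mul_of_nonneg_right (by rw [← neg_sub]; exact neg_le_abs _) dist_nonneg
    linarith [hγ _ _ hle, dist_triangle x (γ (t s')) y, ht s hs, ht s' hs']
  refine ⟨fun s => γ (t s), ?_, ?_, fun s hs s' hs' => ?_⟩
  · rw [dist_comm, ht 0 (by simp), zero_mul]
    exact hε.le
  · have hsum := hγ (t 1) (t 1) le_rfl
    rw [ht 1 (by simp), dist_self] at hsum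
    linarith
  · rcases le_total (t s) (t s') with hle | hle
    · exact hclose s hs s' hs' hle
    · rw [dist_comm (γ (t s)), abs_sub_comm]
      exact hclose s' hs' s hs hle

end LengthSpace

section Spherelike

/-- The properties that characterize the 2-sphere among compact geodesic spaces: the Janiszewski
property and the absence of cut points. -/
structure IsSpherelike (E : Type*) [PseudoMetricSpace E] : Prop where
  isGeodesicSpace : IsGeodesicSpace E
  isJaniszewskiSpace : IsJaniszewskiSpace E
  isPreconnected_compl_singleton : ∀ p : E, IsPreconnected ({p}ᶜ : Set E)
  nontrivial : Nontrivial E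

lemma isSpherelike_angularSphere : IsSpherelike (AngularSphere (EuclideanSpace ℝ (Fin 3))) := by
  obtain ⟨e⟩ := AngularSphere.nonempty_homeomorph_sphere (V := EuclideanSpace ℝ (Fin 3))
  refine ⟨AngularSphere.isGeodesicSpace (by simp), isJaniszewskiSpace_S2.of_homeomorph e.symm,
    fun p => ?_, ?_⟩
  · have himage := (isPreconnected_compl_singleton_S2 (e.symm p)).image e e.continuous.continuousOn
    rwa [e.image_compl, image_singleton, e.apply_symm_apply] at himage
  · obtain ⟨φ, hφ, -⟩ := exists_isOpenEmbedding_range_eq_compl_singleton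
      (⟨EuclideanSpace.single 0 1, by simp⟩ : S2)
    exact (e.injective.comp hφ.injective).nontrivial

end Spherelike

/-! ### Arcs -/

/-- `S` is an arc with end points `a` and `b`. -/
def IsArc {E : Type*} [TopologicalSpace E] (S : Set E) (a b : E) : Prop :=
  ∃ f : ℝ → E, ContinuousOn f (Icc 0 1) ∧ InjOn f (Icc 0 1) ∧ f 0 = a ∧ f 1 = b ∧ f '' Icc 0 1 = S

namespace IsArc

variable {E : Type*} [TopologicalSpace E] {S T : Set E} {a b c p q : E} {s t : ℝ}

lemma exists_reparametrization {f : ℝ → E} (hst : s < t) (hf : ContinuousOn f (Icc s t))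
    (hi : InjOn f (Icc s t)) {s' t' : ℝ} (hst' : s' < t') :
    ∃ g : ℝ → E, ContinuousOn g (Icc s' t') ∧ InjOn g (Icc s' t') ∧ g s' = f s ∧ g t' = f t ∧
      g '' Icc s' t' = f '' Icc s t := by
  set k : ℝ := (t - s) / (t' - s')
  have hk : 0 < k := div_pos (sub_pos.mpr hst) (sub_pos.mpr hst')
  let φ : ℝ → ℝ := fun u => k * u + (s - k * s')
  have hφs : φ s' = s := by simp only [φ]; ring
  have hφt : φ t' = t := by
    have hkt : k * (t' - s') = t - s := div_mul_cancel₀ _ (sub_pos.mpr hst').ne'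
    simp only [φ]; linarith
  have himage : φ '' Icc s' t' = Icc s t := by
    rw [image_affine_Icc' hk]
    exact congrArg₂ Icc hφs hφt
  have hmaps : MapsTo φ (Icc s' t') (Icc s t) := mapsTo_iff_image_subset.mpr himage.subset
  have hφ : Function.Injective φ := fun u v huv =>
    mul_left_cancel₀ hk.ne' (add_right_cancel huv)
  exact ⟨f ∘ φ, hf.comp (by fun_prop) hmaps, hi.comp hφ.injOn hmaps, congrArg f hφs,
    congrArg f hφt, by rw [image_comp, himage]⟩

lemma of_image_Icc {f : ℝ → E} (hst : s < t) (hf : ContinuousOn f (Icc s t))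
    (hi : InjOn f (Icc s t)) : IsArc (f '' Icc s t) (f s) (f t) :=
  exists_reparametrization hst hf hi one_pos

lemma exists_image_Icc (h : IsArc S a b) (hst : s < t) : ∃ f : ℝ → E,
    ContinuousOn f (Icc s t) ∧ InjOn f (Icc s t) ∧ f s = a ∧ f t = b ∧ f '' Icc s t = S := by
  obtain ⟨f, hf, hi, rfl, rfl, rfl⟩ := h
  exact exists_reparametrization one_pos hf hi hst

lemma left_mem (h : IsArc S a b) : a ∈ S := by
  obtain ⟨f, -, -, rfl, -, rfl⟩ := h
  exact mem_image_of_mem f (by simp)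

lemma symm (h : IsArc S a b) : IsArc S b a := by
  obtain ⟨f, hf, hi, rfl, rfl, rfl⟩ := h
  have hmaps : MapsTo (fun u : ℝ => 1 - u) (Icc 0 1) (Icc 0 1) :=
    fun u hu => ⟨by linarith [hu.2], by linarith [hu.1]⟩
  refine ⟨fun u => f (1 - u), hf.comp (by fun_prop) hmaps,
    hi.comp sub_right_injective.injOn hmaps, by simp, by simp, ?_⟩
  rw [← image_image f, image_const_sub_Icc, sub_zero, sub_self]

lemma right_mem (h : IsArc S a b) : b ∈ S := h.symm.left_mem

lemma ne (h : IsArc S a b) : a ≠ b := by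
  obtain ⟨f, -, hi, rfl, rfl, -⟩ := h
  exact fun hab => zero_ne_one (hi (by simp) (by simp) hab)

lemma isCompact (h : IsArc S a b) : IsCompact S := by
  obtain ⟨f, hf, -, -, -, rfl⟩ := h
  exact isCompact_Icc.image_of_continuousOn hf

lemma isClosed [T2Space E] (h : IsArc S a b) : IsClosed S := h.isCompact.isClosed

lemma isPreconnected (h : IsArc S a b) : IsPreconnected S := by
  obtain ⟨f, hf, -, -, -, rfl⟩ := h
  exact isPreconnected_Icc.image f hf

lemma image {F : Type*} [TopologicalSpace F] (h : IsArc S a b) {φ : E → F}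
    (hφ : ContinuousOn φ S) (hi : InjOn φ S) : IsArc (φ '' S) (φ a) (φ b) := by
  obtain ⟨f, hf, hfi, rfl, rfl, rfl⟩ := h
  exact ⟨φ ∘ f, hφ.comp hf (mapsTo_image _ _), hi.comp hfi (mapsTo_image _ _), rfl, rfl,
    image_comp φ f _⟩

lemma split_image_Icc {f : ℝ → E} (hf : ContinuousOn f (Icc 0 1)) (hi : InjOn f (Icc 0 1))
    (ht₀ : 0 < t) (ht₁ : t < 1) : IsArc (f '' Icc 0 t) (f 0) (f t) ∧
      IsArc (f '' Icc t 1) (f t) (f 1) ∧ f '' Icc 0 t ∪ f '' Icc t 1 = f '' Icc 0 1 ∧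
      f '' Icc 0 t ∩ f '' Icc t 1 = {f t} := by
  have hleft : Icc 0 t ⊆ Icc (0 : ℝ) 1 := Icc_subset_Icc_right ht₁.le
  have hright : Icc t 1 ⊆ Icc (0 : ℝ) 1 := Icc_subset_Icc_left ht₀.le
  refine ⟨of_image_Icc ht₀ (hf.mono hleft) (hi.mono hleft),
    of_image_Icc ht₁ (hf.mono hright) (hi.mono hright), ?_, ?_⟩
  · rw [← image_union, Icc_union_Icc_eq_Icc ht₀.le ht₁.le]
  · rw [← hi.image_inter hleft hright, Icc_inter_Icc_eq_singleton ht₀.le ht₁.le, image_singleton]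

lemma exists_split (h : IsArc S a b) (hp : p ∈ S) (hpa : p ≠ a) (hpb : p ≠ b) :
    ∃ S₁ S₂, IsArc S₁ a p ∧ IsArc S₂ p b ∧ S₁ ∪ S₂ = S ∧ S₁ ∩ S₂ = {p} := by
  obtain ⟨f, hf, hi, rfl, rfl, rfl⟩ := h
  obtain ⟨t, ht, rfl⟩ := hp
  exact ⟨_, _, split_image_Icc hf hi (ht.1.lt_of_ne fun h => hpa (congrArg f h.symm))
    (ht.2.lt_of_ne fun h => hpb (congrArg f h))⟩

lemma exists_split_near (h : IsArc S a b) {U : Set E} (hU : IsOpen U) (ha : a ∈ U) :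
    ∃ p S₁ S₂, IsArc S₁ a p ∧ IsArc S₂ p b ∧ S₁ ∪ S₂ = S ∧ S₁ ∩ S₂ = {p} ∧ S₁ ⊆ U := by
  obtain ⟨f, hf, hi, rfl, rfl, rfl⟩ := h
  obtain ⟨ε, hε, hεU⟩ := Metric.mem_nhdsWithin_iff.mp (hf 0 (by simp) (hU.mem_nhds ha))
  obtain ⟨t, ht, ht'⟩ := exists_between (lt_min hε one_pos)
  obtain ⟨htε, ht₁⟩ := lt_min_iff.mp ht'
  obtain ⟨hleft, hright, hunion, hinter⟩ := split_image_Icc hf hi ht ht₁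
  refine ⟨f t, _, _, hleft, hright, hunion, hinter, ?_⟩
  rintro _ ⟨s, hs, rfl⟩
  refine hεU ⟨?_, hs.1, hs.2.trans ht₁.le⟩
  rw [mem_ball, Real.dist_eq, sub_zero, abs_of_nonneg hs.1]
  exact hs.2.trans_lt htε

lemma concat (h : IsArc S a b) (h' : IsArc T b c) (hST : S ∩ T ⊆ {b}) : IsArc (S ∪ T) a c := by
  obtain ⟨f, hf, hfi, rfl, hf1, rfl⟩ := h
  obtain ⟨g, hg, hgi, hg1, rfl, rfl⟩ := h'.exists_image_Icc one_lt_two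
  let F : ℝ → E := fun t => if t ≤ 1 then f t else g t
  have hFf : EqOn F f (Icc 0 1) := fun t ht => if_pos ht.2
  have hFg : EqOn F g (Icc 1 2) := fun t ht => by
    rcases ht.1.eq_or_lt with rfl | h
    · exact (if_pos le_rfl).trans (hf1.trans hg1.symm)
    · exact if_neg h.not_ge
  have hunion : Icc (0 : ℝ) 1 ∪ Icc 1 2 = Icc 0 2 :=
    Icc_union_Icc_eq_Icc zero_le_one one_le_two
  have hcont : ContinuousOn F (Icc 0 2) := hunion ▸
    (hf.congr hFf).union_of_isClosed (hg.congr hFg) isClosed_Icc isClosed_Icc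
  have hcross : ∀ s ∈ Icc (0 : ℝ) 1, ∀ t ∈ Icc (1 : ℝ) 2, F s = F t → s = t := by
    intro s hs t ht hst
    rw [hFf hs, hFg ht] at hst
    have hb : f s = b := hST ⟨mem_image_of_mem f hs, hst ▸ mem_image_of_mem g ht⟩
    have hs1 : s = 1 := hfi hs (by simp) (hb.trans hf1.symm)
    have ht1 : t = 1 := hgi ht (by simp) (by rw [hg1, ← hb, hst])
    exact hs1.trans ht1.symm
  have hinj : InjOn F (Icc 0 2) := by
    rw [← hunion]
    rintro s (hs | hs) t (ht | ht) hst
    · exact (hfi.congr hFf.symm) hs ht hst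
    · exact hcross s hs t ht hst
    · exact (hcross t ht s hs hst.symm).symm
    · exact (hgi.congr hFg.symm) hs ht hst
  have harc := of_image_Icc two_pos hcont hinj
  rwa [← hunion, image_union, hFf.image_eq, hFg.image_eq, hFf (by simp), hFg (by simp)] at harc

lemma exists_subset_isArc (h : IsArc S a b) (hp : p ∈ S) (hq : q ∈ S) (hpq : p ≠ q) :
    ∃ T ⊆ S, IsArc T p q := by
  obtain ⟨f, hf, hi, rfl, rfl, rfl⟩ := h
  have hsub : ∀ {s t : ℝ}, s ∈ Icc (0 : ℝ) 1 → t ∈ Icc (0 : ℝ) 1 → s < t →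
      ∃ T ⊆ f '' Icc 0 1, IsArc T (f s) (f t) := fun {s t} hs ht hst =>
    have hIcc : Icc s t ⊆ Icc (0 : ℝ) 1 := Icc_subset_Icc hs.1 ht.2
    ⟨f '' Icc s t, image_mono hIcc, of_image_Icc hst (hf.mono hIcc) (hi.mono hIcc)⟩
  obtain ⟨s, hs, rfl⟩ := hp
  obtain ⟨t, ht, rfl⟩ := hq
  rcases (ne_of_apply_ne f hpq).lt_or_gt with hst | hst
  · exact hsub hs ht hst
  · obtain ⟨T, hT, harc⟩ := hsub ht hs hst
    exact ⟨T, hT, harc.symm⟩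

lemma exists_first_hit (h : IsArc S a b) {K : Set E} (hK : IsClosed K) (ha : a ∉ K)
    (hSK : (S ∩ K).Nonempty) : ∃ p, ∃ R ⊆ S, IsArc R a p ∧ R ∩ K = {p} := by
  obtain ⟨f, hf, hi, rfl, rfl, rfl⟩ := h
  have hcompact : IsCompact (Icc (0 : ℝ) 1 ∩ f ⁻¹' K) :=
    isCompact_Icc.of_isClosed_subset (hf.preimage_isClosed_of_isClosed isClosed_Icc hK)
      inter_subset_left
  obtain ⟨_, ⟨s, hs, rfl⟩, hsK⟩ := hSK
  obtain ⟨t, ⟨ht, htK⟩, hmin⟩ := hcompact.exists_isLeast ⟨s, hs, hsK⟩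
  have ht0 : 0 < t := ht.1.lt_of_ne fun h => ha (h ▸ htK)
  have hIcc : Icc 0 t ⊆ Icc (0 : ℝ) 1 := Icc_subset_Icc_right ht.2
  refine ⟨f t, f '' Icc 0 t, image_mono hIcc,
    of_image_Icc ht0 (hf.mono hIcc) (hi.mono hIcc), Subset.antisymm ?_ ?_⟩
  · rintro _ ⟨⟨u, hu, rfl⟩, huK⟩
    rw [le_antisymm hu.2 (hmin ⟨hIcc hu, huK⟩)]
    exact mem_singleton _
  · exact singleton_subset_iff.mpr ⟨mem_image_of_mem f ⟨ht0.le, le_rfl⟩, htK⟩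

lemma exists_join [T2Space E] (h : IsArc S a b) (h' : IsArc T b c) (hac : a ≠ c) :
    ∃ R ⊆ S ∪ T, IsArc R a c := by
  by_cases ha : a ∈ T
  · obtain ⟨R, hR, hac⟩ := h'.exists_subset_isArc ha h'.right_mem hac
    exact ⟨R, hR.trans subset_union_right, hac⟩
  obtain ⟨p, R, hR, hap, hRT⟩ := h.exists_first_hit h'.isClosed ha ⟨b, h.right_mem, h'.left_mem⟩
  by_cases hpc : p = c
  · exact ⟨R, hR.trans subset_union_left, hpc ▸ hap⟩
  have hpT : p ∈ T := (hRT.superset (mem_singleton p)).2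
  obtain ⟨T', hT', hpc⟩ := h'.exists_subset_isArc hpT h'.right_mem hpc
  exact ⟨R ∪ T', union_subset_union hR hT',
    hap.concat hpc ((inter_subset_inter_right R hT').trans hRT.subset)⟩

lemma isPreconnected_diff (h : IsArc S a b) : IsPreconnected (S \ {a, b}) := by
  obtain ⟨f, hf, hi, rfl, rfl, rfl⟩ := h
  rw [← image_pair, ← hi.image_sdiff_subset (by simp [insert_subset_iff]), Icc_sdiff_both]
  exact isPreconnected_Ioo.image f (hf.mono Ioo_subset_Icc_self)

lemma subset_closure_diff (h : IsArc S a b) : S ⊆ closure (S \ {a, b}) := by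
  obtain ⟨f, hf, hi, rfl, rfl, rfl⟩ := h
  have hclosure : closure (Ioo (0 : ℝ) 1) = Icc 0 1 := closure_Ioo zero_ne_one
  rw [← image_pair, ← hi.image_sdiff_subset (by simp [insert_subset_iff]), Icc_sdiff_both,
    ← hclosure]
  exact ContinuousOn.image_closure (hclosure ▸ hf)

lemma nonempty_diff (h : IsArc S a b) : (S \ {a, b}).Nonempty :=
  closure_nonempty_iff.mp ⟨a, h.subset_closure_diff h.left_mem⟩

end IsArc

section

variable {E : Type*} [MetricSpace E] {x y : E}

lemma IsGeodesic.isArc {f : ℝ → E} (hf : IsGeodesic f x y) (hxy : x ≠ y) :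
    IsArc (f '' Icc 0 1) x y := by
  refine ⟨f, hf.continuousOn, fun s hs t ht hst => ?_, hf.1, hf.2.1, rfl⟩
  have hmul := hf.2.2 s hs t ht
  rw [hst, dist_self, eq_comm, mul_eq_zero_iff_right (dist_ne_zero.mpr hxy)] at hmul
  exact sub_eq_zero.mp (abs_eq_zero.mp hmul)

lemma IsGeodesicSpace.exists_isArc_of_dist_le (hE : IsGeodesicSpace E) (hxy : x ≠ y) {r : ℝ}
    (hr : dist x y ≤ r) : ∃ S ⊆ closedBall x r, IsArc S x y := by
  obtain ⟨f, hf⟩ := hE x y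
  refine ⟨f '' Icc 0 1, ?_, hf.isArc hxy⟩
  rintro _ ⟨t, ht, rfl⟩
  exact mem_closedBall'.mpr ((hf.dist_left_le ht).trans hr)

lemma IsGeodesicSpace.exists_isArc_of_linkedIn (hE : IsGeodesicSpace E) {U : Set E}
    (hU : IsOpen U) (h : LinkedIn U x y) (hxy : x ≠ y) : ∃ S ⊆ U, IsArc S x y := by
  obtain ⟨D, hDU, hD, hx, hy⟩ := h
  refine (hD.induction₂ (P := fun x y => x = y ∨ ∃ S ⊆ U, IsArc S x y)
    (fun z hz => ?_) ?_ ?_ hx hy).resolve_left hxy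
  · obtain ⟨r, hr, hrU⟩ := nhds_basis_closedBall.mem_iff.mp (hU.mem_nhds (hDU hz))
    filter_upwards [mem_nhdsWithin_of_mem_nhds (closedBall_mem_nhds z hr)] with w hw
    refine or_iff_not_imp_left.mpr fun hzw => ?_
    obtain ⟨S, hS, harc⟩ := hE.exists_isArc_of_dist_le hzw (mem_closedBall'.mp hw)
    exact ⟨S, hS.trans hrU, harc⟩
  · rintro a b c - - - (rfl | ⟨S, hS, hab⟩) (rfl | ⟨T, hT, hbc⟩)
    · exact Or.inl rfl
    · exact Or.inr ⟨T, hT, hbc⟩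
    · exact Or.inr ⟨S, hS, hab⟩
    · refine or_iff_not_imp_left.mpr fun hac => ?_
      obtain ⟨R, hR, harc⟩ := hab.exists_join hbc hac
      exact ⟨R, hR.trans (union_subset hS hT), harc⟩
  · rintro a b - - (rfl | ⟨S, hS, hab⟩)
    · exact Or.inl rfl
    · exact Or.inr ⟨S, hS, hab.symm⟩

end

/-! ### Maximal cyclic subsets -/

section JordanCurve

lemma isPreconnected_compl_singleton_addCircle (q : AddCircle (1 : ℝ)) :
    IsPreconnected ({q}ᶜ : Set (AddCircle (1 : ℝ))) := by
  obtain ⟨a, rfl⟩ := QuotientAddGroup.mk_surjective q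
  let φ := AddCircle.openPartialHomeomorphCoe (1 : ℝ) a
  have himage : φ '' Ioo a (a + 1) = {(a : AddCircle (1 : ℝ))}ᶜ := φ.image_source_eq_target
  exact himage ▸ isPreconnected_Ioo.image φ φ.continuousOn

lemma isPreconnected_compl_addCircle {s : Set (AddCircle (1 : ℝ))} (hs : s.Subsingleton) :
    IsPreconnected sᶜ := by
  rcases hs.eq_empty_or_singleton with rfl | ⟨q, rfl⟩
  · exact compl_empty ▸ isPreconnected_univ
  · exact isPreconnected_compl_singleton_addCircle q

lemma linkedIn_compl_singleton_of_isJordanCurve {X : Type} [TopologicalSpace X] {J : Set X}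
    (hJ : IsJordanCurve J) {x y p : X} (hx : x ∈ J) (hy : y ∈ J) (hpx : p ≠ x) (hpy : p ≠ y) :
    LinkedIn {p}ᶜ x y := by
  obtain ⟨e⟩ := hJ
  have hi : Function.Injective fun t => (e t : X) := Subtype.val_injective.comp e.injective
  have hpre := isPreconnected_compl_addCircle
    (subsingleton_singleton.preimage hi : ((fun t => (e t : X)) ⁻¹' {p}).Subsingleton)
  refine ⟨_, ?_, hpre.image (fun t => (e t : X)) (by fun_prop),
    ⟨e.symm ⟨x, hx⟩, ?_, by simp⟩, ⟨e.symm ⟨y, hy⟩, ?_, by simp⟩⟩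
  · rintro _ ⟨t, ht, rfl⟩
    exact ht
  · simpa using hpx.symm
  · simpa using hpy.symm

lemma isJordanCurve_range {X : Type} [TopologicalSpace X] [T2Space X] {h : AddCircle (1 : ℝ) → X}
    (hc : Continuous h) (hi : Function.Injective h) : IsJordanCurve (range h) := by
  have : Fact ((0 : ℝ) < 1) := ⟨one_pos⟩
  exact ⟨(hc.isClosedEmbedding hi).isEmbedding.toHomeomorph⟩

lemma exists_isJordanCurve_complex {z w : ℂ} (hzw : z ≠ w) :
    ∃ h : AddCircle (1 : ℝ) → ℂ, Continuous h ∧ Function.Injective h ∧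
      z ∈ range h ∧ w ∈ range h := by
  let e := AddCircle.homeomorphCircle (one_ne_zero' ℝ)
  have hradius : (z - w) / 2 ≠ 0 := div_ne_zero (sub_ne_zero.mpr hzw) two_ne_zero
  refine ⟨fun t => (z + w) / 2 + (z - w) / 2 * (e t : ℂ), by fun_prop, fun s t hst => ?_,
    ⟨e.symm 1, ?_⟩, ⟨e.symm (-1), ?_⟩⟩
  · exact e.injective (Subtype.ext (mul_left_cancel₀ hradius (add_left_cancel hst)))
  · simp only [e.apply_symm_apply, Circle.coe_one]
    ring
  · simp only [e.apply_symm_apply, Circle.coe_neg, Circle.coe_one]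
    ring

lemma exists_injective_addCircle_S2 (x y : S2) : ∃ h : AddCircle (1 : ℝ) → S2, Continuous h ∧
    Function.Injective h ∧ x ∈ range h ∧ y ∈ range h := by
  have hinfinite : Infinite S2 := by
    obtain ⟨φ, hφ, -⟩ := exists_isOpenEmbedding_range_eq_compl_singleton x
    exact Infinite.of_injective φ hφ.injective
  wlog hxy : x ≠ y generalizing y
  · obtain ⟨y', hy'⟩ := Infinite.exists_notMem_finset ({x} : Finset S2)
    obtain ⟨h, hc, hi, hx, -⟩ := this y' fun h => hy' (by simp [h])
    exact ⟨h, hc, hi, hx, not_not.mp hxy ▸ hx⟩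
  obtain ⟨v, hv⟩ := Infinite.exists_notMem_finset ({x, y} : Finset S2)
  simp only [Finset.mem_insert, Finset.mem_singleton, not_or] at hv
  obtain ⟨φ, hφ, hrange⟩ := exists_isOpenEmbedding_range_eq_compl_singleton v
  obtain ⟨z, rfl⟩ : x ∈ range φ := hrange ▸ Ne.symm hv.1
  obtain ⟨w, rfl⟩ : y ∈ range φ := hrange ▸ Ne.symm hv.2
  obtain ⟨h, hc, hi, hz, hw⟩ := exists_isJordanCurve_complex (ne_of_apply_ne φ hxy)
  refine ⟨φ ∘ h, hφ.continuous.comp hc, hφ.injective.comp hi, ?_, ?_⟩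
  · exact range_comp φ h ▸ mem_image_of_mem φ hz
  · exact range_comp φ h ▸ mem_image_of_mem φ hw

lemma cyclicallyConnected_of_homeomorph_S2 {X : Type} [TopologicalSpace X] [T2Space X] {E : Set X}
    (e : E ≃ₜ S2) : CyclicallyConnected E := by
  intro x hx y hy
  obtain ⟨h, hc, hi, ⟨s, hs⟩, ⟨t, ht⟩⟩ := exists_injective_addCircle_S2 (e ⟨x, hx⟩) (e ⟨y, hy⟩)
  refine ⟨range fun t => (e.symm (h t) : X), range_subset_iff.mpr fun t => (e.symm (h t)).2,
    isJordanCurve_range (by fun_prop) ?_, ⟨s, ?_⟩, ⟨t, ?_⟩⟩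
  · exact Subtype.val_injective.comp (e.symm.injective.comp hi)
  · simp [hs]
  · simp [ht]

end JordanCurve

section ArcConvex

/-- A set containing every arc between two of its points. -/
def IsArcConvex {X : Type*} [TopologicalSpace X] (E : Set X) : Prop :=
  ∀ ⦃S : Set X⦄ ⦃x y : X⦄, IsArc S x y → x ∈ E → y ∈ E → S ⊆ E

variable {X : Type*} [MetricSpace X] {E : Set X}

lemma IsArcConvex.linkedIn_preimage (hE : IsArcConvex E) (hX : IsGeodesicSpace X) {U : Set X}
    (hU : IsOpen U) {u v : E} (h : LinkedIn U (u : X) v) :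
    LinkedIn ((↑) ⁻¹' U : Set E) u v := by
  rcases eq_or_ne u v with rfl | huv
  · exact LinkedIn.refl h.left_mem
  obtain ⟨S, hSU, hS⟩ := hX.exists_isArc_of_linkedIn hU h (Subtype.coe_injective.ne huv)
  refine ⟨((↑) : E → X) ⁻¹' S, preimage_mono hSU, ?_, hS.left_mem, hS.right_mem⟩
  rw [← Topology.IsInducing.subtypeVal.isPreconnected_image, Subtype.image_preimage_coe,
    inter_eq_right.mpr (hE hS u.2 v.2)]
  exact hS.isPreconnected

lemma IsArcConvex.isGeodesicSpace (hE : IsArcConvex E) (hX : IsGeodesicSpace X) :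
    IsGeodesicSpace E := by
  intro x y
  rcases eq_or_ne x y with rfl | hxy
  · exact ⟨fun _ => x, rfl, rfl, by simp⟩
  obtain ⟨f, hf⟩ := hX x y
  have hsub := hE (hf.isArc (Subtype.coe_injective.ne hxy)) x.2 y.2
  let g : Icc (0 : ℝ) 1 → E := fun t => ⟨f t, hsub (mem_image_of_mem f t.2)⟩
  have hcoe : ∀ t ∈ Icc (0 : ℝ) 1, ((IccExtend zero_le_one g t : E) : X) = f t := fun t ht => by
    rw [IccExtend_of_mem _ _ ht]
  refine ⟨IccExtend zero_le_one g, Subtype.ext ?_, Subtype.ext ?_, fun s hs t ht => ?_⟩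
  · rw [hcoe 0 (by simp), hf.1]
  · rw [hcoe 1 (by simp), hf.2.1]
  · rw [Subtype.dist_eq, hcoe s hs, hcoe t ht]
    exact hf.2.2 s hs t ht

lemma IsArcConvex.isJaniszewskiSpace (hE : IsArcConvex E) (hclosed : IsClosed E)
    (hX : IsGeodesicSpace X) (hJ : IsJaniszewskiSpace X) : IsJaniszewskiSpace E := by
  intro K L hK hL hKL u v huvK huvL
  have hemb := hclosed.isClosedEmbedding_subtypeVal
  have himage : ∀ {K : Set E}, LinkedIn Kᶜ u v → LinkedIn ((↑) '' K : Set X)ᶜ (u : X) v :=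
    fun h => (h.image continuous_subtype_val.continuousOn).mono
      (image_compl_subset Subtype.val_injective)
  have hinter : IsPreconnected ((↑) '' K ∩ (↑) '' L : Set X) := by
    rw [← image_inter Subtype.val_injective]
    exact hKL.image _ continuous_subtype_val.continuousOn
  have hK' := hemb.isClosedMap K hK
  have hL' := hemb.isClosedMap L hL
  have hunion := hJ hK' hL' hinter (himage huvK) (himage huvL)
  refine (hE.linkedIn_preimage hX (hK'.union hL').isOpen_compl hunion).mono ?_
  rw [← image_union, preimage_compl, preimage_image_eq _ Subtype.val_injective]

lemma IsArcConvex.isSpherelike (hE : IsArcConvex E) (hclosed : IsClosed E) (hnt : E.Nontrivial)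
    (hX : IsGeodesicSpace X) (hJ : IsJaniszewskiSpace X)
    (hlink : ∀ x ∈ E, ∀ y ∈ E, ∀ p, p ≠ x → p ≠ y → LinkedIn {p}ᶜ x y) : IsSpherelike E := by
  refine ⟨hE.isGeodesicSpace hX, hE.isJaniszewskiSpace hclosed hX hJ,
    fun p => isPreconnected_of_linkedIn fun x hx y hy => ?_, hnt.coe_sort⟩
  have hxy := hlink x x.2 y y.2 p (Subtype.coe_injective.ne (Ne.symm hx))
    (Subtype.coe_injective.ne (Ne.symm hy))
  refine (hE.linkedIn_preimage hX isOpen_compl_singleton hxy).mono ?_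
  rintro w hw rfl
  exact hw rfl

end ArcConvex

section Unseparated

/-- The points which are not separated from `a` by any point. Intersecting two of these sets
produces the maximal cyclic subset through two given points of a geodesic space. -/
def unseparatedFrom {X : Type*} [TopologicalSpace X] (a : X) : Set X :=
  {z | ∀ p, p ≠ z → p ≠ a → LinkedIn {p}ᶜ z a}

lemma isArcConvex_unseparatedFrom {X : Type*} [TopologicalSpace X] (a : X) :
    IsArcConvex (unseparatedFrom a) := by
  intro S x y hS hx hy z hz
  rcases eq_or_ne z x with rfl | hzx
  · exact hx
  rcases eq_or_ne z y with rfl | hzy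
  · exact hy
  obtain ⟨S₁, S₂, hxz, hzy, -, hinter⟩ := hS.exists_split hz hzx hzy
  intro p hpz hpa
  by_cases hp : p ∈ S₁
  · have hp₂ : p ∉ S₂ := fun h => hpz (hinter.subset ⟨hp, h⟩)
    exact (LinkedIn.of_isPreconnected hzy.isPreconnected hzy.left_mem hzy.right_mem).mono
      (subset_compl_singleton_iff.mpr hp₂) |>.trans (hy p (fun h => hp₂ (h ▸ hzy.right_mem)) hpa)
  · exact (LinkedIn.of_isPreconnected hxz.isPreconnected hxz.right_mem hxz.left_mem).mono
      (subset_compl_singleton_iff.mpr hp) |>.trans (hx p (fun h => hp (h ▸ hxz.left_mem)) hpa)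

lemma isClosed_unseparatedFrom {X : Type*} [MetricSpace X] (hX : IsGeodesicSpace X) (a : X) :
    IsClosed (unseparatedFrom a) := by
  refine isClosed_of_closure_subset fun z hz p hpz hpa => ?_
  have hpos : 0 < dist p z := dist_pos.mpr hpz
  obtain ⟨w, hw, hzw⟩ := Metric.mem_closure_iff.mp hz _ hpos
  have hpw : p ≠ w := by
    rintro rfl
    exact hzw.ne (dist_comm _ _)
  have hball : LinkedIn (ball z (dist p z)) z w :=
    .of_isPreconnected (hX.isPreconnected_ball z _) (mem_ball_self hpos) (mem_ball'.mpr hzw)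
  exact (hball.mono (subset_compl_singleton_iff.mpr fun h => (mem_ball.mp h).false)).trans
    (hw p hpw hpa)

variable {X : Type} [MetricSpace X]

lemma subset_unseparatedFrom_of_cyclicallyConnected {T : Set X} (hT : CyclicallyConnected T)
    {a : X} (ha : a ∈ T) : T ⊆ unseparatedFrom a := by
  intro z hz p hpz hpa
  obtain ⟨J, -, hJ, hzJ, haJ⟩ := hT z hz a ha
  exact linkedIn_compl_singleton_of_isJordanCurve hJ hzJ haJ hpz hpa

lemma exists_isSpherelike_superset (hX : IsGeodesicSpace X)
    (hJ : IsJaniszewskiSpace X) {T : Set X} (hnt : T.Nontrivial) (hT : CyclicallyConnected T) :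
    ∃ E : Set X, IsClosed E ∧ IsSpherelike E ∧ T ⊆ E := by
  obtain ⟨a, ha, b, hb, hab⟩ := id hnt
  have hTE : T ⊆ unseparatedFrom a ∩ unseparatedFrom b :=
    subset_inter (subset_unseparatedFrom_of_cyclicallyConnected hT ha)
      (subset_unseparatedFrom_of_cyclicallyConnected hT hb)
  have hclosed := (isClosed_unseparatedFrom hX a).inter (isClosed_unseparatedFrom hX b)
  have hconvex : IsArcConvex (unseparatedFrom a ∩ unseparatedFrom b) := fun S x y hS hx hy =>
    subset_inter (isArcConvex_unseparatedFrom a hS hx.1 hy.1)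
      (isArcConvex_unseparatedFrom b hS hx.2 hy.2)
  refine ⟨_, hclosed, hconvex.isSpherelike hclosed (hnt.mono hTE) hX hJ ?_, hTE⟩
  intro x hx y hy p hpx hpy
  by_cases hpa : p = a
  · have hpb : p ≠ b := hpa ▸ hab
    exact (hx.2 p hpx hpb).trans (hy.2 p hpy hpb).symm
  · exact (hx.1 p hpx hpa).trans (hy.1 p hpy hpa).symm

end Unseparated

/-! ### The Jordan curve theorem and theta curves -/

section SimpleClosedCurve

variable {E : Type*} [TopologicalSpace E] {α β S J : Set E} {a b p q x y : E}

/-- `α ∪ β` is a simple closed curve, cut at `a` and `b` into the arcs `α` and `β`. -/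
structure IsArcLoop (α β : Set E) (a b : E) : Prop where
  left : IsArc α a b
  right : IsArc β a b
  inter_subset : α ∩ β ⊆ {a, b}

/-- A simple closed curve, presented as the union of two arcs. -/
def IsSimpleClosedCurve (J : Set E) : Prop :=
  ∃ a b α β, IsArcLoop α β a b ∧ α ∪ β = J

namespace IsArcLoop

lemma swap (h : IsArcLoop α β a b) : IsArcLoop β α a b :=
  ⟨h.right, h.left, inter_comm α β ▸ h.inter_subset⟩

lemma symm (h : IsArcLoop α β a b) : IsArcLoop α β b a :=
  ⟨h.left.symm, h.right.symm, pair_comm a b ▸ h.inter_subset⟩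

lemma isSimpleClosedCurve (h : IsArcLoop α β a b) : IsSimpleClosedCurve (α ∪ β) :=
  ⟨a, b, α, β, h, rfl⟩

lemma inter_eq (h : IsArcLoop α β a b) : α ∩ β = {a, b} :=
  h.inter_subset.antisymm <| pair_subset ⟨h.left.left_mem, h.right.left_mem⟩
    ⟨h.left.right_mem, h.right.right_mem⟩

lemma exists_rebase_of_mem_left (h : IsArcLoop α β p q) (hx : x ∈ α) (hxp : x ≠ p) :
    ∃ α' β', IsArcLoop α' β' p x ∧ α' ∪ β' = α ∪ β := by
  rcases eq_or_ne x q with rfl | hxq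
  · exact ⟨α, β, h, rfl⟩
  obtain ⟨α₁, α₂, hα₁, hα₂, hunion, hinter⟩ := h.left.exists_split hx hxp hxq
  have hp : p ∉ α₂ := fun hp => hxp (hinter.subset ⟨hα₁.left_mem, hp⟩).symm
  have hq : q ∉ α₁ := fun hq => hxq (hinter.subset ⟨hq, hα₂.right_mem⟩).symm
  refine ⟨α₁, β ∪ α₂, ⟨hα₁, h.right.concat hα₂.symm ?_, ?_⟩, ?_⟩
  · rintro z ⟨hzβ, hzα⟩
    rcases h.inter_subset ⟨hunion.subset (Or.inr hzα), hzβ⟩ with rfl | rfl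
    · exact absurd hzα hp
    · rfl
  · rintro z ⟨hz, hzβ | hzα⟩
    · rcases h.inter_subset ⟨hunion.subset (Or.inl hz), hzβ⟩ with rfl | rfl
      · exact Or.inl rfl
      · exact absurd hz hq
    · exact Or.inr (hinter.subset ⟨hz, hzα⟩)
  · rw [← hunion, union_comm β, union_assoc]

lemma exists_rebase (h : IsArcLoop α β p q) (hx : x ∈ α ∪ β) (hxp : x ≠ p) :
    ∃ α' β', IsArcLoop α' β' p x ∧ α' ∪ β' = α ∪ β := by
  rcases hx with hx | hx
  · exact h.exists_rebase_of_mem_left hx hxp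
  · rw [union_comm α]
    exact h.swap.exists_rebase_of_mem_left hx hxp

end IsArcLoop

namespace IsSimpleClosedCurve

lemma isCompact (h : IsSimpleClosedCurve J) : IsCompact J := by
  obtain ⟨a, b, α, β, h, rfl⟩ := h
  exact h.left.isCompact.union h.right.isCompact

lemma isClosed [T2Space E] (h : IsSimpleClosedCurve J) : IsClosed J := h.isCompact.isClosed

lemma nontrivial (h : IsSimpleClosedCurve J) : J.Nontrivial := by
  obtain ⟨a, b, α, β, h, rfl⟩ := h
  exact ⟨a, Or.inl h.left.left_mem, b, Or.inl h.left.right_mem, h.left.ne⟩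

lemma exists_isArcLoop (h : IsSimpleClosedCurve J) (hx : x ∈ J) (hy : y ∈ J) (hxy : x ≠ y) :
    ∃ α β, IsArcLoop α β x y ∧ α ∪ β = J := by
  obtain ⟨p, q, α, β, h, rfl⟩ := h
  rcases eq_or_ne x p with rfl | hxp
  · exact h.exists_rebase hy hxy.symm
  · obtain ⟨α', β', hpx, hunion⟩ := h.exists_rebase hx hxp
    rw [← hunion] at hy ⊢
    exact hpx.symm.exists_rebase hy hxy.symm

lemma exists_isArc_diff_subset (h : IsSimpleClosedCurve J) (hq : q ∈ J) {U : Set E}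
    (hU : IsOpen U) (hqU : q ∈ U) : ∃ a b γ, IsArc γ a b ∧ γ ⊆ J ∧ q ∉ γ ∧ J \ γ ⊆ U := by
  obtain ⟨b, hb, hbq⟩ := h.nontrivial.exists_ne q
  obtain ⟨α, β, hloop, rfl⟩ := h.exists_isArcLoop hq hb hbq.symm
  obtain ⟨s, α₁, α₂, hα₁, hα₂, rfl, hα, hαU⟩ := hloop.left.exists_split_near hU hqU
  obtain ⟨t, β₁, β₂, hβ₁, hβ₂, rfl, hβ, hβU⟩ := hloop.right.exists_split_near hU hqU
  have hqα : q ∉ α₂ := fun h => hα₁.ne (hα.subset ⟨hα₁.left_mem, h⟩)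
  have hqβ : q ∉ β₂ := fun h => hβ₁.ne (hβ.subset ⟨hβ₁.left_mem, h⟩)
  refine ⟨s, t, α₂ ∪ β₂, hα₂.concat hβ₂.symm ?_,
    union_subset_union subset_union_right subset_union_right, fun h => h.elim hqα hqβ, ?_⟩
  · rintro z ⟨hzα, hzβ⟩
    exact (hloop.inter_subset ⟨Or.inr hzα, Or.inr hzβ⟩).resolve_left fun h => hqα (h ▸ hzα)
  · rintro z ⟨(hz | hz) | (hz | hz), hn⟩
    exacts [hαU hz, absurd (Or.inl hz) hn, hβU hz, absurd (Or.inr hz) hn]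

end IsSimpleClosedCurve

end SimpleClosedCurve

section Face

/-- `D` is a nonempty connected open set with frontier `J`. -/
structure IsFace {E : Type*} [TopologicalSpace E] (D J : Set E) : Prop where
  isOpen : IsOpen D
  isPreconnected : IsPreconnected D
  nonempty : D.Nonempty
  frontier_eq : frontier D = J

/-- `a` can be reached from `D` along an arc whose other points all lie in `D`. -/
def IsAccessible {E : Type*} [TopologicalSpace E] (D : Set E) (a : E) : Prop :=
  ∃ y ∈ D, ∃ R, IsArc R y a ∧ R \ {a} ⊆ D

namespace IsFace

variable {E : Type*} [TopologicalSpace E] {D J α : Set E} {x y : E}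

lemma disjoint (h : IsFace D J) : Disjoint D J := by
  rw [← h.frontier_eq, h.isOpen.frontier_eq]
  exact disjoint_sdiff_right

lemma closure_eq (h : IsFace D J) : closure D = D ∪ J := by
  rw [← h.frontier_eq, closure_eq_self_union_frontier]

lemma mem_of_linkedIn (h : IsFace D J) (hxy : LinkedIn Jᶜ x y) (hx : x ∈ D) : y ∈ D :=
  hxy.mem_of_disjoint_frontier (h.frontier_eq ▸ disjoint_compl_left) hx

lemma isPreconnected_union (h : IsFace D J) (hα : α ⊆ J) : IsPreconnected (D ∪ α) :=
  h.isPreconnected.subset_closure subset_union_left <|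
    h.closure_eq ▸ union_subset_union_right D hα

end IsFace

variable {E : Type*} [MetricSpace E] {D J : Set E} {a b q : E}

lemma IsGeodesicSpace.exists_isArc_of_isAccessible (hE : IsGeodesicSpace E) (hD : IsOpen D)
    (hDc : IsPreconnected D) (ha : IsAccessible D a) (hq : q ∈ D) (haD : a ∉ D) :
    ∃ A, IsArc A q a ∧ A \ {a} ⊆ D := by
  obtain ⟨y, hy, R, hR, hRD⟩ := ha
  rcases eq_or_ne q y with rfl | hqy
  · exact ⟨R, hR, hRD⟩
  · obtain ⟨B, hBD, hB⟩ :=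
      hE.exists_isArc_of_linkedIn hD (LinkedIn.of_isPreconnected hDc hq hy) hqy
    obtain ⟨A, hA, hqa⟩ := hB.exists_join hR fun h => haD (h ▸ hq)
    exact ⟨A, hqa, fun w hw => (hA hw.1).elim (fun h => hBD h) fun h => hRD ⟨h, hw.2⟩⟩

lemma IsGeodesicSpace.exists_crosscut_of_isAccessible (hE : IsGeodesicSpace E) (hD : IsOpen D)
    (hDc : IsPreconnected D) (ha : IsAccessible D a) (hb : IsAccessible D b) (haD : a ∉ D)
    (hab : a ≠ b) : ∃ c, IsArc c a b ∧ c \ {a, b} ⊆ D := by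
  obtain ⟨z, hz, Q, hQ, hQD⟩ := hb
  obtain ⟨B, hB, hBD⟩ := hE.exists_isArc_of_isAccessible hD hDc ha hz haD
  obtain ⟨c, hc, hca⟩ := hB.symm.exists_join hQ hab
  refine ⟨c, hca, fun w hw => ?_⟩
  obtain ⟨hwa, hwb⟩ := not_or.mp hw.2
  exact (hc hw.1).elim (fun h => hBD ⟨h, hwa⟩) fun h => hQD ⟨h, hwb⟩

lemma IsGeodesicSpace.exists_isAccessible_near (hE : IsGeodesicSpace E) (hD : IsOpen D)
    (hq : q ∈ frontier D) {ε : ℝ} (hε : 0 < ε) :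
    ∃ a ∈ ball q ε ∩ frontier D, IsAccessible D a := by
  rw [hD.frontier_eq] at hq ⊢
  obtain ⟨x, hxD, hqx⟩ := Metric.mem_closure_iff.mp hq.1 (ε / 2) (half_pos hε)
  have hxq : x ≠ q := fun h => hq.2 (h ▸ hxD)
  obtain ⟨S, hS, hSa⟩ := hE.exists_isArc_of_dist_le hxq (dist_comm x q ▸ hqx.le)
  obtain ⟨p, R, hRS, hR, hRp⟩ := hSa.exists_first_hit hD.isClosed_compl (not_not.mpr hxD)
    ⟨q, hSa.right_mem, hq.2⟩
  have hRD : R \ {p} ⊆ D := by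
    rintro w ⟨hw, hwp⟩
    by_contra hwD
    exact hwp (hRp.subset ⟨hw, hwD⟩)
  refine ⟨p, ⟨?_, ?_, (hRp.superset (mem_singleton p)).2⟩, x, hxD, R, hR, hRD⟩
  · have hpx := mem_closedBall.mp (hS (hRS hR.right_mem))
    rw [mem_ball]
    linarith [dist_triangle p x q, dist_comm x q]
  · exact closure_mono (fun w hw => hRD ⟨hw.1, fun h => hw.2 (Or.inr h)⟩)
      (hR.subset_closure_diff hR.right_mem)

lemma IsFace.exists_crosscut (hD : IsFace D J) (hE : IsGeodesicSpace E)
    (hJ : IsSimpleClosedCurve J) : ∃ a b c α β,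
      IsArc c a b ∧ c \ {a, b} ⊆ D ∧ IsArcLoop α β a b ∧ α ∪ β = J := by
  obtain ⟨p, hp, q, hq, hpq⟩ := hJ.nontrivial
  have hd : 0 < dist p q / 2 := half_pos (dist_pos.mpr hpq)
  rw [← hD.frontier_eq] at hp hq
  obtain ⟨a, ⟨hap, haJ⟩, ha⟩ := hE.exists_isAccessible_near hD.isOpen hp hd
  obtain ⟨b, ⟨hbq, hbJ⟩, hb⟩ := hE.exists_isAccessible_near hD.isOpen hq hd
  rw [hD.frontier_eq] at haJ hbJ
  have hab : a ≠ b := by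
    rintro rfl
    rw [mem_ball] at hap hbq
    linarith [dist_triangle_left p q a]
  obtain ⟨c, hc, hcD⟩ := hE.exists_crosscut_of_isAccessible hD.isOpen hD.isPreconnected ha hb
    (disjoint_right.mp hD.disjoint haJ) hab
  obtain ⟨α, β, hloop, hunion⟩ := hJ.exists_isArcLoop haJ hbJ hab
  exact ⟨a, b, c, α, β, hc, hcD, hloop, hunion⟩

end Face

section JordanCurveTheorem

variable {E : Type*} [MetricSpace E] {D W J M₁ M₂ α β c : Set E} {a b u v x y : E}

lemma IsJaniszewskiSpace.linkedIn_compl_image_Icc (hE : IsJaniszewskiSpace E) {f : ℝ → E}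
    {r s t : ℝ} (hrs : r ≤ s) (hst : s ≤ t) (hf : ContinuousOn f (Icc r t))
    (hi : InjOn f (Icc r t)) (h₁ : LinkedIn (f '' Icc r s)ᶜ u v)
    (h₂ : LinkedIn (f '' Icc s t)ᶜ u v) : LinkedIn (f '' Icc r t)ᶜ u v := by
  have hleft : Icc r s ⊆ Icc r t := Icc_subset_Icc_right hst
  have hright : Icc s t ⊆ Icc r t := Icc_subset_Icc_left hrs
  have hinter : f '' Icc r s ∩ f '' Icc s t = {f s} := by
    rw [← hi.image_inter hleft hright, Icc_inter_Icc_eq_singleton hrs hst, image_singleton]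
  rw [← Icc_union_Icc_eq_Icc hrs hst, image_union]
  exact hE (isCompact_Icc.image_of_continuousOn (hf.mono hleft)).isClosed
    (isCompact_Icc.image_of_continuousOn (hf.mono hright)).isClosed
    (hinter ▸ isPreconnected_singleton) h₁ h₂

/-- By the Janiszewski property it is enough that short subarcs do not separate, and these are
avoided by a compact set which joins the two points in the complement of a single point. -/
lemma IsSpherelike.isPreconnected_compl_arc [CompactSpace E] (hE : IsSpherelike E)
    (h : IsArc α a b) : IsPreconnected αᶜ := by
  refine isPreconnected_of_linkedIn fun u hu v hv => ?_
  obtain ⟨f, hf, hi, -, -, rfl⟩ := h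
  have hlink : ∀ t : Icc (0 : ℝ) 1, LinkedIn {f t}ᶜ u v := fun t =>
    .of_isPreconnected (hE.isPreconnected_compl_singleton (f t))
      (fun h => hu ⟨t, t.2, h.symm⟩) (fun h => hv ⟨t, t.2, h.symm⟩)
  choose C hCsub hCcompact hCconn hCu hCv using fun t =>
    hE.isGeodesicSpace.exists_isCompact_of_linkedIn isClosed_singleton.isOpen_compl (hlink t)
  have hcont : Continuous fun t : Icc (0 : ℝ) 1 => f t :=
    continuousOn_iff_continuous_domRestrict.mp hf
  obtain ⟨t, ht0, hmono, ⟨n, hn⟩, hcover⟩ := exists_monotone_Icc_subset_open_cover_Icc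
    (zero_le_one' ℝ) (c := fun i => (fun t : Icc (0 : ℝ) 1 => f t) ⁻¹' (C i)ᶜ)
    (fun i => (hCcompact i).isClosed.isOpen_compl.preimage hcont)
    (fun i _ => mem_iUnion.mpr ⟨i, fun h => hCsub i h rfl⟩)
  have hind : ∀ k, LinkedIn (f '' Icc 0 (t k))ᶜ u v := by
    intro k
    induction k with
    | zero =>
      rw [ht0, Icc_self, image_singleton]
      exact hlink ⟨0, by simp⟩
    | succ k ih =>
      have hsub : Icc (0 : ℝ) (t (k + 1)) ⊆ Icc 0 1 := Icc_subset_Icc_right (t (k + 1)).2.2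
      refine hE.isJaniszewskiSpace.linkedIn_compl_image_Icc (t k).2.1 (hmono k.le_succ)
        (hf.mono hsub) (hi.mono hsub) ih ?_
      obtain ⟨i, hti⟩ := hcover k
      refine ⟨C i, ?_, hCconn i, hCu i, hCv i⟩
      rintro w hw ⟨s, hs, rfl⟩
      exact hti (show (⟨s, (t k).2.1.trans hs.1, hs.2.trans (t (k + 1)).2.2⟩ : Icc (0 : ℝ) 1) ∈ _
        from hs) hw
  exact hn n le_rfl ▸ hind n

lemma IsSpherelike.linkedIn_compl_union_of_isPreconnected_compl [CompactSpace E]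
    (hE : IsSpherelike E) (hL : IsArcLoop α β a b) (hJ : IsPreconnected (α ∪ β)ᶜ)
    (hM₁ : IsClosed M₁) (hM₂ : IsClosed M₂) (hα : Disjoint M₁ α) (hβ : Disjoint M₂ β) :
    LinkedIn (M₁ ∪ M₂)ᶜ a b := by
  have hinter : M₁ ∩ M₂ ⊆ (α ∪ β)ᶜ := fun x hx => not_or.mpr
    ⟨disjoint_left.mp hα hx.1, disjoint_left.mp hβ hx.2⟩
  obtain ⟨C, hCJ, hCcompact, hCconn, hMC⟩ :=
    hE.isGeodesicSpace.exists_isCompact_isPreconnected_superset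
      hL.isSimpleClosedCurve.isClosed.isOpen_compl hJ (hM₁.inter hM₂).isCompact hinter
  rw [compl_union] at hCJ
  have hcap : (M₁ ∪ C) ∩ (M₂ ∪ C) = C := by
    rw [← inter_union_distrib_right, union_eq_right]
    exact hMC
  have hlink₁ : LinkedIn (M₁ ∪ C)ᶜ a b := ⟨α, subset_compl_iff_disjoint_left.mpr
    (hα.union_left (subset_compl_iff_disjoint_right.mp (hCJ.trans inter_subset_left))),
    hL.left.isPreconnected, hL.left.left_mem, hL.left.right_mem⟩
  have hlink₂ : LinkedIn (M₂ ∪ C)ᶜ a b := ⟨β, subset_compl_iff_disjoint_left.mpr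
    (hβ.union_left (subset_compl_iff_disjoint_right.mp (hCJ.trans inter_subset_right))),
    hL.right.isPreconnected, hL.right.left_mem, hL.right.right_mem⟩
  exact (hE.isJaniszewskiSpace (hM₁.union hCcompact.isClosed) (hM₂.union hCcompact.isClosed)
    (hcap.symm ▸ hCconn) hlink₁ hlink₂).mono
    (compl_subset_compl.mpr (union_subset_union subset_union_left subset_union_left))

/-- If the complement were connected, the points of a sphere around `a` that are nearer to `β` and
those that are nearer to `α` could together not separate `a` from `b`. -/
lemma IsSpherelike.not_isPreconnected_compl [CompactSpace E] (hE : IsSpherelike E)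
    (h : IsSimpleClosedCurve J) : ¬ IsPreconnected Jᶜ := by
  intro hJ
  obtain ⟨a, b, α, β, hL, rfl⟩ := h
  set r := dist b a / 2
  have hr : 0 < r := half_pos (dist_pos.mpr hL.left.ne.symm)
  have hrb : r < dist b a := half_lt_self (dist_pos.mpr hL.left.ne.symm)
  have hnotMem : ∀ x ∈ sphere a r, x ∈ α → x ∉ β := by
    intro x hx hxα hxβ
    rcases hL.inter_subset ⟨hxα, hxβ⟩ with rfl | rfl
    · exact hr.ne ((dist_self x).symm.trans hx)
    · exact hrb.ne' hx
  have hdisj : ∀ {S T : Set E} {s t : E}, IsArc T s t → (∀ x ∈ sphere a r, x ∈ S → x ∉ T) →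
      Disjoint (sphere a r ∩ {x | infDist x T ≤ infDist x S}) S := by
    refine fun hT h => disjoint_left.mpr fun x hx hxS => h x hx.1 hxS ?_
    rw [hT.isClosed.mem_iff_infDist_zero ⟨_, hT.left_mem⟩]
    exact le_antisymm (hx.2.trans (infDist_zero_of_mem hxS).le) infDist_nonneg
  have hclosed : ∀ S T : Set E, IsClosed (sphere a r ∩ {x | infDist x T ≤ infDist x S}) :=
    fun S T => isClosed_sphere.inter
      (isClosed_le (continuous_infDist_pt _) (continuous_infDist_pt _))
  obtain ⟨P, hPs, hP, haP, hbP⟩ := hE.linkedIn_compl_union_of_isPreconnected_compl hL hJ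
    (hclosed α β) (hclosed β α) (hdisj hL.right hnotMem)
    (hdisj hL.left fun x hx hxβ hxα => hnotMem x hx hxα hxβ)
  obtain ⟨x, hxP, hx⟩ := hP.intermediate_value haP hbP (f := fun x => dist x a) (by fun_prop)
    (show r ∈ Icc _ _ from ⟨(dist_self a).trans_le hr.le, hrb.le⟩)
  exact hPs hxP ((le_total (infDist x β) (infDist x α)).imp (⟨hx, ·⟩) (⟨hx, ·⟩))

lemma IsSpherelike.isFace_connectedComponentIn [CompactSpace E] (hE : IsSpherelike E)
    (h : IsSimpleClosedCurve J) (hx : x ∉ J) : IsFace (connectedComponentIn Jᶜ x) J := by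
  have := hE.isGeodesicSpace.locallyConnectedSpace
  have hsub := frontier_connectedComponentIn_compl_subset h.isClosed x
  refine ⟨h.isClosed.isOpen_compl.connectedComponentIn, isPreconnected_connectedComponentIn,
    ⟨x, mem_connectedComponentIn hx⟩, hsub.antisymm fun q hq => ?_⟩
  by_contra hqf
  obtain ⟨a, b, γ, hγ, hγJ, hqγ, hJγ⟩ :=
    h.exists_isArc_diff_subset hq isClosed_frontier.isOpen_compl hqf
  have hdisj : Disjoint γᶜ (frontier (connectedComponentIn Jᶜ x)) :=
    disjoint_left.mpr fun z hz hzf => hJγ ⟨hsub hzf, hz⟩ hzf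
  have hγc := subset_of_disjoint_frontier (hE.isPreconnected_compl_arc hγ) hdisj
    ⟨x, fun h => hx (hγJ h), mem_connectedComponentIn hx⟩
  exact connectedComponentIn_subset _ _ (hγc hqγ) hq

lemma IsFace.crosscut_inter_subset (hD : IsFace D J) (hcD : c \ {a, b} ⊆ D) :
    c ∩ J ⊆ {a, b} := by
  rintro z ⟨hzc, hzJ⟩
  by_contra hz
  exact disjoint_left.mp hD.disjoint (hcD ⟨hzc, hz⟩) hzJ

lemma IsFace.subset_compl_union_crosscut (hD : IsFace D (α ∪ β)) (hL : IsArcLoop α β a b)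
    (hcD : c \ {a, b} ⊆ D) (hW : IsFace W (α ∪ β)) (hWD : Disjoint W D) :
    W ∪ β \ {a, b} ⊆ (α ∪ c)ᶜ := by
  have hab : ({a, b} : Set E) ⊆ α ∪ β := hL.inter_eq ▸ inter_subset_left.trans subset_union_left
  rintro z (hzW | hzβ) (hzα | hzc)
  · exact disjoint_left.mp hW.disjoint hzW (Or.inl hzα)
  · by_cases hzab : z ∈ ({a, b} : Set E)
    · exact disjoint_left.mp hW.disjoint hzW (hab hzab)
    · exact disjoint_left.mp hWD hzW (hcD ⟨hzc, hzab⟩)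
  · exact hzβ.2 (hL.inter_subset ⟨hzα, hzβ.1⟩)
  · exact hzβ.2 (hD.crosscut_inter_subset hcD ⟨hzc, Or.inr hzβ.1⟩)

lemma IsArcLoop.linkedIn_compl_of_crosscut (hL : IsArcLoop α β a b) (hE : IsSpherelike E)
    (hc : IsArc c a b) (hα : LinkedIn (α ∪ c)ᶜ x y) (hβ : LinkedIn (β ∪ c)ᶜ x y) :
    LinkedIn (α ∪ β)ᶜ x y := by
  have hcap : (α ∪ c) ∩ (β ∪ c) = c := by
    rw [← inter_union_distrib_right, union_eq_right, hL.inter_eq]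
    exact pair_subset hc.left_mem hc.right_mem
  exact (hE.isJaniszewskiSpace (hL.left.isClosed.union hc.isClosed)
    (hL.right.isClosed.union hc.isClosed) (hcap.symm ▸ hc.isPreconnected) hα hβ).mono
    (compl_subset_compl.mpr (union_subset_union subset_union_left subset_union_left))

lemma IsFace.linkedIn_compl_of_notMem [CompactSpace E] (hD : IsFace D J)
    (hE : IsSpherelike E) (hJ : IsSimpleClosedCurve J) (hx : x ∉ D ∪ J) (hy : y ∉ D ∪ J) :
    LinkedIn Jᶜ x y := by
  obtain ⟨a, b, c, α, β, hc, hcD, hL, rfl⟩ := hD.exists_crosscut hE.isGeodesicSpace hJ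
  have hside : ∀ α' β' : Set E, IsArcLoop α' β' a b → IsFace D (α' ∪ β') → x ∉ D ∪ (α' ∪ β') →
      y ∉ D ∪ (α' ∪ β') → LinkedIn (α' ∪ c)ᶜ x y := by
    intro α' β' hL' hD' hx hy
    obtain ⟨m, hm⟩ := hL'.right.nonempty_diff
    have hlink : ∀ z, z ∉ D ∪ (α' ∪ β') → LinkedIn (α' ∪ c)ᶜ z m := by
      intro z hz
      obtain ⟨hzD, hzJ⟩ := not_or.mp hz
      have hW := hE.isFace_connectedComponentIn hL'.isSimpleClosedCurve hzJ
      have hWD : Disjoint (connectedComponentIn (α' ∪ β')ᶜ z) D := disjoint_left.mpr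
        fun w hw hwD => hzD
          (hD'.mem_of_linkedIn (linkedIn_iff_mem_connectedComponentIn.mpr hw).symm hwD)
      exact ⟨_, hD'.subset_compl_union_crosscut hL' hcD hW hWD,
        hW.isPreconnected_union (sdiff_subset.trans subset_union_right),
        Or.inl (mem_connectedComponentIn hzJ), Or.inr hm⟩
    exact (hlink x hx).trans (hlink y hy).symm
  refine hL.linkedIn_compl_of_crosscut hE hc (hside α β hL hD hx hy) ?_
  rw [union_comm α β] at hD hx hy
  exact hside β α hL.swap hD hx hy

lemma IsFace.isFace_exterior [CompactSpace E] (hD : IsFace D J) (hE : IsSpherelike E)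
    (hJ : IsSimpleClosedCurve J) : IsFace (D ∪ J)ᶜ J := by
  obtain ⟨x, hx⟩ : ((D ∪ J)ᶜ).Nonempty := by
    by_contra hempty
    rw [not_nonempty_iff_eq_empty, compl_empty_iff] at hempty
    have hJD : Jᶜ = D := (isCompl_iff.mpr ⟨hD.disjoint, codisjoint_iff.mpr hempty⟩).symm.compl_eq
    exact hE.not_isPreconnected_compl hJ (hJD ▸ hD.isPreconnected)
  have hcomponent : connectedComponentIn Jᶜ x = (D ∪ J)ᶜ := by
    refine Subset.antisymm (fun z hz => ?_) fun z hz =>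
      linkedIn_iff_mem_connectedComponentIn.mp (hD.linkedIn_compl_of_notMem hE hJ hx hz)
    rintro (hzD | hzJ)
    · exact hx (Or.inl
        (hD.mem_of_linkedIn (linkedIn_iff_mem_connectedComponentIn.mpr hz).symm hzD))
    · exact connectedComponentIn_subset _ _ hz hzJ
  exact hcomponent ▸ hE.isFace_connectedComponentIn hJ fun h => hx (Or.inr h)

end JordanCurveTheorem

section Theta

variable {E : Type*} [MetricSpace E] [CompactSpace E] {D J α β c : Set E} {a b x y : E}

lemma IsFace.exists_isFace_union_crosscut (hD : IsFace D (α ∪ β)) (hE : IsSpherelike E)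
    (hL : IsArcLoop α β a b) (hc : IsArc c a b) (hcD : c \ {a, b} ⊆ D)
    (hy : y ∈ (D ∪ (α ∪ β))ᶜ) : ∃ D₁, IsFace D₁ (α ∪ c) ∧ D₁ ⊆ D \ c ∧
      ∀ x ∈ D \ c, x ∉ D₁ → LinkedIn (α ∪ c)ᶜ x y := by
  have hloop : IsArcLoop α c a b := ⟨hL.left, hc, fun z hz =>
    hD.crosscut_inter_subset hcD ⟨hz.2, Or.inl hz.1⟩⟩
  have hab : ({a, b} : Set E) ⊆ α ∪ c :=
    hloop.inter_eq ▸ inter_subset_left.trans subset_union_left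
  have hX := hD.isFace_exterior hE hL.isSimpleClosedCurve
  have hcompl := hD.subset_compl_union_crosscut hL hcD hX
    (disjoint_compl_left.mono_right subset_union_left)
  have hW := hE.isFace_connectedComponentIn hloop.isSimpleClosedCurve (hcompl (Or.inl hy))
  have hsub : (D ∪ (α ∪ β))ᶜ ∪ β \ {a, b} ⊆ connectedComponentIn (α ∪ c)ᶜ y :=
    (hX.isPreconnected_union
      (sdiff_subset.trans subset_union_right)).subset_connectedComponentIn (Or.inl hy) hcompl
  refine ⟨_, hW.isFace_exterior hE hloop.isSimpleClosedCurve, fun z hz => ?_, fun x hx hx' => ?_⟩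
  · obtain ⟨hzW, hzαc⟩ := not_or.mp hz
    obtain ⟨hzα, hzc⟩ := not_or.mp hzαc
    have hzβ : z ∉ β := fun h => hzW (hsub (Or.inr ⟨h, fun h => hzαc (hab h)⟩))
    by_contra hzD
    exact hzW (hsub (Or.inl (not_or.mpr ⟨fun h => hzD ⟨h, hzc⟩, not_or.mpr ⟨hzα, hzβ⟩⟩)))
  · rcases not_not.mp hx' with h | h | h
    · exact (linkedIn_iff_mem_connectedComponentIn.mpr h).symm
    · exact absurd (Or.inl h) (disjoint_left.mp hD.disjoint hx.1)
    · exact absurd h hx.2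

lemma IsFace.exists_isFace_of_crosscut (hD : IsFace D (α ∪ β)) (hE : IsSpherelike E)
    (hL : IsArcLoop α β a b) (hc : IsArc c a b) (hcD : c \ {a, b} ⊆ D) :
    ∃ D₁ D₂, Disjoint D₁ D₂ ∧ D₁ ∪ D₂ = D \ c ∧ IsFace D₁ (α ∪ c) ∧ IsFace D₂ (β ∪ c) := by
  obtain ⟨y, hy⟩ := (hD.isFace_exterior hE hL.isSimpleClosedCurve).nonempty
  obtain ⟨D₁, hD₁, hsub₁, hlink₁⟩ := hD.exists_isFace_union_crosscut hE hL hc hcD hy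
  obtain ⟨D₂, hD₂, hsub₂, hlink₂⟩ :=
    (union_comm α β ▸ hD).exists_isFace_union_crosscut hE hL.swap hc hcD (union_comm α β ▸ hy)
  have hnotMem : ∀ {D'}, D' ⊆ D \ c → Disjoint D' (α ∪ β ∪ c) := fun h =>
    ((hD.disjoint.mono_left (h.trans sdiff_subset))).union_right
      (disjoint_sdiff_left.mono_left h)
  refine ⟨D₁, D₂, disjoint_iff_inter_eq_empty.mpr ?_,
    (union_subset hsub₁ hsub₂).antisymm fun x hx => ?_, hD₁, hD₂⟩
  · by_contra hmeet
    have hsub : D₁ ⊆ D₂ := subset_of_disjoint_frontier hD₁.isPreconnected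
      ((hnotMem hsub₁).mono_right (hD₂.frontier_eq ▸ union_subset_union_left c subset_union_right))
      (nonempty_iff_ne_empty.mpr hmeet)
    obtain ⟨m, hmα, hmab⟩ := hL.left.nonempty_diff
    have hm : m ∈ closure D₂ := closure_mono hsub (hD₁.closure_eq ▸ Or.inr (Or.inl hmα))
    rw [hD₂.closure_eq] at hm
    rcases hm with h | h | h
    · exact disjoint_left.mp (hnotMem hsub₂) h (Or.inl (Or.inl hmα))
    · exact hmab (hL.inter_subset ⟨hmα, h⟩)
    · exact hmab (hD.crosscut_inter_subset hcD ⟨h, Or.inl hmα⟩)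
  · by_contra hx'
    obtain ⟨hx₁, hx₂⟩ := not_or.mp hx'
    have hxy := hL.linkedIn_compl_of_crosscut hE hc (hlink₁ x hx hx₁) (hlink₂ x hx hx₂)
    exact hy (Or.inl (hD.mem_of_linkedIn hxy hx.1))

end Theta

/-! ### Accessibility and crosscuts -/

section RayClosure

variable {E : Type*} [TopologicalSpace E] {Q : ℕ → Set E} {p : ℕ → E} {a : E}

lemma bijOn_div_one_sub : BijOn (fun t : ℝ => t / (1 - t)) (Ico 0 1) (Ici 0) := by
  refine InvOn.bijOn (f' := fun s => s / (1 + s)) ⟨fun t ht => ?_, fun s (hs : 0 ≤ s) => ?_⟩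
    (fun t ht => div_nonneg ht.1 (sub_nonneg.mpr ht.2.le)) fun s (hs : 0 ≤ s) => ⟨by positivity, ?_⟩
  · have := (sub_pos.mpr ht.2).ne'
    simp only
    field_simp
    ring
  · have : 1 + s ≠ 0 := by positivity
    simp only
    field_simp
    ring
  · rw [div_lt_one (by positivity)]
    linarith

lemma tendsto_div_one_sub : Tendsto (fun t : ℝ => t / (1 - t)) (nhdsWithin 1 (Iio 1)) atTop := by
  have hsub : Tendsto (fun t : ℝ => 1 - t) (nhdsWithin 1 (Iio 1)) (nhdsWithin 0 (Ioi 0)) :=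
    tendsto_nhdsWithin_iff.mpr ⟨tendsto_nhdsWithin_of_tendsto_nhds
      ((continuous_const.sub continuous_id).tendsto' _ _ (sub_self 1)),
      eventually_mem_nhdsWithin.mono fun t (ht : t < 1) => mem_Ioi.mpr (sub_pos.mpr ht)⟩
  exact (tendsto_nhdsWithin_of_tendsto_nhds tendsto_id).pos_mul_atTop one_pos
    (tendsto_inv_nhdsGT_zero.comp hsub)

lemma isArc_insert_image_Ici {G : ℝ → E} (hG : ContinuousOn G (Ici 0)) (hi : InjOn G (Ici 0))
    (ha : a ∉ G '' Ici 0) (hlim : Tendsto G atTop (nhds a)) :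
    IsArc (insert a (G '' Ici 0)) (G 0) a := by
  have hφ := bijOn_div_one_sub
  have hIco : Icc (0 : ℝ) 1 \ {1} = Ico 0 1 := Icc_sdiff_right
  have himage : (fun t : ℝ => G (t / (1 - t))) '' Ico 0 1 = G '' Ici 0 := by
    rw [← image_image, hφ.image_eq]
  have hupdate : EqOn (Function.update (fun t : ℝ => G (t / (1 - t))) 1 a)
      (fun t : ℝ => G (t / (1 - t))) (Ico 0 1) := fun t ht => Function.update_of_ne ht.2.ne _ _
  refine ⟨Function.update (fun t : ℝ => G (t / (1 - t))) 1 a,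
    continuousOn_update_iff.mpr ⟨?_, fun _ => ?_⟩, ?_, by simp, by simp, ?_⟩
  · rw [hIco]
    exact hG.comp (continuousOn_id.div (by fun_prop) fun t ht => (sub_pos.mpr ht.2).ne') hφ.mapsTo
  · exact hlim.comp (tendsto_div_one_sub.mono_left
      (nhdsWithin_mono _ (hIco ▸ fun t ht => ht.2)))
  · rw [← Ico_insert_right zero_le_one, injOn_insert right_notMem_Ico, hupdate.image_eq, himage,
      Function.update_self]
    exact ⟨(hi.comp hφ.injOn hφ.mapsTo).congr hupdate.symm, ha⟩
  · rw [← Ico_insert_right zero_le_one, image_insert_eq, hupdate.image_eq, himage,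
      Function.update_self]

lemma exists_ray_of_isArc_chain (hQ : ∀ k, IsArc (Q k) (p k) (p (k + 1)))
    (hnext : ∀ k, Q k ∩ Q (k + 1) ⊆ {p (k + 1)})
    (hfar : ∀ k j, k + 1 < j → Disjoint (Q k) (Q j)) :
    ∃ G : ℝ → E, ContinuousOn G (Ici 0) ∧ InjOn G (Ici 0) ∧ G 0 = p 0 ∧
      (∀ k : ℕ, G '' Icc k (k + 1) = Q k) := by
  choose q hqc hqi hq₀ hq₁ hqQ using fun k => (hQ k).exists_image_Icc (lt_add_one (k : ℝ))
  have hfloor : ∀ {s : ℝ}, 0 ≤ s → s ∈ Icc (⌊s⌋₊ : ℝ) (⌊s⌋₊ + 1) := fun hs =>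
    ⟨Nat.floor_le hs, (Nat.lt_floor_add_one _).le⟩
  have hGq : ∀ n : ℕ, EqOn (fun s => q ⌊s⌋₊ s) (q n) (Icc n (n + 1)) := by
    intro n s hs
    rcases hs.2.lt_or_eq with hlt | rfl
    · simp only [(Nat.floor_eq_iff (n.cast_nonneg.trans hs.1)).mpr ⟨hs.1, hlt⟩]
    · have hsucc : ⌊(n : ℝ) + 1⌋₊ = n + 1 := by exact_mod_cast Nat.floor_natCast (n + 1)
      simp only [hsucc, hq₁]
      exact_mod_cast hq₀ (n + 1)
  have hcover : Ici (0 : ℝ) ⊆ ⋃ n : ℕ, Icc (n : ℝ) (n + 1) := fun s hs =>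
    mem_iUnion.mpr ⟨_, hfloor hs⟩
  have hfinite : LocallyFinite fun n : ℕ => Icc (n : ℝ) (n + 1) := fun x =>
    ⟨Iio (x + 1), Iio_mem_nhds (lt_add_one x), (finite_Iic ⌈x + 1⌉₊).subset
      fun n ⟨s, hs, hsx⟩ => Nat.cast_le.mp ((hs.1.trans hsx.le).trans (Nat.le_ceil _))⟩
  have hmem : ∀ {s : ℝ}, 0 ≤ s → q ⌊s⌋₊ s ∈ Q ⌊s⌋₊ := fun hs =>
    hqQ _ ▸ mem_image_of_mem _ (hfloor hs)
  have hne : ∀ {s t : ℝ}, 0 ≤ s → 0 ≤ t → ⌊s⌋₊ < ⌊t⌋₊ → q ⌊s⌋₊ s ≠ q ⌊t⌋₊ t := by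
    intro s t hs ht hst heq
    rcases (Nat.succ_le_of_lt hst).lt_or_eq with hlt | hsucc
    · exact disjoint_left.mp (hfar _ _ hlt) (hmem hs) (heq ▸ hmem ht)
    · have hp : q ⌊s⌋₊ s = p (⌊s⌋₊ + 1) :=
        hnext _ ⟨hmem hs, heq ▸ (hsucc ▸ hmem ht : q ⌊t⌋₊ t ∈ Q (⌊s⌋₊ + 1))⟩
      exact (Nat.lt_floor_add_one s).ne
        (hqi _ (hfloor hs) (right_mem_Icc.mpr (lt_add_one _).le) (hp.trans (hq₁ _).symm))
  refine ⟨fun s => q ⌊s⌋₊ s, ?_, fun s hs t ht heq => ?_, by simpa using hq₀ 0, fun n => ?_⟩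
  · exact (hfinite.continuousOn_iUnion (fun _ => isClosed_Icc)
      fun n => (hqc n).congr (hGq n)).mono hcover
  · rcases lt_trichotomy ⌊s⌋₊ ⌊t⌋₊ with hlt | hst | hgt
    · exact absurd heq (hne hs ht hlt)
    · exact hqi _ (hst ▸ hfloor hs) (hfloor ht) (by simpa only [hst] using heq)
    · exact absurd heq.symm (hne ht hs hgt)
  · rw [(hGq n).image_eq, hqQ]

lemma isArc_insert_iUnion (hQ : ∀ k, IsArc (Q k) (p k) (p (k + 1)))
    (hnext : ∀ k, Q k ∩ Q (k + 1) ⊆ {p (k + 1)}) (hfar : ∀ k j, k + 1 < j → Disjoint (Q k) (Q j))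
    (ha : ∀ k, a ∉ Q k) (hlim : Tendsto Q atTop (nhds a).smallSets) :
    IsArc (insert a (⋃ k, Q k)) (p 0) a := by
  obtain ⟨G, hG, hi, hG₀, hGQ⟩ := exists_ray_of_isArc_chain hQ hnext hfar
  have hmem : ∀ {s : ℝ}, 0 ≤ s → G s ∈ Q ⌊s⌋₊ := fun {s} hs => hGQ ⌊s⌋₊ ▸
    mem_image_of_mem G ⟨Nat.floor_le hs, (Nat.lt_floor_add_one s).le⟩
  have himage : G '' Ici 0 = ⋃ k, Q k := by
    refine Subset.antisymm (image_subset_iff.mpr fun s hs => mem_iUnion.mpr ⟨_, hmem hs⟩)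
      (iUnion_subset fun k => hGQ k ▸ image_mono fun s hs => k.cast_nonneg.trans hs.1)
  rw [← himage, ← hG₀]
  refine isArc_insert_image_Ici hG hi (himage ▸ by simpa using ha)
    (tendsto_iff_forall_eventually_mem.mpr fun U hU => ?_)
  filter_upwards [tendsto_nat_floor_atTop.eventually (tendsto_smallSets_iff.mp hlim U hU),
    eventually_ge_atTop (0 : ℝ)] with s hsU hs using hsU (hmem hs)

end RayClosure

section Accessibility

variable {E : Type*} [TopologicalSpace E] {A : ℕ → Set E} {D T : Set E} {y : ℕ → E}
  {a p : E} {k m : ℕ}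

lemma exists_last_inter_nonempty (hA : Tendsto A atTop (nhds a).smallSets) (hT : IsClosed T)
    (ha : a ∉ T) (hm : (A m ∩ T).Nonempty) :
    ∃ n ≥ m, (A n ∩ T).Nonempty ∧ ∀ j > n, Disjoint (A j) T := by
  obtain ⟨N, hN⟩ := eventually_atTop.mp
    (tendsto_smallSets_iff.mp hA Tᶜ (hT.isOpen_compl.mem_nhds ha))
  have hbdd : BddAbove {n | (A n ∩ T).Nonempty} := by
    refine ⟨N, fun n hn => ?_⟩
    by_contra hNn
    obtain ⟨z, hzA, hzT⟩ := hn
    exact hN n (not_le.mp hNn).le hzA hzT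
  refine ⟨_, le_csSup hbdd hm, Nat.sSup_mem ⟨m, hm⟩ hbdd, fun j hj => ?_⟩
  exact disjoint_iff_inter_eq_empty.mpr
    (not_nonempty_iff_eq_empty.mp fun h => (le_csSup hbdd h).not_gt hj)

lemma exists_next_subarc [T2Space E] (hA : ∀ k, IsArc (A k) (y k) (y (k + 1)))
    (ha : ∀ k, a ∉ A k) (hlim : Tendsto A atTop (nhds a).smallSets) (hp : p ∈ A k)
    (hpj : ∀ j > k, p ∉ A j) :
    ∃ m q Q, k < m ∧ IsArc Q p q ∧ Q ⊆ A k ∧ Q ∩ A m = {q} ∧ ∀ j > m, Disjoint Q (A j) := by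
  have hpy : p ≠ y (k + 1) := fun h => hpj (k + 1) k.lt_succ_self (h ▸ (hA (k + 1)).left_mem)
  obtain ⟨T, hTA, hT⟩ := (hA k).exists_subset_isArc hp (hA k).right_mem hpy
  obtain ⟨m, hm, hmT, hmj⟩ := exists_last_inter_nonempty hlim hT.isClosed (fun h => ha k (hTA h))
    (m := k + 1) ⟨y (k + 1), (hA _).left_mem, hT.right_mem⟩
  obtain ⟨q, Q, hQT, hQ, hQq⟩ := hT.exists_first_hit (hA m).isClosed (hpj m hm)
    (inter_comm _ _ ▸ hmT)
  exact ⟨m, q, Q, hm, hQ, hQT.trans hTA, hQq, fun j hj => (hmj j hj).symm.mono_left hQT⟩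

/-- A chain of arcs that shrinks to `a` may overlap itself. Leaving each arc at the point where it
first meets the last later arc that it can reach gives a chain of arcs without overlaps. -/
lemma isAccessible_of_isArc_chain [T2Space E] (haD : a ∉ D)
    (hA : ∀ k, IsArc (A k) (y k) (y (k + 1))) (hAD : ∀ k, A k ⊆ D)
    (hlim : Tendsto A atTop (nhds a).smallSets) : IsAccessible D a := by
  have haA : ∀ k, a ∉ A k := fun k h => haD (hAD k h)
  choose! next q Q hlt hQ hQA hQq hQj using fun (k : ℕ) (p : E) (h : p ∈ A k ∧ ∀ j > k, p ∉ A j) =>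
    exists_next_subarc hA haA hlim h.1 h.2
  obtain ⟨m, -, hm, hmj⟩ := exists_last_inter_nonempty hlim isClosed_singleton
    (fun h => haA 0 (h ▸ (hA 0).left_mem)) (m := 0) ⟨y 0, (hA 0).left_mem, rfl⟩
  let s : ℕ → ℕ × E := fun n => (fun x => (next x.1 x.2, q x.1 x.2))^[n] (m, y 0)
  have hs : ∀ n, s (n + 1) = (next (s n).1 (s n).2, q (s n).1 (s n).2) :=
    fun n => Function.iterate_succ_apply' _ _ _
  have hlast : ∀ n, (s n).2 ∈ A (s n).1 ∧ ∀ j > (s n).1, (s n).2 ∉ A j := by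
    intro n
    induction n with
    | zero =>
      exact ⟨inter_singleton_nonempty.mp hm, fun j hj => disjoint_singleton_right.mp (hmj j hj)⟩
    | succ n ih =>
      rw [hs]
      exact ⟨((hQq _ _ ih).symm.subset rfl).2, fun j hj =>
        disjoint_left.mp (hQj _ _ ih j hj) (hQ _ _ ih).right_mem⟩
  have hmono : StrictMono fun n => (s n).1 :=
    strictMono_nat_of_lt_succ fun n => by simp only [hs]; exact hlt _ _ (hlast n)
  have hsub : ∀ n, Q (s n).1 (s n).2 ⊆ A (s n).1 := fun n => hQA _ _ (hlast n)
  refine ⟨_, hAD _ (hlast 0).1, _, isArc_insert_iUnion (Q := fun n => Q (s n).1 (s n).2)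
    (p := fun n => (s n).2) (a := a) (fun n => ?_) (fun n => ?_) (fun n j hj => ?_)
    (fun n h => haA _ (hsub n h)) ?_, ?_⟩
  · simpa only [hs] using hQ _ _ (hlast n)
  · have hsucc := hQq _ _ (hlast n)
    refine (inter_subset_inter_right _ (hsub (n + 1))).trans ?_
    simp only [hs, hsucc, subset_rfl]
  · refine (hQj _ _ (hlast n) (s j).1 ?_).mono_right (hsub j)
    simpa only [hs] using hmono hj
  · exact tendsto_smallSets_iff.mpr fun U hU => (hmono.tendsto_atTop.eventually
      (tendsto_smallSets_iff.mp hlim U hU)).mono fun n => (hsub n).trans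
  · rintro z ⟨rfl | hz, hza⟩
    · exact absurd rfl hza
    · obtain ⟨n, hn⟩ := mem_iUnion.mp hz
      exact hAD _ (hsub n hn)

end Accessibility

section Crosscuts

variable {E : Type*} [MetricSpace E] {D J : Set E} {a b : E}

/-- A geodesic `S₁ ∪ S₂` through `m` and an arc avoiding `m` between its end points contain a
simple closed curve, formed by a piece of that arc and the piece of the geodesic across `m`. -/
lemma IsSpherelike.exists_isSimpleClosedCurve (hE : IsSpherelike E) :
    ∃ J : Set E, IsSimpleClosedCurve J := by
  obtain ⟨a, b, hab⟩ := hE.nontrivial.exists_pair_ne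
  obtain ⟨S, -, hS⟩ := hE.isGeodesicSpace.exists_isArc_of_dist_le hab le_rfl
  obtain ⟨m, hmS, hm⟩ := hS.nonempty_diff
  obtain ⟨hma, hmb⟩ := not_or.mp hm
  obtain ⟨S₁, S₂, hS₁, hS₂, -, hinter⟩ := hS.exists_split hmS hma hmb
  obtain ⟨A, hAm, hA⟩ := hE.isGeodesicSpace.exists_isArc_of_linkedIn
    (isClosed_singleton (x := m)).isOpen_compl
    (.of_isPreconnected (hE.isPreconnected_compl_singleton m) (Ne.symm hmb) (Ne.symm hma)) hab.symm
  have hb : b ∉ S₁ := fun h => hmb (hinter.subset ⟨h, hS₂.right_mem⟩).symm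
  obtain ⟨p, R, hRA, hR, hRp⟩ := hA.exists_first_hit hS₁.isClosed hb
    ⟨a, hA.right_mem, hS₁.left_mem⟩
  have hpS₁ : p ∈ S₁ := (hRp.symm.subset rfl).2
  have hpm : p ≠ m := hAm (hRA hR.right_mem)
  have hpS₂ : p ∉ S₂ := fun h => hpm (hinter.subset ⟨hpS₁, h⟩)
  obtain ⟨q, Q, hQR, hQ, hQq⟩ := hR.symm.exists_first_hit hS₂.isClosed hpS₂
    ⟨b, hR.left_mem, hS₂.right_mem⟩
  have hqS₂ : q ∈ S₂ := (hQq.symm.subset rfl).2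
  have hqm : q ≠ m := hAm (hRA (hQR hQ.right_mem))
  obtain ⟨T₁, hT₁S, hT₁⟩ := hS₁.exists_subset_isArc hpS₁ hS₁.right_mem hpm
  obtain ⟨T₂, hT₂S, hT₂⟩ := hS₂.exists_subset_isArc hS₂.left_mem hqS₂ hqm.symm
  have hT := hT₁.concat hT₂ fun z hz => hinter.subset ⟨hT₁S hz.1, hT₂S hz.2⟩
  refine ⟨_, IsArcLoop.isSimpleClosedCurve (α := Q) (β := T₁ ∪ T₂) ⟨hQ, hT, ?_⟩⟩
  rintro z ⟨hzQ, hz | hz⟩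
  · exact Or.inl (hRp.subset ⟨hQR hzQ, hT₁S hz⟩)
  · exact Or.inr (hQq.subset ⟨hzQ, hT₂S hz⟩)

lemma IsFace.exists_forall_linkedIn_ball (hD : IsFace D J) (hE : IsSpherelike E)
    (hJ : IsSimpleClosedCurve J) (ha : a ∈ J) {η : ℝ} (hη : 0 < η) :
    ∃ ρ > 0, ∀ x ∈ D ∩ ball a ρ, ∀ y ∈ D ∩ ball a ρ, LinkedIn (D ∩ ball a η) x y := by
  obtain ⟨u, v, τ, hτ, hτJ, haτ, hJτ⟩ :=
    hJ.exists_isArc_diff_subset ha isOpen_ball (mem_ball_self hη)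
  obtain ⟨ρ, hρ, hsub⟩ := Metric.mem_nhds_iff.mp
    ((isOpen_ball.inter hτ.isClosed.isOpen_compl).mem_nhds ⟨mem_ball_self hη, haτ⟩)
  refine ⟨ρ, hρ, fun x hx y hy => ?_⟩
  have hcap : J ∩ (τ ∪ (ball a η)ᶜ) = τ :=
    Subset.antisymm (fun z ⟨hzJ, hz⟩ => hz.elim id fun hzη => by_contra fun h => hzη (hJτ ⟨hzJ, h⟩))
      fun z hz => ⟨hτJ hz, Or.inl hz⟩
  have hball : LinkedIn (τ ∪ (ball a η)ᶜ)ᶜ x y :=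
    (LinkedIn.of_isPreconnected (hE.isGeodesicSpace.isPreconnected_ball a ρ) hx.2 hy.2).mono
      fun z hz h => h.elim (hsub hz).2 fun h => h (hsub hz).1
  obtain ⟨C, hCsub, hC, hxC, hyC⟩ := hE.isJaniszewskiSpace hJ.isClosed
    (hτ.isClosed.union isOpen_ball.isClosed_compl) (hcap.symm ▸ hτ.isPreconnected)
    ((LinkedIn.of_isPreconnected hD.isPreconnected hx.1 hy.1).mono hD.disjoint.subset_compl_right)
    hball
  rw [compl_union, compl_union, compl_compl] at hCsub
  exact ⟨C, fun z hz => ⟨hD.mem_of_linkedIn ⟨C, hCsub.trans inter_subset_left, hC, hxC, hz⟩ hx.1,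
    (hCsub hz).2.2⟩, hC, hxC, hyC⟩

lemma IsFace.isAccessible (hD : IsFace D J) (hE : IsSpherelike E) (hJ : IsSimpleClosedCurve J)
    (ha : a ∈ J) : IsAccessible D a := by
  have haD : a ∉ D := disjoint_right.mp hD.disjoint ha
  have hacl : a ∈ closure D := hD.closure_eq ▸ Or.inr ha
  choose ρ hρ hlink using fun k : ℕ =>
    hD.exists_forall_linkedIn_ball hE hJ ha (Nat.one_div_pos_of_nat (α := ℝ) (n := k))
  have hstep : ∀ (n : ℕ) (x : D), ∃ x' : D, dist (x' : E) a < min (ρ n) (dist (x : E) a) := by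
    intro n x
    have hx : 0 < dist (x : E) a := dist_pos.mpr fun h => haD (h ▸ x.2)
    obtain ⟨z, hz, hza⟩ := Metric.mem_closure_iff.mp hacl _ (lt_min (hρ n) hx)
    exact ⟨⟨z, hz⟩, by rwa [dist_comm]⟩
  choose next hnext using hstep
  obtain ⟨x₀, hx₀⟩ := hD.nonempty
  let y : ℕ → D := fun n => Nat.rec (next 0 ⟨x₀, hx₀⟩) (fun n => next (n + 1)) n
  have hdecr : ∀ n, dist (y (n + 1)).1 a < dist (y n).1 a := fun n =>
    (lt_min_iff.mp (hnext (n + 1) (y n))).2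
  have hclose : ∀ n, dist (y n).1 a < ρ n
    | 0 => (lt_min_iff.mp (hnext 0 ⟨x₀, hx₀⟩)).1
    | n + 1 => (lt_min_iff.mp (hnext (n + 1) (y n))).1
  choose A hA hAarc using fun k => hE.isGeodesicSpace.exists_isArc_of_linkedIn
    (hD.isOpen.inter isOpen_ball)
    (hlink k _ ⟨(y k).2, hclose k⟩ _ ⟨(y (k + 1)).2, (hdecr k).trans (hclose k)⟩)
    fun h => (h ▸ hdecr k).ne rfl
  refine isAccessible_of_isArc_chain haD hAarc (fun k => (hA k).trans inter_subset_left)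
    (tendsto_smallSets_iff.mpr fun U hU => ?_)
  obtain ⟨ε, hε, hεU⟩ := Metric.mem_nhds_iff.mp hU
  filter_upwards [tendsto_one_div_add_atTop_nhds_zero_nat.eventually_lt_const hε] with k hk
  exact ((hA k).trans inter_subset_right).trans ((ball_subset_ball hk.le).trans hεU)

lemma IsFace.exists_crosscut_of_mem (hD : IsFace D J) (hE : IsSpherelike E)
    (hJ : IsSimpleClosedCurve J) (ha : a ∈ J) (hb : b ∈ J) (hab : a ≠ b) :
    ∃ c, IsArc c a b ∧ c \ {a, b} ⊆ D :=
  hE.isGeodesicSpace.exists_crosscut_of_isAccessible hD.isOpen hD.isPreconnected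
    (hD.isAccessible hE hJ ha) (hD.isAccessible hE hJ hb) (disjoint_right.mp hD.disjoint ha) hab

end Crosscuts

/-! ### Cell decompositions -/

section ConnectedImKleinen

variable {E : Type*}

/-- Local connectedness of a subset, expressed by small connected subsets that link each point to
all nearby points. -/
def IsConnectedImKleinen [TopologicalSpace E] (S : Set E) : Prop :=
  ∀ x ∈ S, ∀ U ∈ nhds x, ∀ᶠ y in nhdsWithin x S, LinkedIn (S ∩ U) x y

lemma IsConnectedImKleinen.exists_forall_linkedIn_ball [PseudoMetricSpace E] {S : Set E}
    (h : IsConnectedImKleinen S) (hS : IsCompact S) {ε : ℝ} (hε : 0 < ε) :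
    ∃ δ > 0, ∀ x ∈ S, ∀ y ∈ S, dist y x < δ → LinkedIn (S ∩ ball x ε) x y := by
  have hlocal : ∀ x : S, ∃ r > 0, r ≤ ε / 2 ∧
      ∀ y ∈ S, y ∈ ball x.1 r → LinkedIn (S ∩ ball x.1 (ε / 2)) x y := by
    intro x
    obtain ⟨r, hr, hrS⟩ := Metric.mem_nhdsWithin_iff.mp
      (h x x.2 _ (ball_mem_nhds x.1 (half_pos hε)))
    exact ⟨min r (ε / 2), lt_min hr (half_pos hε), min_le_right _ _, fun y hy hyr =>
      hrS ⟨ball_subset_ball (min_le_left _ _) hyr, hy⟩⟩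
  choose r hr hrε hlink using hlocal
  obtain ⟨δ, hδ, hlebesgue⟩ := lebesgue_number_lemma_of_metric hS
    (c := fun x : S => ball x.1 (r x)) (fun _ => isOpen_ball)
    fun x hx => mem_iUnion.mpr ⟨⟨x, hx⟩, mem_ball_self (hr _)⟩
  refine ⟨δ, hδ, fun x hx y hy hxy => ?_⟩
  obtain ⟨z, hz⟩ := hlebesgue x hx
  have hxz := hz (mem_ball_self hδ)
  refine ((hlink z x hx hxz).symm.trans (hlink z y hy (hz hxy))).mono
    (inter_subset_inter_right _ (ball_subset_ball' ?_))
  have hzx : dist z.1 x < r z := mem_ball'.mp hxz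
  linarith [hrε z]

variable [TopologicalSpace E]

lemma IsConnectedImKleinen.iUnion {ι : Type*} [Finite ι] {S : ι → Set E}
    (h : ∀ i, IsConnectedImKleinen (S i)) (hS : ∀ i, IsClosed (S i)) :
    IsConnectedImKleinen (⋃ i, S i) := by
  intro x _ U hU
  rw [nhdsWithin_iUnion, eventually_iSup]
  intro i
  by_cases hx : x ∈ S i
  · exact (h i x hx U hU).mono fun y hy => hy.mono (inter_subset_inter_left _ (subset_iUnion S i))
  · rw [notMem_closure_iff_nhdsWithin_eq_bot.mp ((hS i).closure_eq.symm ▸ hx)]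
    exact eventually_bot

lemma IsArc.isConnectedImKleinen [T2Space E] {S : Set E} {a b : E} (h : IsArc S a b) :
    IsConnectedImKleinen S := by
  obtain ⟨f, hf, hi, -, -, rfl⟩ := h
  rintro _ ⟨t, ht, rfl⟩ U hU
  obtain ⟨δ, hδ, hδU⟩ := Metric.mem_nhdsWithin_iff.mp (hf t ht hU)
  have hclosed : IsClosed (f '' (Icc 0 1 \ ball t δ)) :=
    ((isCompact_Icc.diff isOpen_ball).image_of_continuousOn (hf.mono sdiff_subset)).isClosed
  have hnotMem : f t ∉ f '' (Icc 0 1 \ ball t δ) := by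
    rintro ⟨s, hs, hst⟩
    exact hs.2 (hi hs.1 ht hst ▸ mem_ball_self hδ)
  filter_upwards [self_mem_nhdsWithin,
    mem_nhdsWithin_of_mem_nhds (hclosed.isOpen_compl.mem_nhds hnotMem)]
  rintro _ ⟨s, hs, rfl⟩ hfs
  have hsδ : s ∈ ball t δ := by_contra fun hn => hfs ⟨s, ⟨hs, hn⟩, rfl⟩
  refine ⟨f '' (Icc 0 1 ∩ ball t δ), ?_, ?_, mem_image_of_mem _ ⟨ht, mem_ball_self hδ⟩,
    mem_image_of_mem _ ⟨hs, hsδ⟩⟩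
  · rintro _ ⟨u, hu, rfl⟩
    exact ⟨mem_image_of_mem _ hu.1, hδU hu.symm⟩
  · refine IsPreconnected.image ?_ _ (hf.mono inter_subset_left)
    rw [Real.ball_eq_Ioo]
    exact (ordConnected_Icc.inter ordConnected_Ioo).isPreconnected

lemma IsSimpleClosedCurve.isConnectedImKleinen [T2Space E] {J : Set E}
    (h : IsSimpleClosedCurve J) : IsConnectedImKleinen J := by
  obtain ⟨a, b, α, β, hL, rfl⟩ := h
  rw [union_eq_iUnion]
  exact .iUnion
    (Bool.forall_bool.mpr ⟨hL.right.isConnectedImKleinen, hL.left.isConnectedImKleinen⟩)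
    (Bool.forall_bool.mpr ⟨hL.right.isClosed, hL.left.isClosed⟩)

end ConnectedImKleinen

section CellDecompositions

variable {E : Type*} [MetricSpace E] {ι : Type} {D : ι → Set E} {Γ Γ₁ Γ₂ c : Set E} {a b : E}

/-- `D` is a family of faces bounded by simple closed curves whose closures tile the space, and
`Γ` is the union of these curves. -/
structure IsCellDecomposition (D : ι → Set E) (Γ : Set E) : Prop where
  isFace : ∀ i, IsFace (D i) (frontier (D i))
  isSimpleClosedCurve : ∀ i, IsSimpleClosedCurve (frontier (D i))
  disjoint : Pairwise fun i j => Disjoint (D i) (D j)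
  exists_mem_closure : ∀ x, ∃ i, x ∈ closure (D i)
  iUnion_frontier : ⋃ i, frontier (D i) = Γ

namespace IsCellDecomposition

lemma frontier_subset (h : IsCellDecomposition D Γ) (i : ι) : frontier (D i) ⊆ Γ :=
  h.iUnion_frontier ▸ subset_iUnion (fun i => frontier (D i)) i

lemma isClosed [Finite ι] (h : IsCellDecomposition D Γ) : IsClosed Γ :=
  h.iUnion_frontier ▸ isClosed_iUnion_of_finite fun _ => isClosed_frontier

lemma isConnectedImKleinen [Finite ι] (h : IsCellDecomposition D Γ) : IsConnectedImKleinen Γ :=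
  h.iUnion_frontier ▸ .iUnion (fun i => (h.isSimpleClosedCurve i).isConnectedImKleinen)
    fun _ => isClosed_frontier

lemma disjoint_closure (h : IsCellDecomposition D Γ) {i j : ι} (hij : i ≠ j) :
    Disjoint (D i) (closure (D j)) :=
  (h.disjoint hij).closure_right (h.isFace i).isOpen

lemma disjoint_skeleton (h : IsCellDecomposition D Γ) (i : ι) : Disjoint (D i) Γ := by
  rw [← h.iUnion_frontier, disjoint_iUnion_right]
  intro j
  rcases eq_or_ne i j with rfl | hij
  · exact (h.isFace i).disjoint
  · exact (h.disjoint_closure hij).mono_right frontier_subset_closure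

lemma exists_mem (h : IsCellDecomposition D Γ) {x : E} (hx : x ∉ Γ) : ∃ i, x ∈ D i := by
  obtain ⟨i, hi⟩ := h.exists_mem_closure x
  rw [(h.isFace i).closure_eq] at hi
  exact ⟨i, hi.resolve_right fun hxi => hx (h.frontier_subset i hxi)⟩

lemma exists_crosscut_subset (h : IsCellDecomposition D Γ) (hc : IsArc c a b)
    (hcΓ : c ∩ Γ = {a, b}) :
    ∃ i, c \ {a, b} ⊆ D i ∧ a ∈ frontier (D i) ∧ b ∈ frontier (D i) := by
  have hd : ∀ z ∈ c \ {a, b}, z ∉ Γ := fun z hz hzΓ => hz.2 (hcΓ.subset ⟨hz.1, hzΓ⟩)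
  obtain ⟨m, hm⟩ := hc.nonempty_diff
  obtain ⟨i, hi⟩ := h.exists_mem (hd m hm)
  have hsub : c \ {a, b} ⊆ D i := subset_of_disjoint_frontier hc.isPreconnected_diff
    (disjoint_left.mpr fun z hz hzi => hd z hz (h.frontier_subset i hzi)) ⟨m, hm, hi⟩
  have hcl : c ⊆ D i ∪ frontier (D i) := (h.isFace i).closure_eq ▸
    hc.subset_closure_diff.trans (closure_mono hsub)
  have hab : ∀ z ∈ ({a, b} : Set E), z ∈ frontier (D i) := fun z hz =>
    (hcl (hcΓ.symm.subset hz).1).resolve_left fun hzi =>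
      disjoint_left.mp (h.disjoint_skeleton i) hzi (hcΓ.symm.subset hz).2
  exact ⟨i, hsub, hab a (Or.inl rfl), hab b (Or.inr rfl)⟩

end IsCellDecomposition

/-- The family that results from `D` when `D i` is replaced by the two sets `D₁` and `D₂`. -/
def splitCell (D : ι → Set E) (i : ι) (D₁ D₂ : Set E) : {j // j ≠ i} ⊕ Bool → Set E :=
  Sum.elim (fun j => D j) fun s => cond s D₁ D₂

lemma IsFace.closure_subset_union_closure {D D₁ D₂ α β c : Set E} (hD : IsFace D (α ∪ β))
    (hDc : D \ c ⊆ D₁ ∪ D₂) (hD₁ : IsFace D₁ (α ∪ c)) (hD₂ : IsFace D₂ (β ∪ c)) :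
    closure D ⊆ closure D₁ ∪ closure D₂ := by
  rw [hD.closure_eq, hD₁.closure_eq, hD₂.closure_eq]
  intro x hx
  have hsplit : x ∈ D \ c → x ∈ D₁ ∪ D₂ := fun hx => hDc hx
  simp only [mem_union, Set.mem_sdiff] at hx hsplit ⊢
  tauto

lemma IsCellDecomposition.splitCell (h : IsCellDecomposition D Γ) {i : ι} {α β D₁ D₂ : Set E}
    (hL : IsArcLoop α β a b) (hJ : α ∪ β = frontier (D i)) (hc : IsArc c a b)
    (hcD : c \ {a, b} ⊆ D i) (hdisj : Disjoint D₁ D₂) (hD : D₁ ∪ D₂ = D i \ c)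
    (hD₁ : IsFace D₁ (α ∪ c)) (hD₂ : IsFace D₂ (β ∪ c)) :
    IsCellDecomposition (splitCell D i D₁ D₂) (Γ ∪ c) := by
  obtain ⟨hsub₁, hsub₂⟩ := union_subset_iff.mp (hD.subset.trans sdiff_subset)
  have hcJ := (h.isFace i).crosscut_inter_subset hcD
  rw [← hJ] at hcJ
  refine ⟨?_, ?_, ?_, ?_, ?_⟩
  · rintro (j | _ | _)
    exacts [h.isFace j, hD₂.frontier_eq.symm ▸ hD₂, hD₁.frontier_eq.symm ▸ hD₁]
  · rintro (j | _ | _)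
    · exact h.isSimpleClosedCurve j
    · exact hD₂.frontier_eq ▸ IsArcLoop.isSimpleClosedCurve
        ⟨hL.right, hc, fun z hz => hcJ ⟨hz.2, Or.inr hz.1⟩⟩
    · exact hD₁.frontier_eq ▸ IsArcLoop.isSimpleClosedCurve
        ⟨hL.left, hc, fun z hz => hcJ ⟨hz.2, Or.inl hz.1⟩⟩
  · have hold : ∀ (j : {j // j ≠ i}) (s : Bool), Disjoint (D j) (cond s D₁ D₂) := fun j =>
      Bool.forall_bool.mpr ⟨(h.disjoint j.2).mono_right hsub₂, (h.disjoint j.2).mono_right hsub₁⟩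
    rintro (j | s) (k | t) hjk
    · exact h.disjoint fun hjk' => hjk (congrArg _ (Subtype.ext hjk'))
    · exact hold j t
    · exact (hold k s).symm
    · cases s <;> cases t
      exacts [absurd rfl hjk, hdisj.symm, hdisj, absurd rfl hjk]
  · intro x
    obtain ⟨j, hj⟩ := h.exists_mem_closure x
    rcases eq_or_ne j i with rfl | hji
    · exact ((hJ ▸ h.isFace j : IsFace (D j) (α ∪ β)).closure_subset_union_closure hD.ge hD₁ hD₂
        hj).elim (fun hx => ⟨.inr true, hx⟩) fun hx => ⟨.inr false, hx⟩
    · exact ⟨.inl ⟨j, hji⟩, hj⟩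
  · have hsplit : ⋃ j, frontier (D j) = frontier (D i) ∪ ⋃ j : {j // j ≠ i}, frontier (D j) := by
      rw [iUnion_subtype]
      exact iSup_split_single _ i
    rw [iUnion_sum, ← h.iUnion_frontier, hsplit, ← hJ]
    have hbool : ⋃ s, frontier (Cactoid.splitCell D i D₁ D₂ (.inr s)) = α ∪ c ∪ (β ∪ c) :=
      iSup_bool_eq.trans (congrArg₂ _ hD₁.frontier_eq hD₂.frontier_eq)
    rw [hbool, ← union_union_distrib_right]
    exact (union_comm _ _).trans (union_right_comm _ _ _)

/-- `Γ` is the union of the boundary curves of a finite cell decomposition. -/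
def IsSkeleton (Γ : Set E) : Prop :=
  ∃ (ι : Type) (_ : Finite ι) (D : ι → Set E), IsCellDecomposition D Γ

lemma IsSkeleton.isClosed (h : IsSkeleton Γ) : IsClosed Γ := by
  obtain ⟨ι, _, D, hD⟩ := h
  exact hD.isClosed

lemma IsSkeleton.isConnectedImKleinen (h : IsSkeleton Γ) : IsConnectedImKleinen Γ := by
  obtain ⟨ι, _, D, hD⟩ := h
  exact hD.isConnectedImKleinen

/-- `Γ'` arises from `Γ` by successively adding crosscuts. -/
inductive IsCrosscutExtension (Γ : Set E) : Set E → Prop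
  | refl : IsCrosscutExtension Γ Γ
  | step {Γ₁ c : Set E} {a b : E} (h : IsCrosscutExtension Γ Γ₁) (hc : IsArc c a b)
      (hcΓ : c ∩ Γ₁ = {a, b}) : IsCrosscutExtension Γ (Γ₁ ∪ c)

namespace IsCrosscutExtension

lemma trans (h : IsCrosscutExtension Γ Γ₁) (h' : IsCrosscutExtension Γ₁ Γ₂) :
    IsCrosscutExtension Γ Γ₂ := by
  induction h' with
  | refl => exact h
  | step _ hc hcΓ ih => exact ih.step hc hcΓ

lemma subset (h : IsCrosscutExtension Γ Γ₁) : Γ ⊆ Γ₁ := by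
  induction h with
  | refl => exact subset_rfl
  | step _ _ _ ih => exact ih.trans subset_union_left

lemma isSkeleton [CompactSpace E] (h : IsCrosscutExtension Γ Γ₁) (hE : IsSpherelike E)
    (hΓ : IsSkeleton Γ) : IsSkeleton Γ₁ := by
  induction h with
  | refl => exact hΓ
  | step _ hc hcΓ ih =>
    obtain ⟨ι, _, D, hD⟩ := ih
    obtain ⟨i, hcD, ha, hb⟩ := hD.exists_crosscut_subset hc hcΓ
    obtain ⟨α, β, hL, hJ⟩ := (hD.isSimpleClosedCurve i).exists_isArcLoop ha hb hc.ne
    obtain ⟨D₁, D₂, hdisj, hunion, hD₁, hD₂⟩ :=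
      (hJ ▸ hD.isFace i : IsFace (D i) (α ∪ β)).exists_isFace_of_crosscut hE hL hc hcD
    exact ⟨_, inferInstance, _, hD.splitCell hL hJ hc hcD hdisj hunion hD₁ hD₂⟩

end IsCrosscutExtension

end CellDecompositions

/-! ### Fine subdivisions -/

section Density

variable {E : Type*} [MetricSpace E] {A D J Γ S : Set E} {a b p s : E} {ε : ℝ}

lemma IsSpherelike.left_notMem_interior (hE : IsSpherelike E) (h : IsArc S a b) :
    a ∉ interior S := by
  intro ha
  obtain ⟨m, S₁, S₂, hS₁, hS₂, rfl, hinter, hsub⟩ := h.exists_split_near isOpen_interior ha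
  have hdiff : S₁ \ {m} = interior (S₁ ∪ S₂) \ S₂ := by
    rw [← hinter, sdiff_self_inter]
    exact Subset.antisymm (sdiff_subset_sdiff_left hsub) fun z hz =>
      ⟨(interior_subset hz.1).resolve_right hz.2, hz.2⟩
  have hopen : IsOpen (S₁ \ {m}) := hdiff ▸ isOpen_interior.sdiff hS₂.isClosed
  have hfront : frontier (S₁ \ {m}) ⊆ {m} := by
    rw [hopen.frontier_eq]
    exact fun z hz => by_contra fun hzm =>
      hz.2 ⟨hS₁.isClosed.closure_subset_iff.mpr sdiff_subset hz.1, hzm⟩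
  have hcompl := subset_of_disjoint_frontier (hE.isPreconnected_compl_singleton m)
    (disjoint_compl_left.mono_right hfront) ⟨a, hS₁.ne, hS₁.left_mem, hS₁.ne⟩
  exact hS₂.ne (hinter.subset ⟨(hcompl hS₂.ne.symm).1, hS₂.right_mem⟩).symm

lemma IsFace.isPreconnected_diff_arc [CompactSpace E] (hD : IsFace D J) (hE : IsSpherelike E)
    (hJ : IsClosed J) (hA : IsArc A p s) (hJA : IsPreconnected (J ∩ A)) :
    IsPreconnected (D \ A) := by
  refine isPreconnected_of_linkedIn fun u hu v hv => ?_
  obtain ⟨C, hCs, hC, huC, hvC⟩ := hE.isJaniszewskiSpace hJ hA.isClosed hJA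
    ((LinkedIn.of_isPreconnected hD.isPreconnected hu.1 hv.1).mono hD.disjoint.subset_compl_right)
    (LinkedIn.of_isPreconnected (hE.isPreconnected_compl_arc hA) hu.2 hv.2)
  rw [compl_union, subset_inter_iff] at hCs
  exact ⟨C, fun z hz => ⟨hD.mem_of_linkedIn ⟨C, hCs.1, hC, huC, hz⟩ hu.1, hCs.2 hz⟩, hC, huC, hvC⟩

lemma IsFace.frontier_diff_subset (hD : IsFace D J) (hA : IsClosed A) :
    frontier (D \ A) ⊆ A ∪ J := by
  intro z hz
  rw [(hD.isOpen.sdiff hA).frontier_eq] at hz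
  rcases hD.closure_eq.subset (closure_mono sdiff_subset hz.1) with hzD | hzJ
  · exact Or.inl (by_contra fun hzA => hz.2 ⟨hzD, hzA⟩)
  · exact Or.inr hzJ

lemma IsFace.exists_isAccessible_diff_near_left (hD : IsFace D J) (hE : IsSpherelike E)
    (hA : IsArc A p s) (hp : p ∈ D) (hε : 0 < ε) :
    ∃ x ∈ A ∩ D, dist x p < ε ∧ IsAccessible (D \ A) x := by
  have hopen : IsOpen (D \ A) := hD.isOpen.sdiff hA.isClosed
  have hclosure : p ∈ closure Aᶜ := by
    rw [closure_compl]
    exact hE.left_notMem_interior hA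
  have hfront : p ∈ frontier (D \ A) :=
    hopen.frontier_eq ▸ ⟨hD.isOpen.inter_closure ⟨hp, hclosure⟩, fun h => h.2 hA.left_mem⟩
  obtain ⟨η, hη, hball⟩ := Metric.mem_nhds_iff.mp
    (inter_mem (hD.isOpen.mem_nhds hp) (ball_mem_nhds p hε))
  obtain ⟨x, ⟨hxp, hxfront⟩, hx⟩ := hE.isGeodesicSpace.exists_isAccessible_near hopen hfront hη
  obtain ⟨hxD, hxε⟩ := hball hxp
  exact ⟨x, ⟨(hD.frontier_diff_subset hA.isClosed hxfront).resolve_right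
    (disjoint_left.mp hD.disjoint hxD), hxD⟩, hxε, hx⟩

lemma IsFace.exists_isAccessible_diff (hD : IsFace D J) (hE : IsGeodesicSpace E)
    (hA : IsClosed A) (hJA : (J \ A).Nonempty) : ∃ a ∈ J \ A, IsAccessible (D \ A) a := by
  obtain ⟨t, ht, htA⟩ := hJA
  have hopen : IsOpen (D \ A) := hD.isOpen.sdiff hA
  have hfront : t ∈ frontier (D \ A) := by
    refine hopen.frontier_eq ▸ ⟨?_, fun h => disjoint_left.mp hD.disjoint h.1 ht⟩
    rw [Set.sdiff_eq, inter_comm]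
    exact hA.isOpen_compl.inter_closure ⟨htA, hD.closure_eq ▸ Or.inr ht⟩
  obtain ⟨r, hr, hrA⟩ := Metric.mem_nhds_iff.mp (hA.isOpen_compl.mem_nhds htA)
  obtain ⟨a, ⟨hat, hafront⟩, ha⟩ := hE.exists_isAccessible_near hopen hfront hr
  exact ⟨a, ⟨(hD.frontier_diff_subset hA hafront).resolve_left (hrA hat), hrA hat⟩, ha⟩

/-- The crosscut runs along an arc from the boundary almost up to `p` and leaves it through its
connected complement in `D`. -/
lemma IsFace.exists_crosscut_near [CompactSpace E] (hD : IsFace D J) (hE : IsSpherelike E)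
    (hJ : IsSimpleClosedCurve J) (hp : p ∈ D) (hε : 0 < ε) :
    ∃ a ∈ J, ∃ b ∈ J, ∃ c, IsArc c a b ∧ c \ {a, b} ⊆ D ∧ ∃ x ∈ c, dist x p < ε := by
  obtain ⟨s, hs, t, ht, hst⟩ := hJ.nontrivial
  have hDJ := disjoint_left.mp hD.disjoint
  obtain ⟨A, hA, hAD⟩ := hE.isGeodesicSpace.exists_isArc_of_isAccessible hD.isOpen
    hD.isPreconnected (hD.isAccessible hE hJ hs) hp fun h => hDJ h hs
  have hJA : J ∩ A = {s} := Subset.antisymm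
    (fun z hz => by_contra fun hzs => hDJ (hAD ⟨hz.2, hzs⟩) hz.1)
    (singleton_subset_iff.mpr ⟨hs, hA.right_mem⟩)
  have hconn : IsPreconnected (D \ A) :=
    hD.isPreconnected_diff_arc hE hJ.isClosed hA (hJA ▸ isPreconnected_singleton)
  obtain ⟨x, ⟨hxA, hxD⟩, hxp, hx⟩ := hD.exists_isAccessible_diff_near_left hE hA hp hε
  obtain ⟨a, ⟨haJ, haA⟩, ha⟩ := hD.exists_isAccessible_diff hE.isGeodesicSpace hA.isClosed
    ⟨t, ht, fun h => hst (hJA.subset ⟨ht, h⟩).symm⟩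
  obtain ⟨B, hB, hBD⟩ := hE.isGeodesicSpace.exists_crosscut_of_isAccessible
    (hD.isOpen.sdiff hA.isClosed) hconn hx ha (fun h => h.2 hxA) fun h => haA (h ▸ hxA)
  obtain ⟨A', hA'A, hA'⟩ := hA.exists_subset_isArc hA.right_mem hxA fun h => hDJ hxD (h ▸ hs)
  refine ⟨s, hs, a, haJ, A' ∪ B, hA'.concat hB ?_, ?_, x, Or.inl hA'.right_mem, hxp⟩
  · rintro z ⟨hzA, hzB⟩
    by_contra hzx
    exact (hBD ⟨hzB, not_or.mpr ⟨hzx, fun hza => haA (hza ▸ hA'A hzA)⟩⟩).2 (hA'A hzA)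
  · rintro z ⟨hzA | hzB, hz⟩
    · exact hAD ⟨hA'A hzA, fun h => hz (Or.inl h)⟩
    · rcases eq_or_ne z x with rfl | hzx
      · exact hxD
      · exact (hBD ⟨hzB, not_or.mpr ⟨hzx, fun h => hz (Or.inr h)⟩⟩).1

lemma IsCellDecomposition.inter_eq_of_crosscut {ι : Type} {D : ι → Set E} {c : Set E}
    (h : IsCellDecomposition D Γ) {i : ι} (hc : IsArc c a b) (hcD : c \ {a, b} ⊆ D i)
    (ha : a ∈ frontier (D i)) (hb : b ∈ frontier (D i)) : c ∩ Γ = {a, b} := by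
  refine Subset.antisymm (fun z hz => by_contra fun hn =>
    disjoint_left.mp (h.disjoint_skeleton i) (hcD ⟨hz.1, hn⟩) hz.2) (pair_subset ?_ ?_)
  exacts [⟨hc.left_mem, h.frontier_subset i ha⟩, ⟨hc.right_mem, h.frontier_subset i hb⟩]

namespace IsSkeleton

variable [CompactSpace E]

lemma exists_isCrosscutExtension_near (hΓ : IsSkeleton Γ) (hE : IsSpherelike E) (p : E)
    (hε : 0 < ε) : ∃ Γ', IsCrosscutExtension Γ Γ' ∧ ∃ x ∈ Γ', dist x p < ε := by
  by_cases hp : p ∈ Γ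
  · exact ⟨Γ, .refl, p, hp, by rwa [dist_self]⟩
  obtain ⟨ι, _, D, hD⟩ := hΓ
  obtain ⟨i, hi⟩ := hD.exists_mem hp
  obtain ⟨a, ha, b, hb, c, hc, hcD, x, hx, hxp⟩ :=
    (hD.isFace i).exists_crosscut_near hE (hD.isSimpleClosedCurve i) hi hε
  exact ⟨Γ ∪ c, .step .refl hc (hD.inter_eq_of_crosscut hc hcD ha hb), x, Or.inr hx, hxp⟩

lemma exists_isCrosscutExtension_near_of_finite (hΓ : IsSkeleton Γ) (hE : IsSpherelike E)
    (hS : S.Finite) (hε : 0 < ε) :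
    ∃ Γ', IsCrosscutExtension Γ Γ' ∧ ∀ p ∈ S, ∃ x ∈ Γ', dist x p < ε := by
  induction S, hS using Set.Finite.induction_on with
  | empty => exact ⟨Γ, .refl, by simp⟩
  | @insert q S _ _ ih =>
    obtain ⟨Γ₁, hext₁, hnear⟩ := ih
    obtain ⟨Γ₂, hext₂, x, hx, hxq⟩ :=
      (hext₁.isSkeleton hE hΓ).exists_isCrosscutExtension_near hE q hε
    refine ⟨Γ₂, hext₁.trans hext₂, forall_mem_insert.mpr ⟨⟨x, hx, hxq⟩, fun p hp => ?_⟩⟩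
    obtain ⟨y, hy, hyp⟩ := hnear p hp
    exact ⟨y, hext₂.subset hy, hyp⟩

lemma exists_isCrosscutExtension_forall_near (hΓ : IsSkeleton Γ) (hE : IsSpherelike E)
    (hε : 0 < ε) : ∃ Γ', IsCrosscutExtension Γ Γ' ∧ ∀ p, ∃ x ∈ Γ', dist x p < ε := by
  obtain ⟨S, -, hS, hcover⟩ := finite_cover_balls_of_compact (isCompact_univ (X := E)) (half_pos hε)
  obtain ⟨Γ', hext, hnear⟩ := hΓ.exists_isCrosscutExtension_near_of_finite hE hS (half_pos hε)
  refine ⟨Γ', hext, fun p => ?_⟩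
  obtain ⟨q, hq, hpq⟩ := mem_iUnion₂.mp (hcover (mem_univ p))
  obtain ⟨x, hx, hxq⟩ := hnear q hq
  rw [mem_ball] at hpq
  exact ⟨x, hx, by linarith [dist_triangle_right x p q]⟩

end IsSkeleton

end Density

section Web

variable {E : Type*} [MetricSpace E] {B K L P Q Γ : Set E} {p u v x : E} {δ ε : ℝ}

lemma IsJaniszewskiSpace.linkedIn_compl_union (hE : IsJaniszewskiSpace E) (hB : IsClosed B)
    (hK : IsClosed K) (hL : IsClosed L) (hBL : B ⊆ L)
    (hp : ∀ x ∈ B ∩ K, LinkedIn (K ∩ L) p x) (huvK : LinkedIn Kᶜ u v) (huvL : LinkedIn Lᶜ u v) :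
    LinkedIn (B ∪ K)ᶜ u v := by
  set Z := connectedComponentIn (K ∩ L) p
  have hZ : Z ⊆ K ∩ L := connectedComponentIn_subset _ _
  have hinter : (B ∪ Z) ∩ K = Z := by
    refine Subset.antisymm ?_ fun x hx => ⟨Or.inr hx, (hZ hx).1⟩
    rintro x ⟨hx | hx, hxK⟩
    exacts [linkedIn_iff_mem_connectedComponentIn.mp (hp x ⟨hx, hxK⟩), hx]
  refine (hE (hB.union (isClosed_connectedComponentIn (hK.inter hL) p)) hK
    (hinter ▸ isPreconnected_connectedComponentIn) (huvL.mono ?_) huvK).mono ?_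
  · exact compl_subset_compl.mpr (union_subset hBL fun x hx => (hZ hx).2)
  · exact compl_subset_compl.mpr (union_subset_union_left K subset_union_left)

/-- `Γ` is a web with node set `P` and mesh of order `ε`: the nodes are dense at scale `ε`, and
`Γ` links each of its points to a node and nearby nodes to each other without large detours. -/
structure IsWeb (Γ P : Set E) (ε : ℝ) : Prop where
  exists_dist_le : ∀ x, ∃ p ∈ P, dist x p ≤ 2 * ε
  exists_linkedIn : ∀ x ∈ Γ, ∃ p ∈ P, dist x p ≤ 2 * ε ∧ LinkedIn (Γ ∩ closedBall x (5 * ε)) x p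
  linkedIn : ∀ p ∈ P, ∀ q ∈ P, dist p q ≤ 4 * ε → LinkedIn (Γ ∩ closedBall p (5 * ε)) p q

namespace IsWeb

lemma linkedIn_union_balls (h : IsWeb Γ P ε) (hE : IsGeodesicSpace E) (hε : 0 < ε) (hQ : Q ⊆ P)
    (hp : p ∈ P) (hxp : x ∈ closedBall p (2 * ε))
    (hx : x ∈ Γ ∪ ⋃ q ∈ Q, closedBall q (2 * ε)) :
    LinkedIn ((Γ ∪ ⋃ q ∈ Q, closedBall q (2 * ε)) ∩ closedBall p (10 * ε)) p x := by
  rw [mem_closedBall] at hxp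
  have hnode : ∀ q ∈ P, dist x q ≤ 2 * ε →
      LinkedIn ((Γ ∪ ⋃ q ∈ Q, closedBall q (2 * ε)) ∩ closedBall p (10 * ε)) p q :=
    fun q hq hxq => (h.linkedIn p hp q hq (by linarith [dist_triangle_left p q x])).mono
      (inter_subset_inter subset_union_left (closedBall_subset_closedBall (by linarith)))
  rcases hx with hxΓ | hxB
  · obtain ⟨q, hq, hxq, hlink⟩ := h.exists_linkedIn x hxΓ
    exact (hnode q hq hxq).trans (hlink.symm.mono
      (inter_subset_inter subset_union_left (closedBall_subset_closedBall' (by linarith))))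
  · obtain ⟨q, hq, hxq⟩ := mem_iUnion₂.mp hxB
    have hball : closedBall q (2 * ε) ⊆
        (Γ ∪ ⋃ q ∈ Q, closedBall q (2 * ε)) ∩ closedBall p (10 * ε) := by
      refine subset_inter (fun y hy => Or.inr (mem_biUnion hq hy))
        (closedBall_subset_closedBall' ?_)
      linarith [dist_triangle_left q p x, mem_closedBall.mp hxq]
    exact (hnode q (hQ hq) hxq).trans
      ((LinkedIn.of_isPreconnected (hE.isPreconnected_closedBall q (2 * ε))
        (mem_closedBall_self (by positivity)) hxq).mono hball)

lemma linkedIn_compl_union_balls (h : IsWeb Γ P ε) (hE : IsSpherelike E) (hΓ : IsClosed Γ)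
    (hε : 0 < ε) (hQ : Q.Finite) (hQP : Q ⊆ P)
    (hball : ∀ q ∈ Q, LinkedIn (closedBall q (10 * ε))ᶜ u v) (huv : LinkedIn Γᶜ u v) :
    LinkedIn (Γ ∪ ⋃ q ∈ Q, closedBall q (2 * ε))ᶜ u v := by
  induction Q, hQ using Set.Finite.induction_on with
  | empty => simpa using huv
  | @insert p Q _ hQ ih =>
    rw [insert_subset_iff] at hQP
    rw [biUnion_insert, union_left_comm]
    exact hE.isJaniszewskiSpace.linkedIn_compl_union isClosed_closedBall
      (hΓ.union (hQ.isClosed_biUnion fun _ _ => isClosed_closedBall)) isClosed_closedBall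
      (closedBall_subset_closedBall (by linarith))
      (fun x hx => h.linkedIn_union_balls hE.isGeodesicSpace hε hQP.2 hQP.1 hx.1 hx.2)
      (ih hQP.2 fun q hq => hball q (mem_insert_of_mem p hq)) (hball p (mem_insert p Q))

/-- If `u` and `v` were far apart, they would remain linked after removing all the balls that
cover the sphere of radius `δ / 2` around `u`. -/
lemma dist_le (h : IsWeb Γ P ε) (hE : IsSpherelike E) (hΓ : IsClosed Γ) (hP : P.Finite)
    (hε : 0 < ε) (hεδ : 8 * ε ≤ δ)
    (hball : ∀ z u v : E, δ / 4 ≤ dist u z → δ / 4 ≤ dist v z →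
      LinkedIn (closedBall z (10 * ε))ᶜ u v)
    (huv : LinkedIn Γᶜ u v) : dist u v ≤ δ := by
  by_contra! hlt
  set Q : Set E := {p ∈ P | ∃ m, dist m u = δ / 2 ∧ dist m p ≤ 2 * ε}
  have hfar : ∀ q ∈ Q, LinkedIn (closedBall q (10 * ε))ᶜ u v := by
    rintro q ⟨-, m, hmu, hmq⟩
    exact hball q u v (by linarith [dist_triangle_right m u q, dist_comm u q])
      (by linarith [dist_triangle u m v, dist_triangle m q v, dist_comm m u, dist_comm q v])
  obtain ⟨C, hCQ, hC, huC, hvC⟩ := h.linkedIn_compl_union_balls hE hΓ hε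
    (hP.subset (sep_subset P _)) (sep_subset P _) hfar huv
  obtain ⟨m, hm, hmu⟩ := hC.intermediate_value huC hvC
    (f := fun x => dist x u) (by fun_prop)
    (show δ / 2 ∈ Icc (dist u u) (dist v u) by
      rw [dist_self, dist_comm v u]; constructor <;> linarith)
  obtain ⟨p, hp, hmp⟩ := h.exists_dist_le m
  exact hCQ hm (Or.inr (mem_biUnion (⟨hp, m, hmu, hmp⟩ : p ∈ Q) hmp))

end IsWeb

end Web

section Bridges

variable {E : Type*} [MetricSpace E] {Γ Γ' S U : Set E} {f : ℝ → E} {p q : E} {s t : ℝ}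

/-- `Γ'` is an extension of `Γ` that links `f 0` to `f t` inside `U` and whose new points lie on the
initial piece `f '' [0, t]` of the arc `f`, each of them linked to `f 0` as well. -/
structure IsPartialBridge (f : ℝ → E) (Γ U : Set E) (t : ℝ) (Γ' : Set E) : Prop where
  mem_Icc : t ∈ Icc (0 : ℝ) 1
  apply_mem : f t ∈ Γ
  isCrosscutExtension : IsCrosscutExtension Γ Γ'
  diff_subset : Γ' \ Γ ⊆ f '' Icc 0 t
  linkedIn : ∀ x ∈ insert (f t) (Γ' \ Γ), LinkedIn (Γ' ∩ U) (f 0) x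

namespace IsPartialBridge

lemma refl (h₀ : f 0 ∈ Γ ∩ U) : IsPartialBridge f Γ U 0 Γ where
  mem_Icc := ⟨le_rfl, zero_le_one⟩
  apply_mem := h₀.1
  isCrosscutExtension := .refl
  diff_subset := by simp
  linkedIn := by simpa using LinkedIn.refl h₀

lemma slide (h : IsPartialBridge f Γ U t Γ') (hts : t ≤ s) (hs : s ≤ 1) (hsΓ : f s ∈ Γ)
    (hlink : LinkedIn (Γ ∩ U) (f t) (f s)) : IsPartialBridge f Γ U s Γ' where
  mem_Icc := ⟨h.mem_Icc.1.trans hts, hs⟩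
  apply_mem := hsΓ
  isCrosscutExtension := h.isCrosscutExtension
  diff_subset := h.diff_subset.trans (image_mono (Icc_subset_Icc_right hts))
  linkedIn := by
    rintro x (rfl | hx)
    · exact (h.linkedIn _ (mem_insert _ _)).trans
        (hlink.mono (inter_subset_inter_left U h.isCrosscutExtension.subset))
    · exact h.linkedIn x (mem_insert_of_mem _ hx)

lemma image_Icc_inter (h : IsPartialBridge f Γ U t Γ') (hi : InjOn f (Icc 0 1)) (hts : t < s)
    (hs : s ≤ 1) (hsΓ : f s ∈ Γ) (hgap : ∀ r ∈ Ioo t s, f r ∉ Γ) :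
    f '' Icc t s ∩ Γ' = {f t, f s} := by
  refine Subset.antisymm ?_ ?_
  · rintro _ ⟨⟨r, hr, rfl⟩, hrΓ'⟩
    by_cases hrΓ : f r ∈ Γ
    · rcases eq_endpoints_or_mem_Ioo_of_mem_Icc hr with rfl | rfl | hr'
      exacts [Or.inl rfl, Or.inr rfl, absurd hrΓ (hgap r hr')]
    · obtain ⟨w, hw, hwr⟩ := h.diff_subset ⟨hrΓ', hrΓ⟩
      obtain rfl := hi ⟨hw.1, hw.2.trans h.mem_Icc.2⟩ ⟨h.mem_Icc.1.trans hr.1, hr.2.trans hs⟩ hwr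
      exact Or.inl (congrArg f (le_antisymm hw.2 hr.1))
  · exact pair_subset ⟨mem_image_of_mem f (left_mem_Icc.mpr hts.le),
      h.isCrosscutExtension.subset h.apply_mem⟩
      ⟨mem_image_of_mem f (right_mem_Icc.mpr hts.le), h.isCrosscutExtension.subset hsΓ⟩

lemma jump (h : IsPartialBridge f Γ U t Γ') (hf : ContinuousOn f (Icc 0 1))
    (hi : InjOn f (Icc 0 1)) (hU : f '' Icc 0 1 ⊆ U) (hts : t < s) (hs : s ≤ 1) (hsΓ : f s ∈ Γ)
    (hgap : ∀ r ∈ Ioo t s, f r ∉ Γ) : IsPartialBridge f Γ U s (Γ' ∪ f '' Icc t s) := by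
  have hI : Icc t s ⊆ Icc 0 1 := Icc_subset_Icc h.mem_Icc.1 hs
  have hc : IsArc (f '' Icc t s) (f t) (f s) := .of_image_Icc hts (hf.mono hI) (hi.mono hI)
  have hlink : ∀ x ∈ f '' Icc t s, LinkedIn ((Γ' ∪ f '' Icc t s) ∩ U) (f 0) x := fun x hx =>
    ((h.linkedIn _ (mem_insert _ _)).mono (inter_subset_inter_left U subset_union_left)).trans
      ((LinkedIn.of_isPreconnected hc.isPreconnected hc.left_mem hx).mono
        (subset_inter subset_union_right ((image_mono hI).trans hU)))
  refine ⟨⟨h.mem_Icc.1.trans hts.le, hs⟩, hsΓ,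
    h.isCrosscutExtension.step hc (h.image_Icc_inter hi hts hs hsΓ hgap), ?_, ?_⟩
  · rintro x ⟨hx | hx, hxΓ⟩
    · exact image_mono (Icc_subset_Icc_right hts.le) (h.diff_subset ⟨hx, hxΓ⟩)
    · exact image_mono (Icc_subset_Icc_left h.mem_Icc.1) hx
  · rintro x (rfl | ⟨hx | hx, hxΓ⟩)
    · exact hlink _ hc.right_mem
    · exact (h.linkedIn x (mem_insert_of_mem _ ⟨hx, hxΓ⟩)).mono
        (inter_subset_inter_left U subset_union_left)
    · exact hlink x hx

/-- Slide along `Γ` to the last visit of `f` before `s`, then jump over the gap containing `s`. -/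
lemma exists_le (h : IsPartialBridge f Γ U t Γ') (hΓ : IsClosed Γ) (hf : ContinuousOn f (Icc 0 1))
    (hi : InjOn f (Icc 0 1)) (hU : f '' Icc 0 1 ⊆ U) (h₁ : f 1 ∈ Γ) (hs : s ≤ 1)
    (hlink : ∀ l ∈ Icc t s, f l ∈ Γ → LinkedIn (Γ ∩ U) (f t) (f l)) :
    ∃ r Γ'', s ≤ r ∧ IsPartialBridge f Γ U r Γ'' := by
  rcases lt_or_ge t s with hts | hst
  swap
  · exact ⟨t, Γ', hst, h⟩
  have hT : IsCompact (Icc 0 1 ∩ f ⁻¹' Γ) := isCompact_Icc.of_isClosed_subset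
    (hf.preimage_isClosed_of_isClosed isClosed_Icc hΓ) inter_subset_left
  obtain ⟨l, ⟨⟨hl, hlΓ⟩, hls⟩, hlmax⟩ := (hT.inter_right isClosed_Iic).exists_isGreatest
    ⟨t, ⟨h.mem_Icc, h.apply_mem⟩, hts.le⟩
  have htl : t ≤ l := hlmax ⟨⟨h.mem_Icc, h.apply_mem⟩, hts.le⟩
  have hslide := h.slide htl hl.2 hlΓ (hlink l ⟨htl, hls⟩ hlΓ)
  obtain ⟨r, ⟨⟨hr, hrΓ⟩, hsr⟩, hrmin⟩ := (hT.inter_right isClosed_Ici).exists_isLeast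
    ⟨1, ⟨right_mem_Icc.mpr zero_le_one, h₁⟩, hs⟩
  rcases (hls.trans hsr : l ≤ r).eq_or_lt with rfl | hlr
  · exact ⟨l, Γ', hsr, hslide⟩
  refine ⟨r, _, hsr, hslide.jump hf hi hU hlr hr.2 hrΓ fun w hw hwΓ => ?_⟩
  have hw01 : w ∈ Icc (0 : ℝ) 1 := ⟨hl.1.trans hw.1.le, hw.2.le.trans hr.2⟩
  rcases le_total w s with hws | hsw
  · exact hw.1.not_ge (hlmax ⟨⟨hw01, hwΓ⟩, hws⟩)
  · exact hw.2.not_ge (hrmin ⟨⟨hw01, hwΓ⟩, hsw⟩)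

end IsPartialBridge

lemma IsConnectedImKleinen.exists_forall_linkedIn_image (h : IsConnectedImKleinen Γ)
    (hΓ : IsCompact Γ) (hf : ContinuousOn f (Icc 0 1)) (hU : IsOpen U) (hfU : f '' Icc 0 1 ⊆ U) :
    ∃ δ > 0, ∀ t ∈ Icc (0 : ℝ) 1, ∀ s ∈ Icc (0 : ℝ) 1, f t ∈ Γ → f s ∈ Γ → dist t s < δ →
      LinkedIn (Γ ∩ U) (f t) (f s) := by
  obtain ⟨η, hη, hηU⟩ :=
    (isCompact_Icc.image_of_continuousOn hf).exists_thickening_subset_open hU hfU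
  obtain ⟨δ', hδ', hlink⟩ := h.exists_forall_linkedIn_ball hΓ hη
  obtain ⟨δ, hδ, hfδ⟩ := Metric.uniformContinuousOn_iff.mp
    (isCompact_Icc.uniformContinuousOn_of_continuous hf) δ' hδ'
  refine ⟨δ, hδ, fun t ht s hs htΓ hsΓ hts => ?_⟩
  exact (hlink _ htΓ _ hsΓ (hfδ s hs t ht (dist_comm t s ▸ hts))).mono
    (inter_subset_inter_right Γ
      ((ball_subset_thickening (mem_image_of_mem f ht) η).trans hηU))

/-- Only finitely many of the gaps that `Γ` leaves in the arc have to be filled, because across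
short gaps `Γ` links the endpoints already. -/
lemma IsArc.exists_isCrosscutExtension (hS : IsArc S p q) (hΓ : IsCompact Γ)
    (hΓc : IsConnectedImKleinen Γ) (hU : IsOpen U) (hSU : S ⊆ U) (hp : p ∈ Γ) (hq : q ∈ Γ) :
    ∃ Γ', IsCrosscutExtension Γ Γ' ∧ Γ' \ Γ ⊆ S ∧
      ∀ x ∈ insert q (Γ' \ Γ), LinkedIn (Γ' ∩ U) p x := by
  obtain ⟨f, hf, hi, rfl, rfl, rfl⟩ := hS
  obtain ⟨δ, hδ, hlink⟩ := hΓc.exists_forall_linkedIn_image hΓ hf hU hSU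
  have hreach : ∀ k : ℕ, ∃ t Γ', min 1 (k * (δ / 2)) ≤ t ∧ IsPartialBridge f Γ U t Γ' := by
    intro k
    induction k with
    | zero =>
      exact ⟨0, Γ, by simp, .refl ⟨hp, hSU (mem_image_of_mem f (left_mem_Icc.mpr zero_le_one))⟩⟩
    | succ k ih =>
      obtain ⟨t, Γ', hkt, h⟩ := ih
      refine h.exists_le hΓ.isClosed hf hi hSU hq (min_le_left _ _) fun l hl hlΓ =>
        hlink t h.mem_Icc l ⟨h.mem_Icc.1.trans hl.1, hl.2.trans (min_le_left _ _)⟩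
          h.apply_mem hlΓ ?_
      have hstep : min 1 ((k + 1 : ℕ) * (δ / 2)) ≤ min 1 (k * (δ / 2)) + δ / 2 := by
        rw [← min_add_add_right]
        push_cast
        exact min_le_min (by linarith) (by linarith)
      rw [Real.dist_eq, abs_sub_comm, abs_of_nonneg (sub_nonneg.mpr hl.1)]
      linarith [hl.2]
  obtain ⟨k, hk⟩ := exists_nat_ge (1 / (δ / 2))
  obtain ⟨t, Γ', hkt, h⟩ := hreach k
  rw [min_eq_left ((div_le_iff₀ (half_pos hδ)).mp hk)] at hkt
  obtain rfl := le_antisymm h.mem_Icc.2 hkt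
  exact ⟨Γ', h.isCrosscutExtension, h.diff_subset, h.linkedIn⟩

lemma IsGeodesic.thickening_subset_closedBall (hf : IsGeodesic f p q) (ht : t ∈ Icc (0 : ℝ) 1)
    (η : ℝ) : thickening η (f '' Icc 0 1) ⊆ closedBall (f t) (dist p q + η) := by
  intro x hx
  obtain ⟨_, ⟨s, hs, rfl⟩, hxs⟩ := mem_thickening_iff.mp hx
  have hst : dist (f s) (f t) ≤ dist p q := by
    rw [hf.2.2 s hs t ht]
    exact mul_le_of_le_one_left dist_nonneg
      (by simpa using abs_sub_le_of_le_of_le hs.1 hs.2 ht.1 ht.2)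
  exact mem_closedBall.mpr (by linarith [dist_triangle x (f s) (f t)])

lemma IsGeodesic.exists_dist_le_half (hf : IsGeodesic f p q) (ht : t ∈ Icc (0 : ℝ) 1) :
    ∃ e ∈ ({p, q} : Set E), dist (f t) e ≤ dist p q / 2 := by
  rcases le_total t (1 / 2) with hle | hge
  · refine ⟨p, by simp, ?_⟩
    calc dist (f t) p = |t - 0| * dist p q := by
          rw [← hf.2.2 t ht 0 (by simp), hf.1]
      _ ≤ 1 / 2 * dist p q := by
          gcongr
          rwa [sub_zero, abs_of_nonneg ht.1]
      _ = dist p q / 2 := by ring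
  · refine ⟨q, by simp, ?_⟩
    calc dist (f t) q = |t - 1| * dist p q := by
          rw [← hf.2.2 t ht 1 (by simp), hf.2.1]
      _ ≤ 1 / 2 * dist p q := by
          gcongr
          rw [abs_of_nonpos (by linarith [ht.2])]
          linarith
      _ = dist p q / 2 := by ring

lemma IsGeodesicSpace.exists_isCrosscutExtension_linkedIn (hE : IsGeodesicSpace E)
    (hΓ : IsCompact Γ) (hΓc : IsConnectedImKleinen Γ) (hp : p ∈ Γ) (hq : q ∈ Γ) {d η : ℝ}
    (hd : dist p q ≤ d) (hη : 0 < η) :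
    ∃ Γ', IsCrosscutExtension Γ Γ' ∧ LinkedIn (Γ' ∩ closedBall p (d + η)) p q ∧
      ∀ x ∈ Γ' \ Γ, ∃ e ∈ ({p, q} : Set E),
        dist x e ≤ d / 2 ∧ LinkedIn (Γ' ∩ closedBall x (d + η)) x e := by
  rcases eq_or_ne p q with rfl | hpq
  · rw [dist_self] at hd
    exact ⟨Γ, .refl, .refl ⟨hp, mem_closedBall_self (by positivity)⟩, by simp⟩
  obtain ⟨f, hf⟩ := hE p q
  obtain ⟨Γ', hext, hsub, hlink⟩ := (hf.isArc hpq).exists_isCrosscutExtension hΓ hΓc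
    isOpen_thickening (self_subset_thickening hη _) hp hq
  have hball : ∀ t ∈ Icc (0 : ℝ) 1,
      Γ' ∩ thickening η (f '' Icc 0 1) ⊆ Γ' ∩ closedBall (f t) (d + η) := fun t ht =>
    inter_subset_inter_right Γ' ((hf.thickening_subset_closedBall ht η).trans
      (closedBall_subset_closedBall (by linarith)))
  have hlinkpq := hlink q (mem_insert q _)
  refine ⟨Γ', hext, hf.1 ▸ (hf.1.symm ▸ hlinkpq).mono (hball 0 (by simp)), fun x hx => ?_⟩
  obtain ⟨t, ht, rfl⟩ := hsub hx
  obtain ⟨e, he, hte⟩ := hf.exists_dist_le_half ht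
  have hlinkx := (hlink _ (mem_insert_of_mem q hx)).symm.mono (hball t ht)
  refine ⟨e, he, hte.trans (by linarith), ?_⟩
  rcases he with rfl | rfl
  exacts [hlinkx, hlinkx.trans (hlinkpq.mono (hball t ht))]

end Bridges

section Mesh

variable {E : Type*} [MetricSpace E] [CompactSpace E] {Γ P : Set E} {δ ε : ℝ}

lemma IsSpherelike.exists_forall_linkedIn_compl_closedBall (hE : IsSpherelike E) (hδ : 0 < δ) :
    ∃ r > 0, ∀ z u v : E, δ ≤ dist u z → δ ≤ dist v z → LinkedIn (closedBall z r)ᶜ u v := by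
  suffices h : ∃ r > 0, ∀ z ∈ (univ : Set E), ∀ u v : E, δ ≤ dist u z → δ ≤ dist v z →
      LinkedIn (closedBall z r)ᶜ u v by
    simpa only [mem_univ, true_imp_iff] using h
  refine isCompact_univ.induction_on (p := fun s => ∃ r > 0, ∀ z ∈ s, ∀ u v : E, δ ≤ dist u z →
    δ ≤ dist v z → LinkedIn (closedBall z r)ᶜ u v) ⟨1, one_pos, by simp⟩ ?_ ?_ fun z₀ _ => ?_
  · rintro s t hst ⟨r, hr, h⟩
    exact ⟨r, hr, fun z hz => h z (hst hz)⟩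
  · rintro s t ⟨r, hr, h⟩ ⟨r', hr', h'⟩
    refine ⟨min r r', lt_min hr hr', ?_⟩
    rintro z (hz | hz) u v hu hv
    · exact (h z hz u v hu hv).mono
        (compl_subset_compl.mpr (closedBall_subset_closedBall (min_le_left _ _)))
    · exact (h' z hz u v hu hv).mono
        (compl_subset_compl.mpr (closedBall_subset_closedBall (min_le_right _ _)))
  · have hfar : (ball z₀ (δ / 2))ᶜ ⊆ {z₀}ᶜ :=
      compl_subset_compl.mpr (singleton_subset_iff.mpr (mem_ball_self (half_pos hδ)))
    obtain ⟨C, hCz, hC, hCp, hCfar⟩ :=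
      hE.isGeodesicSpace.exists_isCompact_isPreconnected_superset isOpen_compl_singleton
        (hE.isPreconnected_compl_singleton z₀) isOpen_ball.isClosed_compl.isCompact hfar
    obtain ⟨ρ, hρ, hball⟩ := Metric.isOpen_iff.mp hC.isClosed.isOpen_compl z₀
      (fun h => hCz h rfl)
    refine ⟨ball z₀ (min (ρ / 2) (δ / 2)), mem_nhdsWithin_of_mem_nhds
      (ball_mem_nhds _ (by positivity)), ρ / 4, by positivity, fun z hz u v hu hv => ?_⟩
    obtain ⟨hzρ, hzδ⟩ := lt_min_iff.mp (mem_ball.mp hz)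
    have hmem : ∀ w, δ ≤ dist w z → w ∈ C := fun w hw => hCfar fun h => by
      linarith [dist_triangle_right w z z₀, mem_ball.mp h]
    refine (LinkedIn.of_isPreconnected hCp (hmem u hu) (hmem v hv)).mono fun w hw h =>
      hball (mem_ball.mpr ?_) hw
    linarith [dist_triangle w z z₀, mem_closedBall.mp h]

namespace IsSkeleton

lemma exists_isCrosscutExtension_linkedIn_of_finite (hΓ : IsSkeleton Γ) (hE : IsSpherelike E)
    (hε : 0 < ε) (hPΓ : P ⊆ Γ)
    (hlink : ∀ x ∈ Γ, ∃ p ∈ P, dist x p ≤ 2 * ε ∧ LinkedIn (Γ ∩ closedBall x (5 * ε)) x p)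
    {R : Set (E × E)} (hR : R.Finite) (hRP : R ⊆ P ×ˢ P) (hRε : ∀ z ∈ R, dist z.1 z.2 ≤ 4 * ε) :
    ∃ Γ', IsCrosscutExtension Γ Γ' ∧
      (∀ x ∈ Γ', ∃ p ∈ P, dist x p ≤ 2 * ε ∧ LinkedIn (Γ' ∩ closedBall x (5 * ε)) x p) ∧
      ∀ z ∈ R, LinkedIn (Γ' ∩ closedBall z.1 (5 * ε)) z.1 z.2 := by
  induction R, hR using Set.Finite.induction_on with
  | empty => exact ⟨Γ, .refl, hlink, by simp⟩
  | @insert z R _ _ ih =>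
    obtain ⟨⟨hz₁, hz₂⟩, hRP⟩ := insert_subset_iff.mp hRP
    obtain ⟨hzε, hRε⟩ := forall_mem_insert.mp hRε
    obtain ⟨Γ₁, hext₁, hlink₁, hpairs⟩ := ih hRP hRε
    have hΓ₁ := hext₁.isSkeleton hE hΓ
    obtain ⟨Γ₂, hext₂, hz, hnew⟩ := hE.isGeodesicSpace.exists_isCrosscutExtension_linkedIn
      hΓ₁.isClosed.isCompact hΓ₁.isConnectedImKleinen (hext₁.subset (hPΓ hz₁))
      (hext₁.subset (hPΓ hz₂)) hzε hε
    rw [show 4 * ε + ε = 5 * ε by ring] at hz hnew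
    refine ⟨Γ₂, hext₁.trans hext₂, fun x hx => ?_, forall_mem_insert.mpr ⟨hz, fun w hw =>
      (hpairs w hw).mono (inter_subset_inter_left _ hext₂.subset)⟩⟩
    by_cases hx₁ : x ∈ Γ₁
    · obtain ⟨p, hp, hxp, hxlink⟩ := hlink₁ x hx₁
      exact ⟨p, hp, hxp, hxlink.mono (inter_subset_inter_left _ hext₂.subset)⟩
    · obtain ⟨e, he, hxe, hxlink⟩ := hnew x ⟨hx, hx₁⟩
      exact ⟨e, pair_subset hz₁ hz₂ he, hxe.trans (by linarith), hxlink⟩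

lemma exists_isCrosscutExtension_isWeb (hΓ : IsSkeleton Γ) (hE : IsSpherelike E) (hε : 0 < ε) :
    ∃ Γ' P, IsCrosscutExtension Γ Γ' ∧ P.Finite ∧ IsWeb Γ' P ε := by
  obtain ⟨Γ₁, hext₁, hdense⟩ := hΓ.exists_isCrosscutExtension_forall_near hE hε
  have hΓ₁ := hext₁.isSkeleton hE hΓ
  obtain ⟨ρ, hρ, hlinkρ⟩ :=
    hΓ₁.isConnectedImKleinen.exists_forall_linkedIn_ball hΓ₁.isClosed.isCompact hε
  obtain ⟨P, hPΓ, hP, hcover⟩ :=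
    finite_cover_balls_of_compact hΓ₁.isClosed.isCompact (lt_min hρ hε)
  have hnear : ∀ x ∈ Γ₁, ∃ p ∈ P, dist x p < ρ ∧ dist x p < ε := fun x hx => by
    obtain ⟨p, hp, hxp⟩ := mem_iUnion₂.mp (hcover hx)
    exact ⟨p, hp, lt_min_iff.mp hxp⟩
  obtain ⟨Γ₂, hext₂, hlink, hpairs⟩ := hΓ₁.exists_isCrosscutExtension_linkedIn_of_finite hE hε hPΓ
    (fun x hx => by
      obtain ⟨p, hp, hxρ, hxε⟩ := hnear x hx
      exact ⟨p, hp, by linarith, (hlinkρ p (hPΓ hp) x hx hxρ).symm.mono (inter_subset_inter_right _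
        (ball_subset_closedBall.trans
          (closedBall_subset_closedBall' (by linarith [dist_comm p x]))))⟩)
    ((hP.prod hP).subset (sep_subset (P ×ˢ P) fun z => dist z.1 z.2 ≤ 4 * ε))
    (sep_subset _ _) fun z hz => hz.2
  refine ⟨Γ₂, P, hext₁.trans hext₂, hP, fun x => ?_, hlink,
    fun p hp q hq hpq => hpairs (p, q) ⟨⟨hp, hq⟩, hpq⟩⟩
  obtain ⟨y, hy, hyx⟩ := hdense x
  obtain ⟨p, hp, -, hyp⟩ := hnear y hy
  exact ⟨p, hp, by linarith [dist_triangle_left x p y]⟩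

lemma exists_isCrosscutExtension_forall_dist_le (hΓ : IsSkeleton Γ) (hE : IsSpherelike E)
    (hδ : 0 < δ) :
    ∃ Γ', IsCrosscutExtension Γ Γ' ∧ ∀ x y, LinkedIn Γ'ᶜ x y → dist x y ≤ δ := by
  obtain ⟨r, hr, hball⟩ :=
    hE.exists_forall_linkedIn_compl_closedBall (show 0 < δ / 4 by linarith)
  obtain ⟨ε, hε, hεr, hεδ⟩ : ∃ ε > 0, 10 * ε ≤ r ∧ 8 * ε ≤ δ :=
    ⟨min (r / 10) (δ / 8), by positivity, by linarith [min_le_left (r / 10) (δ / 8)],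
      by linarith [min_le_right (r / 10) (δ / 8)]⟩
  obtain ⟨Γ', P, hext, hP, hweb⟩ := hΓ.exists_isCrosscutExtension_isWeb hE hε
  exact ⟨Γ', hext, fun x y => hweb.dist_le hE (hext.isSkeleton hE hΓ).isClosed hP hε hεδ
    fun z u v hu hv => (hball z u v hu hv).mono
      (compl_subset_compl.mpr (closedBall_subset_closedBall hεr))⟩

end IsSkeleton

end Mesh

/-! ### Matching cell decompositions -/

section Extension

variable {E F : Type*} {Γ J S c : Set E} {J' S' c' : Set F} {a b : E} {a' b' : F} {φ g : E → F}

lemma exists_injOn_union (hφ : InjOn φ Γ) (hg : InjOn g c) (heq : ∀ x ∈ Γ ∩ c, φ x = g x)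
    (himg : φ '' Γ ∩ g '' c ⊆ φ '' (Γ ∩ c)) :
    ∃ ψ : E → F, InjOn ψ (Γ ∪ c) ∧ EqOn ψ φ Γ ∧ EqOn ψ g c := by
  classical
  have hψφ : EqOn (Γ.piecewise φ g) φ Γ := piecewise_eqOn Γ φ g
  have hψg : EqOn (Γ.piecewise φ g) g c := fun x hx => by
    by_cases hxΓ : x ∈ Γ
    · rw [hψφ hxΓ, heq x ⟨hxΓ, hx⟩]
    · exact piecewise_eq_of_notMem Γ φ g hxΓ
  have hmixed : ∀ x ∈ Γ, ∀ y ∈ c, φ x = g y → x = y := by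
    intro x hx y hy hxy
    obtain ⟨z, hz, hzx⟩ := himg ⟨mem_image_of_mem φ hx, hxy ▸ mem_image_of_mem g hy⟩
    obtain rfl := hφ hz.1 hx hzx
    exact hg hz.2 hy (by rw [← heq z hz, hxy])
  refine ⟨_, ?_, hψφ, hψg⟩
  rintro x (hx | hx) y (hy | hy) hxy
  · exact hφ hx hy (by rwa [hψφ hx, hψφ hy] at hxy)
  · exact hmixed x hx y hy (by rwa [hψφ hx, hψg hy] at hxy)
  · exact (hmixed y hy x hx (by rw [← hψφ hy, ← hψg hx, hxy])).symm
  · exact hg hx hy (by rwa [hψg hx, hψg hy] at hxy)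

variable [TopologicalSpace E] [TopologicalSpace F]

lemma continuousOn_invFunOn [T2Space F] [Nonempty E] (hS : IsCompact S) (hφ : ContinuousOn φ S)
    (hi : InjOn φ S) : ContinuousOn (Function.invFunOn φ S) (φ '' S) := by
  refine continuousOn_iff_isClosed.mpr fun t ht => ⟨φ '' (S ∩ t),
    ((hS.inter_right ht).image_of_continuousOn (hφ.mono inter_subset_left)).isClosed, ?_⟩
  ext y
  constructor
  · rintro ⟨hy, x, hx, rfl⟩
    rw [mem_preimage, hi.leftInvOn_invFunOn hx] at hy
    exact ⟨⟨x, ⟨hx, hy⟩, rfl⟩, x, hx, rfl⟩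
  · rintro ⟨⟨x, ⟨hx, hxt⟩, rfl⟩, -⟩
    rw [← hi.leftInvOn_invFunOn hx] at hxt
    exact ⟨hxt, x, hx, rfl⟩

lemma IsArc.exists_continuousOn_injOn [T2Space E] (h : IsArc S a b) (h' : IsArc S' a' b') :
    ∃ g : E → F, ContinuousOn g S ∧ InjOn g S ∧ g '' S = S' ∧ g a = a' ∧ g b = b' := by
  obtain ⟨f, hf, hi, rfl, rfl, rfl⟩ := h
  obtain ⟨f', hf', hi', rfl, rfl, rfl⟩ := h'
  have hinv := hi.leftInvOn_invFunOn
  have hmaps : MapsTo (Function.invFunOn f (Icc 0 1)) (f '' Icc 0 1) (Icc 0 1) := by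
    rintro _ ⟨t, ht, rfl⟩
    rwa [hinv ht]
  refine ⟨f' ∘ Function.invFunOn f (Icc 0 1),
    hf'.comp (continuousOn_invFunOn isCompact_Icc hf hi) hmaps,
    hi'.comp (Function.invFunOn_injOn_image f _) hmaps, ?_,
    congrArg f' (hinv (left_mem_Icc.mpr zero_le_one)),
    congrArg f' (hinv (right_mem_Icc.mpr zero_le_one))⟩
  rw [image_comp, hi.invFunOn_image subset_rfl]

lemma IsArc.exists_extension [T2Space E] (hc : IsArc c a b) (hc' : IsArc c' (φ a) (φ b))
    (hΓ : IsClosed Γ) (hφ : ContinuousOn φ Γ) (hi : InjOn φ Γ) (hcΓ : c ∩ Γ = {a, b})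
    (hcΓ' : c' ∩ φ '' Γ ⊆ {φ a, φ b}) :
    ∃ ψ : E → F, ContinuousOn ψ (Γ ∪ c) ∧ InjOn ψ (Γ ∪ c) ∧ EqOn ψ φ Γ ∧ ψ '' c = c' := by
  obtain ⟨g, hg, hgi, hgc, hga, hgb⟩ := hc.exists_continuousOn_injOn hc'
  rw [inter_comm] at hcΓ
  obtain ⟨ψ, hψ, hψφ, hψg⟩ := exists_injOn_union hi hgi
    (by rw [hcΓ, forall_mem_insert]; exact ⟨hga.symm, fun x hx => hx ▸ hgb.symm⟩)
    (by rwa [hgc, hcΓ, image_pair, inter_comm])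
  exact ⟨ψ, (hφ.congr hψφ).union_of_isClosed (hg.congr hψg) hΓ hc.isClosed, hψ, hψφ,
    hψg.image_eq.trans hgc⟩

lemma IsSimpleClosedCurve.exists_continuousOn_injOn [T2Space E] (h : IsSimpleClosedCurve J)
    (h' : IsSimpleClosedCurve J') : ∃ φ : E → F, ContinuousOn φ J ∧ InjOn φ J ∧ φ '' J = J' := by
  obtain ⟨a, b, α, β, hL, rfl⟩ := h
  obtain ⟨a', b', α', β', hL', rfl⟩ := h'
  obtain ⟨g, hg, hgi, rfl, rfl, rfl⟩ := hL.left.exists_continuousOn_injOn hL'.left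
  obtain ⟨ψ, hψ, hψi, hψα, hψβ⟩ := hL.right.exists_extension hL'.right hL.left.isClosed hg hgi
    hL.swap.inter_eq hL'.swap.inter_subset
  exact ⟨ψ, hψ, hψi, by rw [image_union, hψα.image_eq, hψβ]⟩

lemma IsArcLoop.image {α β : Set E} (h : IsArcLoop α β a b) (hφ : ContinuousOn φ (α ∪ β))
    (hi : InjOn φ (α ∪ β)) : IsArcLoop (φ '' α) (φ '' β) (φ a) (φ b) where
  left := h.left.image (hφ.mono subset_union_left) (hi.mono subset_union_left)
  right := h.right.image (hφ.mono subset_union_right) (hi.mono subset_union_right)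
  inter_subset := by
    rw [← hi.image_inter subset_union_left subset_union_right, ← image_pair]
    exact image_mono h.inter_subset

end Extension

section CompactRelations

variable {A B : Type*} [TopologicalSpace A] [TopologicalSpace B] [CompactSpace A] [CompactSpace B]
  [T2Space B] {R : A → B → Prop}

lemma nonempty_homeomorph_of_isClosed_rel (hR : IsClosed {z : A × B | R z.1 z.2})
    (hleft : ∀ x, ∃! y, R x y) (hright : ∀ y, ∃! x, R x y) : Nonempty (A ≃ₜ B) := by
  choose f hf huniq using hleft
  have hbij : Function.Bijective f :=
    ⟨fun x x' h => (hright (f x')).unique (h ▸ hf x) (hf x'),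
      fun y => (hright y).exists.imp fun x hx => (huniq x y hx).symm⟩
  have hcont : Continuous f := continuous_iff_isClosed.mpr fun C hC => by
    have hpre : f ⁻¹' C = Prod.fst '' ({z : A × B | R z.1 z.2} ∩ Prod.snd ⁻¹' C) := by
      ext x
      refine ⟨fun hx => ⟨(x, f x), ⟨hf x, hx⟩, rfl⟩, ?_⟩
      rintro ⟨⟨x, y⟩, ⟨hxy, hy⟩, rfl⟩
      exact (huniq x y hxy ▸ hy : f x ∈ C)
    rw [hpre]
    exact isClosedMap_fst_of_compactSpace _ (hR.inter (hC.preimage continuous_snd))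
  exact ⟨Continuous.homeoOfEquivCompactToT2 (f := Equiv.ofBijective f hbij) hcont⟩

end CompactRelations

section CellMatchings

/-- Cell decompositions of `A` and `B` with the same index type, together with an injective
continuous map `map` of the skeleton in `A` that carries the boundary of each cell onto the boundary
of the corresponding cell. Only its values on the skeleton are meaningful. -/
structure CellMatching (A B : Type*) [MetricSpace A] [MetricSpace B] where
  Index : Type
  finite_index : Finite Index
  cell : Index → Set A
  cell' : Index → Set B
  skeleton : Set A
  skeleton' : Set B
  isCellDecomposition : IsCellDecomposition cell skeleton
  isCellDecomposition' : IsCellDecomposition cell' skeleton'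
  map : A → B
  continuousOn_map : ContinuousOn map skeleton
  injOn_map : InjOn map skeleton
  image_frontier : ∀ i, map '' frontier (cell i) = frontier (cell' i)

namespace CellMatching

variable {A B : Type*} [MetricSpace A] [MetricSpace B] {d d₁ d₂ d₃ : CellMatching A B} {δ : ℝ}

lemma image_skeleton (d : CellMatching A B) : d.map '' d.skeleton = d.skeleton' := by
  rw [← d.isCellDecomposition.iUnion_frontier, ← d.isCellDecomposition'.iUnion_frontier,
    image_iUnion]
  exact iUnion_congr d.image_frontier

lemma isClosed_skeleton (d : CellMatching A B) : IsClosed d.skeleton :=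
  haveI := d.finite_index
  d.isCellDecomposition.isClosed

/-- The same decompositions with the roles of the two spaces exchanged. -/
noncomputable def symm [CompactSpace A] [Nonempty A] (d : CellMatching A B) :
    CellMatching B A where
  Index := d.Index
  finite_index := d.finite_index
  cell := d.cell'
  cell' := d.cell
  skeleton := d.skeleton'
  skeleton' := d.skeleton
  isCellDecomposition := d.isCellDecomposition'
  isCellDecomposition' := d.isCellDecomposition
  map := Function.invFunOn d.map d.skeleton
  continuousOn_map := d.image_skeleton ▸
    continuousOn_invFunOn d.isClosed_skeleton.isCompact d.continuousOn_map d.injOn_map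
  injOn_map := d.image_skeleton ▸ Function.invFunOn_injOn_image d.map d.skeleton
  image_frontier i := by
    rw [← d.image_frontier i,
      d.injOn_map.invFunOn_image (d.isCellDecomposition.frontier_subset i)]

/-- Each pair of corresponding cells of `d₂` lies in a pair of corresponding cells of `d₁`. -/
def Refines (d₂ d₁ : CellMatching A B) : Prop :=
  ∀ j, ∃ i, d₂.cell j ⊆ d₁.cell i ∧ d₂.cell' j ⊆ d₁.cell' i

lemma Refines.refl (d : CellMatching A B) : d.Refines d := fun j => ⟨j, subset_rfl, subset_rfl⟩

lemma Refines.trans (h : d₃.Refines d₂) (h' : d₂.Refines d₁) : d₃.Refines d₁ := by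
  intro k
  obtain ⟨j, hj, hj'⟩ := h k
  obtain ⟨i, hi, hi'⟩ := h' j
  exact ⟨i, hj.trans hi, hj'.trans hi'⟩

lemma Refines.symm [CompactSpace A] [Nonempty A] (h : d₂.Refines d₁) :
    d₂.symm.Refines d₁.symm :=
  fun j => (h j).imp fun _ => And.symm

lemma exists_refines_of_crosscut [CompactSpace A] [CompactSpace B] (d : CellMatching A B)
    (hA : IsSpherelike A) (hB : IsSpherelike B) {c : Set A} {a b : A} (hc : IsArc c a b)
    (hcΓ : c ∩ d.skeleton = {a, b}) : ∃ d₁ : CellMatching A B,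
      d₁.skeleton = d.skeleton ∪ c ∧ d₁.Refines d := by
  have hdA := d.isCellDecomposition
  have hdB := d.isCellDecomposition'
  have := d.finite_index
  obtain ⟨i, hcD, ha, hb⟩ := hdA.exists_crosscut_subset hc hcΓ
  obtain ⟨α, β, hL, hJ⟩ := (hdA.isSimpleClosedCurve i).exists_isArcLoop ha hb hc.ne
  have hJΓ : α ∪ β ⊆ d.skeleton := hJ.trans_subset (hdA.frontier_subset i)
  have hL' := hL.image (d.continuousOn_map.mono hJΓ) (d.injOn_map.mono hJΓ)
  have hJ' : d.map '' α ∪ d.map '' β = frontier (d.cell' i) := by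
    rw [← image_union, hJ, d.image_frontier]
  obtain ⟨c', hc', hcD'⟩ := (hdB.isFace i).exists_crosscut_of_mem hB (hdB.isSimpleClosedCurve i)
    (d.image_frontier i ▸ mem_image_of_mem _ ha) (d.image_frontier i ▸ mem_image_of_mem _ hb)
    hL'.left.ne
  obtain ⟨D₁, D₂, hdisj, hunion, hD₁, hD₂⟩ :=
    (hJ ▸ hdA.isFace i : IsFace _ (α ∪ β)).exists_isFace_of_crosscut hA hL hc hcD
  obtain ⟨D₁', D₂', hdisj', hunion', hD₁', hD₂'⟩ :=
    (hJ' ▸ hdB.isFace i : IsFace _ (_ ∪ _)).exists_isFace_of_crosscut hB hL' hc' hcD'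
  obtain ⟨ψ, hψ, hψi, hψΓ, hψc⟩ := hc.exists_extension hc' hdA.isClosed d.continuousOn_map
    d.injOn_map hcΓ (d.image_skeleton ▸ fun y hy => by_contra fun hn =>
      disjoint_left.mp (hdB.disjoint_skeleton i) (hcD' ⟨hy.1, hn⟩) hy.2)
  have hψfr : ∀ γ ⊆ α ∪ β, ψ '' (γ ∪ c) = d.map '' γ ∪ c' := fun γ hγ => by
    rw [image_union, hψc, (hψΓ.mono (hγ.trans hJΓ)).image_eq]
  refine ⟨⟨_, inferInstance, _, _, _, _, hdA.splitCell hL hJ hc hcD hdisj hunion hD₁ hD₂,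
    hdB.splitCell hL' hJ' hc' hcD' hdisj' hunion' hD₁' hD₂', ψ, hψ, hψi, ?_⟩, rfl, ?_⟩
  · rintro (j | _ | _)
    · exact (hψΓ.mono (hdA.frontier_subset j)).image_eq.trans (d.image_frontier j)
    · exact (hD₂.frontier_eq ▸ hψfr β subset_union_right).trans hD₂'.frontier_eq.symm
    · exact (hD₁.frontier_eq ▸ hψfr α subset_union_left).trans hD₁'.frontier_eq.symm
  · obtain ⟨hsub₁, hsub₂⟩ := union_subset_iff.mp (hunion.subset.trans sdiff_subset)
    obtain ⟨hsub₁', hsub₂'⟩ := union_subset_iff.mp (hunion'.subset.trans sdiff_subset)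
    rintro (j | _ | _)
    exacts [⟨j, subset_rfl, subset_rfl⟩, ⟨i, hsub₂, hsub₂'⟩, ⟨i, hsub₁, hsub₁'⟩]

lemma exists_refines_of_isCrosscutExtension [CompactSpace A] [CompactSpace B]
    (d : CellMatching A B) (hA : IsSpherelike A) (hB : IsSpherelike B) {Γ : Set A}
    (h : IsCrosscutExtension d.skeleton Γ) :
    ∃ d₁ : CellMatching A B, d₁.skeleton = Γ ∧ d₁.Refines d := by
  induction h with
  | refl => exact ⟨d, rfl, .refl d⟩
  | step _ hc hcΓ ih =>
    obtain ⟨d₁, rfl, hd₁⟩ := ih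
    obtain ⟨d₂, hskel, hd₂⟩ := d₁.exists_refines_of_crosscut hA hB hc hcΓ
    exact ⟨d₂, hskel, hd₂.trans hd₁⟩

/-- All cells in the first space have diameter at most `δ`. -/
def IsFine (d : CellMatching A B) (δ : ℝ) : Prop := ∀ i, diam (d.cell i) ≤ δ

lemma IsFine.of_refines [CompactSpace A] (h : d₁.IsFine δ) (h' : d₂.Refines d₁) :
    d₂.IsFine δ := by
  intro j
  obtain ⟨i, hi, -⟩ := h' j
  exact (diam_mono hi (isBounded_of_compactSpace)).trans (h i)

lemma IsFine.dist_le [CompactSpace A] (h : d.IsFine δ) {i : d.Index} {x y : A}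
    (hx : x ∈ closure (d.cell i)) (hy : y ∈ closure (d.cell i)) : dist x y ≤ δ :=
  (dist_le_diam_of_mem isBounded_of_compactSpace hx hy).trans (diam_closure (d.cell i) ▸ h i)

lemma exists_refines_isFine [CompactSpace A] [CompactSpace B] (d : CellMatching A B)
    (hA : IsSpherelike A) (hB : IsSpherelike B) (hδ : 0 < δ) :
    ∃ d₁ : CellMatching A B, d₁.Refines d ∧ d₁.IsFine δ := by
  have hskel : IsSkeleton d.skeleton :=
    ⟨d.Index, d.finite_index, d.cell, d.isCellDecomposition⟩
  obtain ⟨Γ, hext, hmesh⟩ := hskel.exists_isCrosscutExtension_forall_dist_le hA hδ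
  obtain ⟨d₁, rfl, hd₁⟩ := d.exists_refines_of_isCrosscutExtension hA hB hext
  refine ⟨d₁, hd₁, fun i => diam_le_of_forall_dist_le hδ.le fun x hx y hy => hmesh x y ?_⟩
  exact (LinkedIn.of_isPreconnected (d₁.isCellDecomposition.isFace i).isPreconnected hx hy).mono
    (d₁.isCellDecomposition.disjoint_skeleton i).subset_compl_right

lemma exists_refines_isFine_symm [CompactSpace A] [CompactSpace B] [Nonempty A] [Nonempty B]
    (d : CellMatching A B) (hA : IsSpherelike A) (hB : IsSpherelike B) (hδ : 0 < δ) :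
    ∃ d₁ : CellMatching A B, d₁.Refines d ∧ d₁.IsFine δ ∧ d₁.symm.IsFine δ := by
  obtain ⟨d₁, hd₁, hfine₁⟩ := d.exists_refines_isFine hA hB hδ
  obtain ⟨d₂, hd₂, hfine₂⟩ := d₁.symm.exists_refines_isFine hB hA hδ
  have hd₂' : d₂.symm.Refines d₁ := hd₂.symm
  exact ⟨d₂.symm, hd₂'.trans hd₁, hfine₁.of_refines hd₂', hfine₂⟩

end CellMatching

lemma IsSpherelike.exists_isCellDecomposition {A : Type*} [MetricSpace A] [CompactSpace A]
    (hA : IsSpherelike A) : ∃ (D : Bool → Set A) (J : Set A), IsSimpleClosedCurve J ∧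
      IsCellDecomposition D J ∧ ∀ i, frontier (D i) = J := by
  obtain ⟨J, hJ⟩ := hA.exists_isSimpleClosedCurve
  obtain ⟨x, hx⟩ : ∃ x, x ∉ J := by
    by_contra! hn
    refine hA.not_isPreconnected_compl hJ ?_
    rw [compl_empty_iff.mpr (eq_univ_of_forall hn)]
    exact isPreconnected_empty
  have hin := isFace_connectedComponentIn hA hJ hx
  have hout := hin.isFace_exterior hA hJ
  set D := connectedComponentIn Jᶜ x
  have hface : ∀ i : Bool, IsFace (cond i D (D ∪ J)ᶜ) J := Bool.forall_bool.mpr ⟨hout, hin⟩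
  have hfr : ∀ i : Bool, frontier (cond i D (D ∪ J)ᶜ) = J := fun i => (hface i).frontier_eq
  have hdisj : Disjoint D (D ∪ J)ᶜ := disjoint_compl_right.mono_left subset_union_left
  refine ⟨fun i => cond i D (D ∪ J)ᶜ, J, hJ, ⟨fun i => ?_, fun i => ?_, ?_, fun z => ?_, ?_⟩, hfr⟩
  · exact (hfr i).symm ▸ hface i
  · exact (hfr i).symm ▸ hJ
  · rintro (_ | _) (_ | _) hij
    exacts [absurd rfl hij, hdisj.symm, hdisj, absurd rfl hij]
  · by_cases hz : z ∈ D ∪ J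
    · exact ⟨true, hin.closure_eq.symm.subset hz⟩
    · exact ⟨false, subset_closure hz⟩
  · simp only [hfr, iUnion_const]

lemma nonempty_cellMatching {A B : Type*} [MetricSpace A] [MetricSpace B] [CompactSpace A]
    [CompactSpace B] (hA : IsSpherelike A) (hB : IsSpherelike B) :
    Nonempty (CellMatching A B) := by
  obtain ⟨D, J, hJ, hD, hfr⟩ := hA.exists_isCellDecomposition
  obtain ⟨D', J', hJ', hD', hfr'⟩ := hB.exists_isCellDecomposition
  obtain ⟨φ, hφ, hi, himg⟩ := hJ.exists_continuousOn_injOn hJ'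
  exact ⟨⟨Bool, inferInstance, D, D', J, J', hD, hD', φ, hφ, hi,
    fun i => by rw [hfr, hfr', himg]⟩⟩

end CellMatchings

section Limit

variable {A B : Type*} [MetricSpace A] [MetricSpace B] {d : ℕ → CellMatching A B} {x x' : A}
  {y y' : B}

/-- `x` and `y` lie in corresponding closed cells of each of the matchings `d k`. -/
def IsMatched (d : ℕ → CellMatching A B) (x : A) (y : B) : Prop :=
  ∀ k, ∃ i, x ∈ closure ((d k).cell i) ∧ y ∈ closure ((d k).cell' i)

lemma isMatched_symm_iff [CompactSpace A] [Nonempty A] :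
    IsMatched (fun k => (d k).symm) y x ↔ IsMatched d x y :=
  forall_congr' fun _ => exists_congr fun _ => and_comm

lemma CellMatching.isClosed_setOf_mem_closure (d : CellMatching A B) :
    IsClosed {z : A × B | ∃ i, z.1 ∈ closure (d.cell i) ∧ z.2 ∈ closure (d.cell' i)} := by
  have := d.finite_index
  simp only [ofPred_exists]
  exact isClosed_iUnion_of_finite fun i => isClosed_closure.prod isClosed_closure

lemma isClosed_isMatched (d : ℕ → CellMatching A B) :
    IsClosed {z : A × B | IsMatched d z.1 z.2} := by
  simp only [IsMatched, ofPred_forall]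
  exact isClosed_iInter fun k => (d k).isClosed_setOf_mem_closure

lemma exists_isMatched [CompactSpace B] (hd : ∀ k, (d (k + 1)).Refines (d k)) (x : A) :
    ∃ y, IsMatched d x y := by
  let R : ℕ → Set B := fun k => {y | ∃ i, x ∈ closure ((d k).cell i) ∧ y ∈ closure ((d k).cell' i)}
  have hclosed : ∀ k, IsClosed (R k) := fun k =>
    (d k).isClosed_setOf_mem_closure.preimage (Continuous.prodMk_right x)
  have hsub : ∀ k, R (k + 1) ⊆ R k := fun k y ⟨j, hx, hy⟩ => by
    obtain ⟨i, hi, hi'⟩ := hd k j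
    exact ⟨i, closure_mono hi hx, closure_mono hi' hy⟩
  have hne : ∀ k, (R k).Nonempty := fun k => by
    obtain ⟨i, hi⟩ := (d k).isCellDecomposition.exists_mem_closure x
    obtain ⟨y, hy⟩ := ((d k).isCellDecomposition'.isFace i).nonempty
    exact ⟨y, i, hi, subset_closure hy⟩
  obtain ⟨y, hy⟩ := IsCompact.nonempty_iInter_of_sequence_nonempty_isCompact_isClosed R hsub hne
    (hclosed 0).isCompact hclosed
  exact ⟨y, fun k => mem_iInter.mp hy k⟩

lemma CellMatching.map_mem_closure (d : CellMatching A B) {i j : d.Index} (hij : i ≠ j)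
    (hi : x ∈ closure (d.cell i)) (hj : x ∈ closure (d.cell j)) :
    d.map x ∈ closure (d.cell' i) := by
  have hD := d.isCellDecomposition
  rw [(hD.isFace i).closure_eq] at hi
  have hfr : x ∈ frontier (d.cell i) :=
    hi.resolve_left fun hxi => disjoint_left.mp (hD.disjoint_closure hij) hxi hj
  exact frontier_subset_closure (d.image_frontier i ▸ mem_image_of_mem d.map hfr)

/-- Two cells of `B` matched with `x` are equal, or they share the image of `x` on the skeleton. -/
lemma CellMatching.IsFine.dist_le_of_mem_closure [CompactSpace A] [Nonempty A] [CompactSpace B]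
    {d : CellMatching A B} {δ : ℝ} (h : d.symm.IsFine δ) {i j : d.Index}
    (hi : x ∈ closure (d.cell i)) (hj : x ∈ closure (d.cell j)) (hy : y ∈ closure (d.cell' i))
    (hy' : y' ∈ closure (d.cell' j)) : dist y y' ≤ 2 * δ := by
  rcases eq_or_ne i j with rfl | hij
  · linarith [h.dist_le hy hy', dist_nonneg (x := y) (y := y')]
  · linarith [h.dist_le hy (d.map_mem_closure hij hi hj),
      h.dist_le (d.map_mem_closure hij.symm hj hi) hy', dist_triangle y (d.map x) y']

lemma IsMatched.unique [CompactSpace A] [Nonempty A] [CompactSpace B]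
    (hd : ∀ k : ℕ, (d k).symm.IsFine (1 / (k + 1))) (h : IsMatched d x y)
    (h' : IsMatched d x y') : y = y' := by
  have hdist : ∀ k : ℕ, dist y y' ≤ 2 * (1 / (k + 1)) := fun k => by
    obtain ⟨i, hx, hy⟩ := h k
    obtain ⟨j, hx', hy'⟩ := h' k
    exact (hd k).dist_le_of_mem_closure hx hx' hy hy'
  refine dist_le_zero.mp (ge_of_tendsto' (x := atTop) ?_ hdist)
  simpa using (tendsto_one_div_add_atTop_nhds_zero_nat (𝕜 := ℝ)).const_mul 2

lemma exists_seq_refines_isFine [CompactSpace A] [CompactSpace B] [Nonempty A] [Nonempty B]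
    (hA : IsSpherelike A) (hB : IsSpherelike B) : ∃ d : ℕ → CellMatching A B,
      (∀ k, (d (k + 1)).Refines (d k)) ∧ ∀ k : ℕ, (d k).IsFine (1 / (k + 1)) ∧
        (d k).symm.IsFine (1 / (k + 1)) := by
  obtain ⟨d₀⟩ := nonempty_cellMatching hA hB
  have hstep : ∀ (k : ℕ) (d : CellMatching A B), ∃ d₁ : CellMatching A B, d₁.Refines d ∧
      d₁.IsFine (1 / (k + 1)) ∧ d₁.symm.IsFine (1 / (k + 1)) :=
    fun k d => d.exists_refines_isFine_symm hA hB (by positivity)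
  choose next hnext hfine using hstep
  let e : ℕ → CellMatching A B := Nat.rec d₀ next
  exact ⟨fun k => e (k + 1), fun k => hnext (k + 1) (e (k + 1)), fun k => hfine k (e k)⟩

theorem IsSpherelike.nonempty_homeomorph [CompactSpace A] [CompactSpace B] (hA : IsSpherelike A)
    (hB : IsSpherelike B) : Nonempty (A ≃ₜ B) := by
  have := hA.nontrivial
  have := hB.nontrivial
  obtain ⟨d, hd, hfine⟩ := exists_seq_refines_isFine hA hB
  refine nonempty_homeomorph_of_isClosed_rel (isClosed_isMatched d) (fun x => ?_) fun y => ?_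
  · obtain ⟨y, hy⟩ := exists_isMatched hd x
    exact ⟨y, hy, fun y' hy' => hy'.unique (fun k => (hfine k).2) hy⟩
  · obtain ⟨x, hx⟩ := exists_isMatched (d := fun k => (d k).symm) (fun k => (hd k).symm) y
    exact ⟨x, isMatched_symm_iff.mp hx, fun x' hx' =>
      IsMatched.unique (d := fun k => (d k).symm) (fun k => (hfine k).1)
        (isMatched_symm_iff.mpr hx') hx⟩

end Limit

/-! ### The limit of spheres -/

theorem IsSpherelike.nonempty_homeomorph_S2 {E : Type*} [MetricSpace E] [CompactSpace E]
    (hE : IsSpherelike E) : Nonempty (E ≃ₜ S2) := by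
  obtain ⟨f⟩ := AngularSphere.nonempty_homeomorph_sphere (V := EuclideanSpace ℝ (Fin 3))
  have := f.compactSpace
  obtain ⟨e⟩ := hE.nonempty_homeomorph isSpherelike_angularSphere
  exact ⟨e.trans f.symm⟩

theorem nonempty_homeomorph_S2_of_maximalCyclic {X : Type} [MetricSpace X] [CompactSpace X]
    (hX : IsGeodesicSpace X) (hJ : IsJaniszewskiSpace X) {T : Set X} (hT : MaximalCyclic T) :
    Nonempty (T ≃ₜ S2) := by
  obtain ⟨hnt, hcyc, hmax⟩ := hT
  obtain ⟨E, hEclosed, hE, hTE⟩ :=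
    exists_isSpherelike_superset hX hJ (not_subsingleton_iff.mp hnt) hcyc
  have := isCompact_iff_compactSpace.mp hEclosed.isCompact
  obtain ⟨e⟩ := hE.nonempty_homeomorph_S2
  obtain rfl := hmax E (cyclicallyConnected_of_homeomorph_S2 e) hTE
  exact ⟨e⟩

theorem isGeodesicSpace_and_isJaniszewskiSpace_of_tendsto {X : Type} [MetricSpace X] [Nonempty X]
    [CompactSpace X] {F : ℕ → GHSpace}
    (hF : ∀ n, ∃ (Z : Type) (m : MetricSpace Z), letI := m;
      ∃ (_ : Nonempty Z) (_ : CompactSpace Z),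
        IsLengthSpace Z ∧ IsJaniszewskiSpace Z ∧ toGHSpace Z = F n)
    (hlim : Tendsto F atTop (nhds (toGHSpace X))) : IsGeodesicSpace X ∧ IsJaniszewskiSpace X := by
  have happrox : ∀ τ > 0, ∃ (Y : Type) (_ : MetricSpace Y), IsGeodesicSpace Y ∧
      IsJaniszewskiSpace Y ∧ ∃ (a : X → Y) (b : Y → X), ApproxIsometry τ a b := by
    intro τ hτ
    obtain ⟨n, hn⟩ := (Metric.tendsto_nhds.mp hlim (τ / 2) (half_pos hτ)).exists
    obtain ⟨Z, _, _, _, hZ, hJ, hZF⟩ := hF n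
    have hdist : ghDist X Z < τ / 2 := by
      unfold ghDist
      rwa [hZF, dist_comm]
    have hab := exists_approxIsometry_of_ghDist_lt hdist
    rw [mul_div_cancel₀ _ two_ne_zero] at hab
    exact ⟨Z, _, isGeodesicSpace_of_isLengthSpace hZ, hJ, hab⟩
  have hX : IsGeodesicSpace X := isGeodesicSpace_of_forall_approxIsometry fun τ hτ =>
    let ⟨Y, hm, hY, _, hab⟩ := happrox τ hτ
    ⟨Y, hm, hY, hab⟩
  exact ⟨hX, isJaniszewskiSpace_of_forall_approxIsometry hX happrox⟩

end Cactoid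

open Cactoid in
theorem ghLimit_of_length_spheres_is_cactoid_general
    (X : Type) [MetricSpace X] [Nonempty X] [CompactSpace X]
    (F : ℕ → GHSpace)
    (hF : ∀ n, ∃ (Z : Type) (m : MetricSpace Z), letI := m;
      ∃ (_ : Nonempty Z) (_ : CompactSpace Z),
        IsLengthSpace Z ∧ IsJaniszewskiSpace Z ∧ toGHSpace Z = F n)
    (hlim : Tendsto F atTop (nhds (toGHSpace X))) :
    ConnectedSpace X ∧ LocallyConnectedSpace X ∧
      ∀ T : Set X, MaximalCyclic T → IsTopological2Sphere ↥T := by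
  obtain ⟨hX, hJ⟩ := isGeodesicSpace_and_isJaniszewskiSpace_of_tendsto hF hlim
  exact ⟨{ hX.preconnectedSpace with toNonempty := inferInstance }, hX.locallyConnectedSpace,
    fun _ => nonempty_homeomorph_S2_of_maximalCyclic hX hJ⟩

/-- Whyburn's theorem: the Gromov-Hausdorff limit of a sequence of compact length
spaces homeomorphic to the 2-sphere is a cactoid, i.e. a Peano space all of whose
maximal cyclic subsets are 2-spheres. -/
theorem ghLimit_of_length_spheres_is_cactoid
    (X : Type) [MetricSpace X] [Nonempty X] [CompactSpace X]
    (F : ℕ → GHSpace)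
    (hF : ∀ n, ∃ (Z : Type) (m : MetricSpace Z), letI := m;
      ∃ (_ : Nonempty Z) (_ : CompactSpace Z),
        IsLengthSpace Z ∧ IsTopological2Sphere Z ∧ toGHSpace Z = F n)
    (hlim : Tendsto F atTop (nhds (toGHSpace X))) :
    ConnectedSpace X ∧ LocallyConnectedSpace X ∧
      ∀ T : Set X, MaximalCyclic T → IsTopological2Sphere ↥T :=
  ghLimit_of_length_spheres_is_cactoid_general X F (fun n => by
    obtain ⟨Z, m, hne, hc, hZ, ⟨e⟩, hZF⟩ := hF n
    exact ⟨Z, m, hne, hc, hZ, Cactoid.isJaniszewskiSpace_S2.of_homeomorph e, hZF⟩) hlim
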